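/- arXiv:math/0602508 — 2 statements merged into one kernel-verified Lean document; each statement's English description precedes it below -/
import Mathlib

section
/- There is a constant C such that for every n and every perfect central extension E of the alternating group A_n (that is, every perfect group E admitting a surjective homomorphism onto A_n whose kernel is contained in the center of E), the group E has a presentation with at most C generators and at most C relators whose length is at most C·(1 + log₂ n). -/
/-- `G` has a presentation with at most `g` generators, at most `r` relators, and
length (number of generators plus the total length of the reduced relator words) at
most `L`. -/
def HasBoundedPresentation (G : Type) [Group G] (g r : ℕ) (L : ℝ) : Prop :=
  ∃ (m : ℕ) (π : FreeGroup (Fin m) →* G) (R : Finset (FreeGroup (Fin m))),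
    m ≤ g ∧ Function.Surjective π ∧ R.card ≤ r ∧
    π.ker = Subgroup.normalClosure (R : Set (FreeGroup (Fin m))) ∧
    ((m + ∑ w ∈ R, FreeGroup.norm w : ℕ) : ℝ) ≤ L

section Development
open Equiv
set_option linter.unusedSectionVars false
set_option linter.unusedSimpArgs false
set_option linter.style.haveILetI false

/-- Carmichael families: generators satisfying Carmichael's relations. -/
structure Car {G Ω : Type*} [Group G] (Y : Ω → G) : Prop where
  cube : ∀ i, Y i ^ 3 = 1
  sq : ∀ i j, i ≠ j → (Y i * Y j) ^ 2 = 1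

namespace Car
variable {G Ω : Type*} [Group G] {Y : Ω → G}

theorem mul_self (h : Car Y) (i : Ω) : Y i * Y i = (Y i)⁻¹ := by
  have := h.cube i
  rw [eq_inv_iff_mul_eq_one, ← this, pow_succ, pow_two]

theorem swap' (h : Car Y) {i j : Ω} (hij : i ≠ j) : Y i * Y j = (Y j)⁻¹ * (Y i)⁻¹ := by
  have := h.sq i j hij
  rw [← mul_inv_rev, eq_inv_iff_mul_eq_one, ← this, pow_two]

theorem inv_inv (h : Car Y) (i : Ω) : (Y i)⁻¹ * (Y i)⁻¹ = Y i := by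
  rw [← mul_inv_rev, h.mul_self, _root_.inv_inv]

theorem card_bound (h : Car Y) (S : Finset Ω) :
    Finite (Subgroup.closure (Y '' (S : Set Ω))) ∧
      2 * Nat.card (Subgroup.closure (Y '' (S : Set Ω))) ≤ (S.card + 2).factorial := by
  classical
  induction S using Finset.induction_on with
  | empty => 
    have : Subgroup.closure (Y '' ((∅ : Finset Ω) : Set Ω)) = ⊥ := by simp
    rw [this]
    exact ⟨inferInstance, by simp⟩
  | insert m S hm ih =>
    obtain ⟨hf, hc⟩ := ih
    set H := Subgroup.closure (Y '' (S : Set Ω)) with hH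
    have hYH : ∀ k ∈ S, Y k ∈ H := fun k hk => Subgroup.subset_closure ⟨k, hk, rfl⟩
    have hHf : (H : Set G).Finite := Set.toFinite _
    let Hf : Finset G := hHf.toFinset
    let C : Finset G := insert 1 (insert (Y m) (insert (Y m)⁻¹ (S.image fun i => Y i * (Y m)⁻¹)))
    have hCc : C.card ≤ S.card + 3 := by
      have h1 := Finset.card_image_le (s := S) (f := fun i => Y i * (Y m)⁻¹)
      have h2 := Finset.card_insert_le (Y m)⁻¹ (S.image fun i => Y i * (Y m)⁻¹)
      have h3 := Finset.card_insert_le (Y m) (insert (Y m)⁻¹ (S.image fun i => Y i * (Y m)⁻¹))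
      have h4 := Finset.card_insert_le 1 (insert (Y m) (insert (Y m)⁻¹ (S.image fun i => Y i * (Y m)⁻¹)))
      simp only [C]; omega
    let U : Finset G := (C ×ˢ Hf).image fun q => q.1 * q.2
    have hU : ∀ g, g ∈ U ↔ ∃ c ∈ C, ∃ x ∈ H, c * x = g := by
      intro g; simp [U, Hf, and_assoc]
    have c1 : (1 : G) ∈ C := by simp [C]
    have c2 : Y m ∈ C := by simp [C]
    have c3 : (Y m)⁻¹ ∈ C := by simp [C]
    have c4 : ∀ i ∈ S, Y i * (Y m)⁻¹ ∈ C := by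
      intro i hi; simp only [C, Finset.mem_insert, Finset.mem_image]
      exact Or.inr (Or.inr (Or.inr ⟨i, hi, rfl⟩))
    have key : ∀ i ∈ S, (Y i)⁻¹ * Y m = Y i * (Y m)⁻¹ * (Y i)⁻¹ := by
      intro i hi
      have hne : i ≠ m := by rintro rfl; exact hm hi
      have : Y i * (Y m)⁻¹ = (Y i)⁻¹ * (Y m * Y i) := by
        rw [h.swap' hne.symm, ← mul_assoc, h.inv_inv]
      rw [this]; group
    have hclosed : ∀ k ∈ insert m S, ∀ g ∈ U, Y k * g ∈ U := by
      intro k hk g hg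
      rw [hU] at hg ⊢
      obtain ⟨c, hcC, x, hx, rfl⟩ := hg
      have hcC' : c = 1 ∨ c = Y m ∨ c = (Y m)⁻¹ ∨ ∃ i ∈ S, Y i * (Y m)⁻¹ = c := by
        simpa only [C, Finset.mem_insert, Finset.mem_image] using hcC
      rcases Finset.mem_insert.1 hk with rfl | hkS
      · rcases hcC' with rfl | rfl | rfl | ⟨i, hi, rfl⟩
        · exact ⟨_, c2, x, hx, by simp⟩
        · exact ⟨_, c3, x, hx, by rw [← mul_assoc, h.mul_self]⟩
        · exact ⟨_, c1, x, hx, by simp⟩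
        · have hne : i ≠ k := by rintro rfl; exact hm hi
          refine ⟨_, c4 i hi, (Y i)⁻¹ * x, H.mul_mem (H.inv_mem (hYH i hi)) hx, ?_⟩
          rw [← mul_assoc, ← key i hi, ← mul_assoc, ← mul_assoc, h.swap' hne.symm,
            mul_assoc (Y i)⁻¹ (Y k)⁻¹ (Y k)⁻¹, h.inv_inv]
      · have hne : k ≠ m := by rintro rfl; exact hm hkS
        rcases hcC' with rfl | rfl | rfl | ⟨i, hi, rfl⟩
        · exact ⟨_, c1, Y k * x, H.mul_mem (hYH k hkS) hx, by simp⟩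
        · exact ⟨_, c3, (Y k)⁻¹ * x, H.mul_mem (H.inv_mem (hYH k hkS)) hx, by
            rw [← mul_assoc, ← mul_assoc, h.swap' hne]⟩
        · exact ⟨_, c4 k hkS, x, hx, by rw [mul_assoc]⟩
        · by_cases hik : i = k
          · subst hik
            refine ⟨_, c2, Y i * x, H.mul_mem (hYH _ hi) hx, ?_⟩
            rw [← mul_assoc, ← mul_assoc, ← mul_assoc, h.mul_self, h.swap' hne.symm]
          · refine ⟨_, c4 i hi, (Y i)⁻¹ * (Y k * x), H.mul_mem (H.inv_mem (hYH i hi)) (H.mul_mem (hYH k hkS) hx), ?_⟩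
            rw [← mul_assoc, ← key i hi, ← mul_assoc, ← mul_assoc, ← mul_assoc, h.swap' (Ne.symm hik),
              mul_assoc (Y i)⁻¹ (Y m), h.swap' hne.symm, mul_assoc (Y i)⁻¹ (Y k)⁻¹]
    have hsub : ∀ g ∈ Subgroup.closure (Y '' ((insert m S : Finset Ω) : Set Ω)), g ∈ U := by
      intro g hg
      induction hg using Subgroup.closure_induction_left with
      | one => exact (hU 1).2 ⟨1, c1, 1, H.one_mem, by simp⟩
      | mul_left x hx y _ ih => 
        obtain ⟨k, hk, rfl⟩ := hx
        exact hclosed k hk _ ih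
      | inv_mul_cancel x hx y _ ih => 
        obtain ⟨k, hk, rfl⟩ := hx
        rw [← h.mul_self, mul_assoc]
        exact hclosed k hk _ (hclosed k hk _ ih)
    have hfin : ((Subgroup.closure (Y '' ((insert m S : Finset Ω) : Set Ω)) : Subgroup G) : Set G) ⊆ (U : Set G) := hsub
    refine ⟨(U.finite_toSet.subset hfin).to_subtype, ?_⟩
    have e1 : Nat.card (Subgroup.closure (Y '' ((insert m S : Finset Ω) : Set Ω))) ≤ U.card := by
      have := Set.ncard_le_ncard hfin U.finite_toSet
      rw [Set.ncard_coe_finset] at this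
      exact this
    have e2 : U.card ≤ C.card * Hf.card := by
      refine Finset.card_image_le.trans ?_
      rw [Finset.card_product]
    have e3 : Hf.card = Nat.card H := by
      rw [← Set.ncard_eq_toFinset_card (H : Set G) hHf]; rfl
    rw [Finset.card_insert_of_notMem hm, Nat.factorial_succ (S.card + 2)]
    calc _ ≤ 2 * (C.card * Nat.card H) := by rw [← e3]; omega
      _ = C.card * (2 * Nat.card H) := by ring
      _ ≤ (S.card + 3) * (S.card + 2).factorial := Nat.mul_le_mul hCc hc

end Car

section concrete
variable {Ω : Type*} [DecidableEq Ω]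

/-- The three-cycle `ω → ∞ → ∞' → ω`. -/
def xh (ω : Ω) : Perm (Option (Option Ω)) :=
  swap (some (some ω)) none * swap none (some none)

/-- Extending permutations by two fixed points. -/
def io : Perm Ω →* Perm (Option (Option Ω)) where
  toFun σ := optionCongr (optionCongr σ)
  map_one' := by ext x; rcases x with _ | _ | x <;> simp
  map_mul' σ τ := by ext x; rcases x with _ | _ | x <;> simp

@[simp] theorem io_some (σ : Perm Ω) (ω : Ω) : io σ (some (some ω)) = some (some (σ ω)) := rfl
@[simp] theorem io_none (σ : Perm Ω) : io σ none = none := rfl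
@[simp] theorem io_none' (σ : Perm Ω) : io σ (some none) = some none := rfl

theorem io_conj (σ : Perm Ω) (ω : Ω) : io σ * xh ω * (io σ)⁻¹ = xh (σ ω) := by
  rw [mul_inv_eq_iff_eq_mul, xh, xh, ← mul_assoc (io σ), mul_swap_eq_swap_mul (io σ),
    mul_assoc _ (io σ), mul_swap_eq_swap_mul (io σ)]
  simp [mul_assoc]

theorem xh_none (ω : Ω) : xh ω none = some none := by
  simp [xh, swap_apply_def]
theorem xh_none' (ω : Ω) : xh ω (some none) = some (some ω) := by
  simp [xh, swap_apply_def]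
theorem xh_self (ω : Ω) : xh ω (some (some ω)) = none := by
  simp [xh, swap_apply_def]
theorem xh_ne (ω : Ω) {z : Ω} (h : z ≠ ω) : xh ω (some (some z)) = some (some z) := by
  simp [xh, swap_apply_def, h]
theorem xh_inv_none (ω : Ω) : (xh ω)⁻¹ none = some (some ω) := by
  rw [Perm.inv_eq_iff_eq, xh_self]
theorem xh_inv_none' (ω : Ω) : (xh ω)⁻¹ (some none) = none := by
  rw [Perm.inv_eq_iff_eq, xh_none]
theorem xh_inv_self (ω : Ω) : (xh ω)⁻¹ (some (some ω)) = some none := by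
  rw [Perm.inv_eq_iff_eq, xh_none']
theorem xh_inv_ne (ω : Ω) {z : Ω} (h : z ≠ ω) : (xh ω)⁻¹ (some (some z)) = some (some z) := by
  rw [Perm.inv_eq_iff_eq, xh_ne _ h]

theorem xh_car : Car (xh : Ω → Perm (Option (Option Ω))) := by
  constructor
  · intro i
    ext1 x
    rcases x with _ | _ | x
    · simp [pow_succ, xh_none, xh_none', xh_self]
    · simp [pow_succ, xh_none, xh_none', xh_self]
    · by_cases h : x = i
      · subst h; simp [pow_succ, xh_none, xh_none', xh_self]
      · simp [pow_succ, xh_ne _ h]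
  · intro i j hij
    ext1 x
    rcases x with _ | _ | x
    · simp [pow_succ, xh_none, xh_none', xh_self, xh_ne _ hij]
    · simp [pow_succ, xh_none, xh_none', xh_self, xh_ne _ hij.symm]
    · by_cases h : x = i
      · subst h; simp [pow_succ, xh_none, xh_none', xh_self, xh_ne _ hij]
      · by_cases h' : x = j
        · subst h'; simp [pow_succ, xh_none, xh_none', xh_self, xh_ne _ h]
        · simp [pow_succ, xh_ne _ h, xh_ne _ h']

/-- Word for a three-cycle in a Carmichael family. -/
def cyc {G : Type*} [Group G] (a b c : G) : G := b⁻¹ * a * c⁻¹ * b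

theorem cyc_xh {a b c : Ω} (hab : a ≠ b) (hbc : b ≠ c) (hac : a ≠ c) :
    cyc (xh a) (xh b) (xh c) = io (swap a b * swap b c) := by
  ext1 x
  simp only [cyc, Perm.mul_apply]
  rcases x with _ | _ | x
  · simp [xh_none, xh_none', xh_self, xh_inv_none, xh_inv_none']
  · simp [xh_none', xh_self, xh_inv_none', xh_ne _ hab.symm, xh_inv_ne _ hbc, xh_inv_self]
  · by_cases h : x = a
    · subst h
      simp [xh_ne _ hab, xh_inv_ne _ hac, xh_self, xh_inv_none, swap_apply_of_ne_of_ne hab hac]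
    · by_cases h' : x = b
      · subst h'
        simp [xh_self, xh_inv_none, xh_ne _ hac.symm, xh_inv_ne _ hbc.symm, swap_apply_of_ne_of_ne hac.symm hbc.symm]
      · by_cases h'' : x = c
        · subst h''
          simp [xh_ne _ hbc.symm, xh_inv_self, xh_none', xh_inv_ne _ hab]
        · simp [xh_ne _ h', xh_inv_ne _ h'', xh_inv_ne _ h', xh_ne _ h, swap_apply_of_ne_of_ne h' h'', swap_apply_of_ne_of_ne h h']

variable [Fintype Ω]

theorem closure_xh : Subgroup.closure (Set.range (xh : Ω → _)) = alternatingGroup (Option (Option Ω)) := by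
  set K := Subgroup.closure (Set.range (xh : Ω → _)) with hK
  let s : Option Ω → Perm (Option (Option Ω)) := fun a => swap none (some a)
  have hs : ∀ a, s a * s none ∈ K := by
    intro a
    rcases a with _ | a
    · simp [s]
    · have : s (some a) * s none = xh a := by simp [s, xh, swap_comm]
      rw [this]; exact Subgroup.subset_closure ⟨a, rfl⟩
  have hss : ∀ a, s a * s a = 1 := fun a => by simp [s]
  have hs2 : ∀ a b, s a * s b ∈ K := by
    intro a b
    have : s a * s b = (s a * s none) * (s b * s none)⁻¹ := by simp [s, mul_assoc]
    rw [this]; exact K.mul_mem (hs a) (K.inv_mem (hs b))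
  have hsw : ∀ x y : Option (Option Ω), x ≠ y → swap x y * s none ∈ K := by
    intro x y hxy
    rcases x with _ | a
    · rcases y with _ | b
      · exact absurd rfl hxy
      · exact hs2 _ _
    · rcases y with _ | b
      · rw [swap_comm]; exact hs2 _ _
      · have hab : a ≠ b := fun h => hxy (by rw [h])
        have : swap (some a) (some b) = s a * s b * s a := by
          have := mul_swap_eq_swap_mul (s a) none (some b)
          simp only [s, swap_apply_left] at this ⊢
          rw [this, swap_apply_of_ne_of_ne (by simp) (by simpa using hab.symm)]
          simp [mul_assoc]
        rw [this, mul_assoc]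
        exact K.mul_mem (hs2 _ _) (hs2 _ _)
  have hsw2 : ∀ g h : Perm (Option (Option Ω)), g.IsSwap → h.IsSwap → g * h ∈ K := by
    rintro _ _ ⟨a, b, hab, rfl⟩ ⟨c, d, hcd, rfl⟩
    have : swap a b * swap c d = (swap a b * s none) * (swap c d * s none)⁻¹ := by simp [s, mul_assoc]
    rw [this]
    exact K.mul_mem (hsw _ _ hab) (K.inv_mem (hsw _ _ hcd))
  apply le_antisymm
  · rw [hK, Subgroup.closure_le]
    rintro _ ⟨a, rfl⟩
    simp [xh, Perm.sign_swap]
  · intro σ hσ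
    obtain ⟨l, rfl, hl⟩ := (Perm.truncSwapFactors σ).out
    rw [Equiv.Perm.prod_list_swap_mem_alternatingGroup_iff_even_length hl] at hσ
    obtain ⟨n, hn⟩ := hσ
    induction n generalizing l with
    | zero => 
      have : l = [] := List.length_eq_zero_iff.1 (by simpa using hn)
      subst this; simp
    | succ n ih =>
      match l, hl, hn with
      | [], _, hn => simp at hn
      | [_], _, hn => simp at hn; omega
      | a :: b :: l, hl, hn =>
        rw [List.prod_cons, List.prod_cons, ← mul_assoc]
        refine K.mul_mem (hsw2 a b (hl _ (by simp)) (hl _ (by simp))) (ih l (fun g hg => hl g (by simp [hg])) ?_)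
        simp at hn; omega

theorem xh_mem (ω : Ω) : xh ω ∈ alternatingGroup (Option (Option Ω)) := by
  rw [← closure_xh]; exact Subgroup.subset_closure ⟨ω, rfl⟩

/-- `xh` as an element of the alternating group. -/
def xa (ω : Ω) : alternatingGroup (Option (Option Ω)) := ⟨xh ω, xh_mem ω⟩

theorem closure_xa : Subgroup.closure (Set.range (xa : Ω → _)) = ⊤ := by
  apply Subgroup.map_injective (alternatingGroup (Option (Option Ω))).subtype_injective
  rw [MonoidHom.map_closure, ← Set.range_comp]
  simp only [← MonoidHom.range_eq_map, Subgroup.range_subtype]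
  exact closure_xh

theorem xa_car : Car (xa : Ω → alternatingGroup (Option (Option Ω))) :=
  ⟨fun i => Subtype.ext (xh_car.cube i), fun i j h => Subtype.ext (xh_car.sq i j h)⟩

theorem card_alt_oo : 2 * Nat.card (alternatingGroup (Option (Option Ω))) = (Fintype.card Ω + 2).factorial := by
  have := two_mul_nat_card_alternatingGroup (α := Option (Option Ω))
  rw [this, Nat.card_eq_fintype_card, Fintype.card_perm, Fintype.card_option, Fintype.card_option]

/-- Carmichael's theorem: any Carmichael family is the image of the standard one. -/
theorem Car.exists_hom {G : Type*} [Group G] {Y : Ω → G} (hY : Car Y) :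
    ∃ Φ : alternatingGroup (Option (Option Ω)) →* G, ∀ ω, Φ (xa ω) = Y ω := by
  let P : Ω → G × alternatingGroup (Option (Option Ω)) := fun ω => (Y ω, xa ω)
  have hP : Car P := ⟨fun i => Prod.ext (hY.cube i) (xa_car.cube i),
    fun i j h => Prod.ext (hY.sq i j h) (xa_car.sq i j h)⟩
  obtain ⟨hfin, hcard⟩ := hP.card_bound Finset.univ
  rw [Finset.coe_univ, Set.image_univ] at hfin hcard
  set D := Subgroup.closure (Set.range P) with hD
  let f : D →* alternatingGroup (Option (Option Ω)) := (MonoidHom.snd _ _).comp D.subtype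
  have hPD : ∀ ω, P ω ∈ D := fun ω => Subgroup.subset_closure ⟨ω, rfl⟩
  have hfs : Function.Surjective f := by
    rw [← MonoidHom.range_eq_top, eq_top_iff, ← closure_xa, Subgroup.closure_le]
    rintro _ ⟨ω, rfl⟩
    exact ⟨⟨P ω, hPD ω⟩, rfl⟩
  have hfb : Function.Bijective f := by
    refine (Nat.bijective_iff_surjective_and_card f).2 ⟨hfs, le_antisymm ?_ (Nat.card_le_card_of_surjective f hfs)⟩
    have := card_alt_oo (Ω := Ω)
    rw [Finset.card_univ] at hcard
    omega
  let e := MulEquiv.ofBijective f hfb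
  refine ⟨((MonoidHom.fst _ _).comp D.subtype).comp e.symm.toMonoidHom, fun ω => ?_⟩
  have : e.symm (xa ω) = ⟨P ω, hPD ω⟩ := by
    rw [MulEquiv.symm_apply_eq]; rfl
  simp [this, P]

theorem Car.cyc_conj {G : Type*} [Group G] {Y : Ω → G} (hY : Car Y) {a b c : Ω}
    (hab : a ≠ b) (hbc : b ≠ c) (hac : a ≠ c) (ω : Ω) :
    cyc (Y a) (Y b) (Y c) * Y ω * (cyc (Y a) (Y b) (Y c))⁻¹ = Y ((swap a b * swap b c) ω) := by
  obtain ⟨Φ, hΦ⟩ := hY.exists_hom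
  have : cyc (xa a) (xa b) (xa c) * xa ω * (cyc (xa a) (xa b) (xa c))⁻¹ = xa ((swap a b * swap b c) ω) := by
    apply Subtype.ext
    have h := cyc_xh hab hbc hac
    have h2 := io_conj (swap a b * swap b c) ω
    rw [← h] at h2
    exact h2
  have h2 := congrArg Φ this
  simpa [cyc, hΦ] using h2

end concrete

/-- Number-theoretic parameters. -/
structure Par where
  p : ℕ
  g : ℕ
  gi : ℕ
  g2 : ℕ
  s : ℕ
  hp : p.Prime
  hp5 : 5 ≤ p
  hgi : (g : ZMod p) * gi = 1
  hg2 : (g2 : ZMod p) = (g : ZMod p) ^ 2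
  hg : ∀ i : ZMod p, i ≠ 0 → ∃ k : ℕ, i = (g : ZMod p) ^ k
  hs1 : 1 ≤ s
  hs2 : s + 2 ≤ p
  hsodd : s % 2 = 1
  lg : g ≤ p
  lgi : gi ≤ p
  lg2 : g2 ≤ p

instance (P : Par) : Fact P.p.Prime := ⟨P.hp⟩
instance (P : Par) : NeZero P.p := ⟨P.hp.ne_zero⟩

/-- Generators of a half-block. -/
structure HBT (G : Type*) where
  (a t h b u v w r : G)

/-- Image of a half-block. -/
def HBT.map {G H : Type*} (f : G → H) (T : HBT G) : HBT H :=
  ⟨f T.a, f T.t, f T.h, f T.b, f T.u, f T.v, f T.w, f T.r⟩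

/-- List of the generators of a half-block. -/
def HBT.gens {G : Type*} (T : HBT G) : List G := [T.a, T.t, T.h, T.b, T.u, T.v, T.w, T.r]

/-- Horner words, evaluating to `a ^ e` when `h a h⁻¹ = a ^ 4`. -/
def horner {G : Type*} [Group G] (a h : G) : ℕ → ℕ → G
  | 0, _ => 1
  | k + 1, e => a ^ (e % 4) * (h * horner a h k (e / 4) * h⁻¹)

theorem horner_eq {G : Type*} [Group G] {a h : G} (H : h * a * h⁻¹ = a ^ 4) :
    ∀ k e : ℕ, e < 4 ^ k → horner a h k e = a ^ e := by
  intro k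
  induction k with
  | zero => intro e he; simp at he; simp [horner, he]
  | succ k ih =>
    intro e he
    rw [horner, ih (e / 4) (by rw [pow_succ] at he; omega), ← conj_pow, H, ← pow_mul, ← pow_add]
    congr 1; omega

theorem horner_map {G H : Type*} [Group G] [Group H] (f : G →* H) (a h : G) :
    ∀ k e : ℕ, f (horner a h k e) = horner (f a) (f h) k e := by
  intro k
  induction k with
  | zero => intro e; simp [horner]
  | succ k ih => intro e; simp [horner, ih]

section rel
variable {G : Type*} [Group G]

/-- The relators of a half-block not depending on `n`. -/
def halfFixed (T : HBT G) (x : G) : List G :=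
  [T.t * T.t, (T.t * T.a) ^ 3, T.h * T.a * T.h⁻¹ * (T.a ^ 4)⁻¹, T.b * T.a * T.b⁻¹ * T.w⁻¹,
   T.t * T.h * T.t * T.h, T.t * T.b * T.t * T.b,
   T.h⁻¹ * (T.a ^ 2 * T.t * (T.h⁻¹ * T.a ^ 2 * T.h) * T.t * T.a ^ 2 * T.t),
   T.b⁻¹ * (T.u * T.t * T.v * T.t * T.u * T.t),
   x ^ 3, (x * (T.t * x * T.t⁻¹)) ^ 2,
   x * T.a * x⁻¹ * T.a⁻¹, x * T.h * x⁻¹ * T.h⁻¹, x * T.b * x⁻¹ * T.b⁻¹]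

/-- The relators of a half-block depending on `n`. -/
def halfPow (P : Par) (k : ℕ) (T : HBT G) : List G :=
  [horner T.a T.h k P.p, T.u⁻¹ * horner T.a T.h k P.g, T.v⁻¹ * horner T.a T.h k P.gi,
   T.w⁻¹ * horner T.a T.h k P.g2, T.r⁻¹ * horner T.a T.h k P.s]

/-- The relations of a half-block. -/
structure HB (P : Par) (T : HBT G) (x : G) : Prop where
  tt : T.t * T.t = 1
  ta : (T.t * T.a) ^ 3 = 1
  ha : T.h * T.a * T.h⁻¹ = T.a ^ 4
  ba : T.b * T.a * T.b⁻¹ = T.w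
  th : T.t * T.h * T.t * T.h = 1
  tb : T.t * T.b * T.t * T.b = 1
  heq : T.h = T.a ^ 2 * T.t * (T.h⁻¹ * T.a ^ 2 * T.h) * T.t * T.a ^ 2 * T.t
  beq : T.b = T.u * T.t * T.v * T.t * T.u * T.t
  x3 : x ^ 3 = 1
  xx : (x * (T.t * x * T.t⁻¹)) ^ 2 = 1
  xa : x * T.a = T.a * x
  xh : x * T.h = T.h * x
  xb : x * T.b = T.b * x
  ap : T.a ^ P.p = 1
  u : T.u = T.a ^ P.g
  v : T.v = T.a ^ P.gi
  w : T.w = T.a ^ P.g2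
  r : T.r = T.a ^ P.s

theorem Par.g_lt (P : Par) {k : ℕ} (hk : P.p < 4 ^ k) :
    P.g < 4 ^ k ∧ P.gi < 4 ^ k ∧ P.g2 < 4 ^ k ∧ P.s < 4 ^ k := by
  have := P.lg; have := P.lgi; have := P.lg2; have := P.hs2
  omega

theorem HB.iff (P : Par) {k : ℕ} (hk : P.p < 4 ^ k) (T : HBT G) (x : G) :
    HB P T x ↔ (∀ y ∈ halfFixed T x, y = 1) ∧ ∀ y ∈ halfPow P k T, y = 1 := by
  obtain ⟨h1, h2, h3, h4⟩ := P.g_lt hk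
  have comm : ∀ y z : G, y * z * y⁻¹ * z⁻¹ = 1 ↔ y * z = z * y := by
    intro y z; rw [mul_inv_eq_one, mul_inv_eq_iff_eq_mul]
  simp only [halfFixed, halfPow, List.forall_mem_cons, List.not_mem_nil, false_imp_iff, implies_true,
    and_true, mul_inv_eq_one (b := T.a ^ 4), mul_inv_eq_one (b := T.w), inv_mul_eq_one, comm]
  constructor
  · intro H
    have ha := H.ha
    simp only [horner_eq ha _ _ hk, horner_eq ha _ _ h1, horner_eq ha _ _ h2, horner_eq ha _ _ h3, horner_eq ha _ _ h4]
    exact ⟨⟨H.tt, H.ta, H.ha, H.ba, H.th, H.tb, H.heq, H.beq, H.x3, H.xx, H.xa, H.xh, H.xb⟩, H.ap, H.u, H.v, H.w, H.r⟩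
  · rintro ⟨⟨_, _, ha, _⟩, _⟩
    simp only [horner_eq ha _ _ hk, horner_eq ha _ _ h1, horner_eq ha _ _ h2, horner_eq ha _ _ h3, horner_eq ha _ _ h4] at *
    constructor <;> tauto

/-- The family attached to a half-block. -/
def fam {p : ℕ} (T : HBT G) (x : G) : Option (ZMod p) → G
  | none => x
  | some i => T.a ^ i.val * (T.t * x * T.t⁻¹) * (T.a ^ i.val)⁻¹

/-- Conjugation by `g` acts on the family `X` through `σ`. -/
def Act {Ω : Type*} (g : G) (X : Ω → G) (σ : Ω → Ω) : Prop := ∀ ω, SemiconjBy g (X ω) (X (σ ω))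

theorem SemiconjBy.sq_one {g y z y' z' : G} (h : SemiconjBy g y y') (h' : SemiconjBy g z z')
    (e : (y * z) ^ 2 = 1) : (y' * z') ^ 2 = 1 := by
  have := (h.mul_right h').pow_right 2
  rw [e] at this
  have h2 : (y' * z') ^ 2 * g = 1 * g := by rw [← this.eq]; simp
  exact mul_right_cancel h2

theorem SemiconjBy.pow_one {g y y' : G} (h : SemiconjBy g y y') {n : ℕ}
    (e : y ^ n = 1) : y' ^ n = 1 := by
  have := h.pow_right n
  rw [e] at this
  have h2 : (y') ^ n * g = 1 * g := by rw [← this.eq]; simp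
  exact mul_right_cancel h2

theorem sq_one_swap {y z : G} (e : (y * z) ^ 2 = 1) : (z * y) ^ 2 = 1 := by
  refine SemiconjBy.pow_one (g := z) (y := y * z) ?_ e
  simp [SemiconjBy, mul_assoc]

end rel

/-- The translation. -/
def fa {p : ℕ} : Option (ZMod p) → Option (ZMod p) := Option.map (· + 1)
/-- Scaling. -/
def fm {p : ℕ} (c : ZMod p) : Option (ZMod p) → Option (ZMod p) := Option.map (c * ·)
/-- Negative inversion. -/
def ft {p : ℕ} : Option (ZMod p) → Option (ZMod p)
  | none => some 0
  | some i => if i = 0 then none else some (-i⁻¹)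

namespace HB
variable {G : Type*} [Group G] {P : Par} {T : HBT G} {x : G}

theorem zpow_eq (H : HB P T x) {m n : ℤ} (h : (m : ZMod P.p) = n) : T.a ^ m = T.a ^ n := by
  rw [← orderOf_dvd_sub_iff_zpow_eq_zpow]
  refine dvd_trans (Int.natCast_dvd_natCast.2 (orderOf_dvd_of_pow_eq_one H.ap)) ?_
  have := (ZMod.intCast_eq_intCast_iff_dvd_sub n m P.p).1 h.symm
  exact this

theorem zpow_sc (H : HB P T x) (n : ℤ) :
    SemiconjBy (T.a ^ n) (T.t * x * T.t⁻¹) (fam T x (some (n : ZMod P.p))) := by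
  have : T.a ^ n = T.a ^ ((n : ZMod P.p).val : ℤ) := H.zpow_eq (by simp)
  rw [this]
  simp only [fam, SemiconjBy, zpow_natCast, inv_mul_cancel_right]

theorem t_inv (H : HB P T x) : T.t⁻¹ = T.t := by
  rw [inv_eq_iff_mul_eq_one, H.tt]

theorem fam_zero (_ : HB P T x) : fam T x (some (0 : ZMod P.p)) = T.t * x * T.t⁻¹ := by
  simp [fam]

theorem act_a (H : HB P T x) : Act T.a (fam (p := P.p) T x) fa := by
  rintro (_ | i)
  · exact H.xa.symm
  · have h1 := H.zpow_sc (i.val : ℤ)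
    have h2 := H.zpow_sc ((i.val : ℤ) + 1)
    have e : ((((i.val : ℤ) + 1 : ℤ)) : ZMod P.p) = i + 1 := by simp
    rw [e, zpow_add, zpow_one] at h2
    simp only [Int.cast_natCast, ZMod.natCast_zmod_val] at h1
    have h3 := h2.mul_left h1.inv_symm_left
    have e2 : T.a ^ (i.val : ℤ) * T.a * (T.a ^ (i.val : ℤ))⁻¹ = T.a := by group
    rw [e2] at h3
    exact h3

theorem act_az (H : HB P T x) (n : ℤ) (i : ZMod P.p) :
    SemiconjBy (T.a ^ n) (fam T x (some i)) (fam T x (some (i + (n : ZMod P.p)))) := by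
  have h1 := H.zpow_sc (i.val : ℤ)
  have h2 := H.zpow_sc ((i.val : ℤ) + n)
  have e : ((((i.val : ℤ) + n : ℤ)) : ZMod P.p) = i + n := by simp
  rw [e] at h2
  simp only [Int.cast_natCast, ZMod.natCast_zmod_val] at h1
  have h3 := h2.mul_left h1.inv_symm_left
  have e2 : T.a ^ ((i.val : ℤ) + n) * (T.a ^ (i.val : ℤ))⁻¹ = T.a ^ n := by
    rw [add_comm, zpow_add]; group
  rw [e2] at h3
  exact h3

theorem act_az_none (H : HB P T x) (n : ℤ) :
    SemiconjBy (T.a ^ n) x x := by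
  exact Commute.zpow_left (show Commute T.a x from H.xa.symm) n

theorem scale (H : HB P T x) {y : G} {c : ℕ} (hc : y * T.a * y⁻¹ = T.a ^ c)
    (ht : T.t * y * T.t * y = 1) (hx : x * y = y * x) :
    Act y (fam (p := P.p) T x) (fm (c : ZMod P.p)) := by
  have ht' : y * T.t = T.t * y⁻¹ := by
    have : T.t * (y * T.t) = y⁻¹ := by
      rw [eq_inv_iff_mul_eq_one, ← mul_assoc]; exact ht
    rw [← this, ← mul_assoc, H.tt, one_mul]
  have h0 : SemiconjBy y (T.t * x * T.t⁻¹) (T.t * x * T.t⁻¹) := by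
    have c1 : Commute y⁻¹ x := (show Commute y x from hx.symm).inv_left
    have : SemiconjBy (y * T.t) x (T.t * x * T.t⁻¹) := by
      rw [ht']
      exact SemiconjBy.mul_left (by simp [SemiconjBy]) c1
    have h3 := this.mul_left (show SemiconjBy T.t x (T.t * x * T.t⁻¹) by simp [SemiconjBy]).inv_symm_left
    simpa using h3
  rintro (_ | i)
  · exact hx.symm
  · have h1 := H.zpow_sc (i.val : ℤ)
    have h2 := H.zpow_sc ((c : ℤ) * (i.val : ℤ))
    have e : ((((c : ℤ) * (i.val : ℤ) : ℤ)) : ZMod P.p) = c * i := by simp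
    rw [e] at h2
    simp only [Int.cast_natCast, ZMod.natCast_zmod_val] at h1
    have h3 := (h2.mul_left h0).mul_left h1.inv_symm_left
    have e2 : T.a ^ ((c : ℤ) * (i.val : ℤ)) * y * (T.a ^ (i.val : ℤ))⁻¹ = y := by
      rw [mul_inv_eq_iff_eq_mul, zpow_mul, zpow_natCast, zpow_natCast, zpow_natCast, ← hc, conj_pow]; group
    rw [e2] at h3
    exact h3

theorem act_h (H : HB P T x) : Act T.h (fam (p := P.p) T x) (fm 4) := by
  have := H.scale (y := T.h) (c := 4) H.ha H.th H.xh
  exact_mod_cast this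

theorem act_b (H : HB P T x) : Act T.b (fam (p := P.p) T x) (fm ((P.g : ZMod P.p) ^ 2)) := by
  have := H.scale (y := T.b) (c := P.g2) (by rw [H.ba, H.w]) H.tb H.xb
  rwa [P.hg2] at this

theorem g_ne (P : Par) : (P.g : ZMod P.p) ≠ 0 := by
  intro h; have := P.hgi; rw [h, zero_mul] at this; exact zero_ne_one this

theorem act_bl (H : HB P T x) (l : ℕ) (i : ZMod P.p) :
    SemiconjBy (T.b ^ l) (fam T x (some i)) (fam T x (some ((P.g : ZMod P.p) ^ (2 * l) * i))) := by
  induction l with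
  | zero => simp
  | succ l ih =>
    have := (H.act_b (some ((P.g : ZMod P.p) ^ (2 * l) * i))).mul_left ih
    rw [← pow_succ'] at this
    have e : (P.g : ZMod P.p) ^ (2 * (l + 1)) * i = (P.g : ZMod P.p) ^ 2 * ((P.g : ZMod P.p) ^ (2 * l) * i) := by ring
    rw [e]; exact this

theorem t_b (H : HB P T x) (l : ℕ) : T.t * T.b ^ l = (T.b ^ l)⁻¹ * T.t := by
  have h1 : SemiconjBy T.t T.b T.b⁻¹ := by
    have := H.tb
    rw [SemiconjBy, eq_inv_mul_iff_mul_eq]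
    have : T.t * T.b * T.t = T.b⁻¹ := by rwa [eq_inv_iff_mul_eq_one]
    have h2 : T.t * T.b = T.b⁻¹ * T.t := by
      rw [← this, mul_assoc, H.tt, mul_one]
    rw [h2]; simp
  have := h1.pow_right l
  rw [inv_pow] at this
  exact this

theorem t_X (H : HB P T x) {j j' : ZMod P.p} (h : SemiconjBy T.t (fam T x (some j)) (fam T x (some j')))
    (l : ℕ) : SemiconjBy T.t (fam T x (some ((P.g : ZMod P.p) ^ (2 * l) * j)))
      (fam T x (some (((P.g : ZMod P.p) ^ (2 * l))⁻¹ * j'))) := by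
  have h1 := (H.act_bl l j).inv_symm_left
  have h2 := H.act_bl l (((P.g : ZMod P.p) ^ (2 * l))⁻¹ * j')
  rw [mul_inv_cancel_left₀ (pow_ne_zero _ (g_ne P))] at h2
  have h3 := (h2.inv_symm_left.mul_left h).mul_left h1
  have : (T.b ^ l)⁻¹ * T.t * (T.b ^ l)⁻¹ = T.t := by
    rw [← H.t_b l, mul_inv_cancel_right]
  rwa [this] at h3

theorem act_t (H : HB P T x) : Act T.t (fam (p := P.p) T x) ft := by
  have hx0 : SemiconjBy T.t x (fam T x (some (0 : ZMod P.p))) := by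
    rw [H.fam_zero]; simp [SemiconjBy]
  have hx0' : SemiconjBy T.t (fam T x (some (0 : ZMod P.p))) x := by
    have := hx0.inv_symm_left
    rwa [H.t_inv] at this
  have tat : T.t * T.a * T.t = T.a⁻¹ * T.t * T.a⁻¹ := by
    have h1 : T.t * T.a * T.t * (T.a * T.t * T.a) = 1 := by
      rw [← H.ta]; simp only [pow_succ, pow_zero, one_mul, mul_assoc]
    rw [eq_inv_of_mul_eq_one_left h1]
    simp [mul_assoc, H.t_inv]
  have h1 : SemiconjBy T.t (fam T x (some (1 : ZMod P.p))) (fam T x (some (-1 : ZMod P.p))) := by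
    have e1 := H.act_az 1 0
    have e2 := H.act_az (-1) 0
    simp only [zpow_one, zpow_neg, Int.cast_one, zero_add, Int.cast_neg] at e1 e2
    have e3 := (e2.mul_left hx0).mul_left (show SemiconjBy T.a⁻¹ x x from (show Commute T.a x from H.xa.symm).inv_left)
    rw [← tat] at e3
    have e4 := (e3.mul_left hx0').mul_left e1.inv_symm_left
    have : T.t * T.a * T.t * T.t * T.a⁻¹ = T.t := by
      rw [mul_assoc (T.t * T.a) T.t, H.tt]; group
    rwa [this] at e4
  have hg : SemiconjBy T.t (fam T x (some (P.g : ZMod P.p))) (fam T x (some (-(P.gi : ZMod P.p)))) := by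
    have e1 := H.act_az P.g 0
    have e2 := H.act_az (-P.gi) 0
    simp only [zpow_natCast, zpow_neg, Int.cast_natCast, zero_add, Int.cast_neg, ← H.u, ← H.v] at e1 e2
    have cb : SemiconjBy T.b x x := H.xb.symm
    have cu : SemiconjBy T.u⁻¹ x x := by
      rw [H.u]; exact ((show Commute T.a x from H.xa.symm).pow_left _).inv_left
    have e3 := ((e2.mul_left hx0).mul_left cu).mul_left cb
    have e : T.v⁻¹ * T.t * T.u⁻¹ * T.b = T.t * T.u * T.t := by
      have hb := H.beq
      rw [hb]
      have : T.t = T.t⁻¹ := H.t_inv.symm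
      calc T.v⁻¹ * T.t * T.u⁻¹ * (T.u * T.t * T.v * T.t * T.u * T.t) = T.v⁻¹ * (T.t * T.t) * T.v * T.t * T.u * T.t := by group
        _ = _ := by rw [H.tt]; group
    rw [e] at e3
    have e4 := (e3.mul_left hx0').mul_left e1.inv_symm_left
    have : T.t * T.u * T.t * T.t * T.u⁻¹ = T.t := by
      rw [mul_assoc (T.t * T.u) T.t, H.tt]; group
    rwa [this] at e4
  rintro (_ | i)
  · exact hx0
  · by_cases hi : i = 0
    · subst hi; simp only [ft, if_true]; exact hx0'
    · obtain ⟨k, hk⟩ := P.hg i hi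
      simp only [ft, if_neg hi]
      rcases Nat.even_or_odd' k with ⟨l, rfl | rfl⟩
      · have := H.t_X h1 l
        convert this using 3
        · rw [hk, mul_one]
        · rw [hk]; simp
      · have := H.t_X hg l
        convert this using 3
        · rw [hk, pow_succ]
        · have : (P.gi : ZMod P.p) = (P.g : ZMod P.p)⁻¹ := eq_inv_of_mul_eq_one_right P.hgi
          rw [hk, this, pow_succ, mul_inv]; ring

theorem car (H : HB P T x) : Car (fam (p := P.p) T x) := by
  have cube : ∀ i, fam (p := P.p) T x i ^ 3 = 1 := by
    rintro (_ | i)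
    · exact H.x3
    · simp only [fam, conj_pow, H.x3]; simp
  have h0 : ∀ i : ZMod P.p, (x * fam T x (some i)) ^ 2 = 1 := by
    intro i
    have e : (x * fam T x (some (0 : ZMod P.p))) ^ 2 = 1 := by rw [H.fam_zero]; exact H.xx
    have := H.act_az i.val 0
    simp only [Int.cast_natCast, ZMod.natCast_zmod_val, zero_add] at this
    exact (H.act_az_none i.val).sq_one this e
  refine ⟨cube, ?_⟩
  rintro (_ | i) (_ | j) hij
  · exact absurd rfl hij
  · exact h0 j
  · exact sq_one_swap (h0 i)
  · have hne : i - j ≠ 0 := by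
      intro h; exact hij (by rw [sub_eq_zero.1 h])
    have e1 : (fam T x (some (-(i-j)⁻¹)) * x) ^ 2 = 1 := sq_one_swap (h0 _)
    have e2 := H.act_t (some (-(i-j)⁻¹))
    have e3 := H.act_t none
    have hft : ft (some (-(i-j)⁻¹)) = some (i - j) := by
      simp [ft, hne]
    rw [hft] at e2
    have e4 := e2.sq_one e3 e1
    have a1 := H.act_az j.val (i - j)
    have a2 := H.act_az j.val 0
    simp only [Int.cast_natCast, ZMod.natCast_zmod_val, zero_add, sub_add_cancel] at a1 a2
    exact a1.sq_one a2 e4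

theorem g_sq_ne (P : Par) : (P.g : ZMod P.p) ^ 2 ≠ 1 := by
  intro h
  have hall : ∀ i : ZMod P.p, i ≠ 0 → i = 1 ∨ i = P.g := by
    intro i hi
    obtain ⟨k, hk⟩ := P.hg i hi
    rcases Nat.even_or_odd' k with ⟨l, rfl | rfl⟩
    · left; rw [hk, pow_mul, h, one_pow]
    · right; rw [hk, pow_succ, pow_mul, h, one_pow, one_mul]
  have hcard : (Finset.univ : Finset (ZMod P.p)) ⊆ {0, 1, (P.g : ZMod P.p)} := by
    intro i _
    by_cases hi : i = 0
    · simp [hi]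
    · rcases hall i hi with h | h <;> simp [h]
  have := (Finset.card_le_card hcard).trans Finset.card_le_three
  rw [Finset.card_univ, ZMod.card] at this
  have := P.hp5
  omega

/-- Killing a half-block. -/
theorem kill (H : HB P T x) (hb : T.b ^ P.p = 1) : ∀ y ∈ T.gens, y = 1 := by
  have hbl : ∀ l : ℕ, T.b ^ l * T.a * (T.b ^ l)⁻¹ = T.a ^ (P.g2 ^ l) := by
    intro l
    induction l with
    | zero => simp
    | succ l ih =>
      have : T.b ^ (l + 1) * T.a * (T.b ^ (l + 1))⁻¹ = T.b * (T.b ^ l * T.a * (T.b ^ l)⁻¹) * T.b⁻¹ := by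
        rw [pow_succ']; group
      rw [this, ih, ← conj_pow, H.ba, H.w, ← pow_mul, pow_succ']
  have h1 := hbl P.p
  rw [hb] at h1
  have ha : T.a = 1 := by
    have h2 : T.a ^ (1 : ℤ) = T.a ^ (((P.g2 ^ P.p : ℕ)) : ℤ) := by
      rw [zpow_natCast, ← h1]; simp
    have h3 : T.a ^ (((P.g2 ^ P.p : ℕ)) : ℤ) = T.a ^ (P.g2 : ℤ) := H.zpow_eq (by
      push_cast; rw [ZMod.pow_card])
    rw [h3, ← orderOf_dvd_sub_iff_zpow_eq_zpow] at h2
    have h4 : (orderOf T.a) ∣ P.p := orderOf_dvd_of_pow_eq_one H.ap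
    rcases (Nat.dvd_prime P.hp).1 h4 with h | h
    · exact orderOf_eq_one_iff.1 h
    · rw [h] at h2
      have := (ZMod.intCast_eq_intCast_iff_dvd_sub (P.g2 : ℤ) 1 P.p).2 h2
      push_cast at this
      rw [P.hg2] at this
      exact absurd this (g_sq_ne P)
  have ht : T.t = 1 := by
    have := H.ta
    rw [ha, mul_one, pow_succ, pow_two, H.tt, one_mul] at this
    exact this
  have hh : T.h = 1 := by have := H.heq; simpa [ha, ht] using this
  have hu : T.u = 1 := by rw [H.u, ha, one_pow]
  have hv : T.v = 1 := by rw [H.v, ha, one_pow]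
  have hb : T.b = 1 := by have := H.beq; simpa [hu, hv, ht] using this
  simp [HBT.gens, ha, ht, hh, hu, hv, hb, H.w, H.r]

end HB

section nrm
variable {G : Type*} [Group G]

/-- Conjugation by `g` maps `S` into itself. -/
def Nrm (g : G) (S : Set G) : Prop := ∀ y ∈ S, g * y * g⁻¹ ∈ S

theorem Nrm.mul {g h : G} {S : Set G} (hg : Nrm g S) (hh : Nrm h S) : Nrm (g * h) S := by
  intro y hy
  have := hg _ (hh y hy)
  rwa [show g * (h * y * h⁻¹) * g⁻¹ = g * h * y * (g * h)⁻¹ by group] at this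

theorem Nrm.pow {g : G} {S : Set G} (hg : Nrm g S) (n : ℕ) : Nrm (g ^ n) S := by
  induction n with
  | zero => intro y hy; simpa using hy
  | succ n ih => rw [pow_succ]; exact ih.mul hg

theorem Act.nrm {Ω : Type*} {g : G} {X : Ω → G} {σ : Ω → Ω} (h : Act g X σ) : Nrm g (Set.range X) := by
  rintro _ ⟨ω, rfl⟩
  exact ⟨σ ω, by rw [eq_mul_inv_iff_mul_eq]; exact (h ω).eq.symm⟩

theorem HB.nrm {P : Par} {T : HBT G} {x : G} (H : HB P T x) :
    ∀ y ∈ T.gens, Nrm y (Set.range (fam (p := P.p) T x)) := by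
  have ha := H.act_a.nrm
  simp only [HBT.gens, List.forall_mem_cons, List.not_mem_nil, false_imp_iff, implies_true, and_true]
  refine ⟨ha, H.act_t.nrm, H.act_h.nrm, H.act_b.nrm, ?_, ?_, ?_, ?_⟩
  · rw [H.u]; exact ha.pow _
  · rw [H.v]; exact ha.pow _
  · rw [H.w]; exact ha.pow _
  · rw [H.r]; exact ha.pow _

/-- Two half-blocks with the same `x` and `X₀`, linked by a permutation. -/
theorem HB.link {P : Par} {T T' : HBT G} {x : G} (H : HB P T x) (H' : HB P T' x)
    (h0 : T'.t * x * T'.t⁻¹ = T.t * x * T.t⁻¹) (ρ : Perm (ZMod P.p))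
    (hρ : ∀ i : ZMod P.p, SemiconjBy T'.a (fam T x (some i)) (fam T x (some (ρ i))))
    (ho : ∀ i, ∃ k : ℕ, (ρ ^ k) 0 = i) :
    Set.range (fam (p := P.p) T' x) = Set.range (fam (p := P.p) T x) := by
  have key : ∀ k : ℕ, fam T' x (some (k : ZMod P.p)) = fam T x (some ((ρ ^ k) 0)) := by
    intro k
    induction k with
    | zero => simp only [Nat.cast_zero, pow_zero, Perm.one_apply]; rw [H.fam_zero, H'.fam_zero, h0]
    | succ k ih =>
      have h1 := H'.act_a (some (k : ZMod P.p))
      have h2 := hρ ((ρ ^ k) 0)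
      rw [ih] at h1
      have : fa (some (k : ZMod P.p)) = some ((k + 1 : ℕ) : ZMod P.p) := by simp [fa]
      rw [this] at h1
      rw [pow_succ', Perm.mul_apply]
      exact mul_right_cancel (h1.eq.symm.trans h2.eq)
  ext y
  constructor
  · rintro ⟨_ | i, rfl⟩
    · exact ⟨none, rfl⟩
    · have := key i.val
      rw [ZMod.natCast_zmod_val] at this
      exact ⟨_, this.symm⟩
  · rintro ⟨_ | i, rfl⟩
    · exact ⟨none, rfl⟩
    · obtain ⟨k, rfl⟩ := ho i
      exact ⟨_, key k⟩

theorem HB.kill_of_a {P : Par} {T : HBT G} {x : G} (H : HB P T x) (ha : T.a = 1) : ∀ y ∈ T.gens, y = 1 := by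
  apply H.kill
  have ht : T.t = 1 := by
    have := H.ta
    rw [ha, mul_one, pow_succ, pow_two, H.tt, one_mul] at this
    exact this
  have hu : T.u = 1 := by rw [H.u, ha, one_pow]
  have hv : T.v = 1 := by rw [H.v, ha, one_pow]
  have hb : T.b = 1 := by have := H.beq; simpa [hu, hv, ht] using this
  rw [hb, one_pow]

end nrm

section perms
variable (P : Par)

/-- The `p`-cycle linking the two halves of a block. -/
def rho : Perm (ZMod P.p) :=
  (Units.mulLeft (Units.mk0 ((P.g : ZMod P.p) ^ 2) (pow_ne_zero _ (HB.g_ne P)))) *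
    (swap 0 1 * swap 1 (P.g : ZMod P.p))

theorem orderOf_g : orderOf (P.g : ZMod P.p) = P.p - 1 := by
  have h1 : orderOf (P.g : ZMod P.p) ∣ P.p - 1 := orderOf_dvd_of_pow_eq_one (ZMod.pow_card_sub_one_eq_one (HB.g_ne P))
  have h2 := P.hp.two_le
  apply Nat.le_antisymm (Nat.le_of_dvd (by omega) h1)
  have hsub : (Finset.univ : Finset (ZMod P.p)).erase 0 ⊆ (Finset.range (orderOf (P.g : ZMod P.p))).image (fun k => (P.g : ZMod P.p) ^ k) := by
    intro i hi
    obtain ⟨k, hk⟩ := P.hg i (Finset.ne_of_mem_erase hi)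
    rw [Finset.mem_image]
    refine ⟨k % orderOf (P.g : ZMod P.p), Finset.mem_range.2 (Nat.mod_lt _ ?_), ?_⟩
    · exact Nat.pos_of_dvd_of_pos h1 (by omega)
    · rw [hk, pow_mod_orderOf]
  have := (Finset.card_le_card hsub).trans Finset.card_image_le
  rwa [Finset.card_erase_of_mem (Finset.mem_univ _), Finset.card_univ, ZMod.card, Finset.card_range] at this

theorem p_odd : P.p % 2 = 1 := by
  rcases P.hp.eq_two_or_odd with h | h
  · have := P.hp5; omega
  · exact h

theorem g_odd_ne (k : ℕ) (hk : k % 2 = 1) : (P.g : ZMod P.p) ^ k ≠ 1 := by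
  intro h
  have := orderOf_dvd_of_pow_eq_one h
  rw [orderOf_g] at this
  have h2 : 2 ∣ P.p - 1 := by have := p_odd P; omega
  have := h2.trans this
  omega

theorem g_ne_one : (P.g : ZMod P.p) ≠ 1 := by
  have := g_odd_ne P 1 rfl
  simpa using this

theorem rho_apply (i : ZMod P.p) : rho P i = (P.g : ZMod P.p) ^ 2 * ((swap 0 1 * swap 1 (P.g : ZMod P.p) : Perm (ZMod P.p)) i) := rfl

theorem rho_zero : rho P 0 = (P.g : ZMod P.p) ^ 2 := by
  rw [rho_apply, Perm.mul_apply, swap_apply_of_ne_of_ne zero_ne_one (HB.g_ne P).symm, swap_apply_left, mul_one]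

theorem rho_one : rho P 1 = (P.g : ZMod P.p) ^ 3 := by
  rw [rho_apply, Perm.mul_apply, swap_apply_left, swap_apply_of_ne_of_ne (HB.g_ne P) (g_ne_one P)]
  ring

theorem rho_g : rho P P.g = 0 := by
  rw [rho_apply, Perm.mul_apply, swap_apply_right, swap_apply_right, mul_zero]

theorem rho_other {i : ZMod P.p} (h0 : i ≠ 0) (h1 : i ≠ 1) (hg : i ≠ P.g) : rho P i = (P.g : ZMod P.p) ^ 2 * i := by
  rw [rho_apply, Perm.mul_apply, swap_apply_of_ne_of_ne h1 hg, swap_apply_of_ne_of_ne h0 h1]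

theorem rho_orbit (i : ZMod P.p) : ∃ k : ℕ, (rho P ^ k) 0 = i := by
  set O : Set (ZMod P.p) := {i | ∃ k : ℕ, (rho P ^ k) 0 = i} with hO
  have step : ∀ j ∈ O, rho P j ∈ O := by
    rintro _ ⟨k, rfl⟩
    exact ⟨k + 1, by rw [pow_succ', Perm.mul_apply]⟩
  have z : (0 : ZMod P.p) ∈ O := ⟨0, rfl⟩
  have g2 : (P.g : ZMod P.p) ^ 2 ∈ O := by have := step _ z; rwa [rho_zero] at this
  have gpow : ∀ k, (P.g : ZMod P.p) ^ k ≠ 0 := fun k => pow_ne_zero _ (HB.g_ne P)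
  have ev : ∀ l : ℕ, (P.g : ZMod P.p) ^ (2 * (l + 1)) ∈ O := by
    intro l
    induction l with
    | zero => simpa using g2
    | succ l ih =>
      by_cases h1 : (P.g : ZMod P.p) ^ (2 * (l + 1)) = 1
      · have : (P.g : ZMod P.p) ^ (2 * (l + 1 + 1)) = (P.g : ZMod P.p) ^ 2 := by
          rw [show 2 * (l + 1 + 1) = 2 * (l + 1) + 2 by ring, pow_add, h1, one_mul]
        rwa [this]
      · have hg : (P.g : ZMod P.p) ^ (2 * (l + 1)) ≠ P.g := by
          intro h
          apply g_odd_ne P (2 * l + 1) (by omega)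
          rw [show 2 * (l + 1) = (2 * l + 1) + 1 by ring, pow_succ] at h
          exact mul_right_cancel₀ (HB.g_ne P) (by rw [h, one_mul])
        have := step _ ih
        rw [rho_other P (gpow _) h1 hg] at this
        convert this using 1; ring
  have one : (1 : ZMod P.p) ∈ O := by
    have h := ev ((P.p - 1) / 2 - 1)
    have e : 2 * ((P.p - 1) / 2 - 1 + 1) = P.p - 1 := by
      have := p_odd P; have := P.hp5; omega
    rwa [e, ZMod.pow_card_sub_one_eq_one (HB.g_ne P)] at h
  have g3 : (P.g : ZMod P.p) ^ 3 ∈ O := by have := step _ one; rwa [rho_one] at this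
  have od : ∀ l : ℕ, (P.g : ZMod P.p) ^ (2 * (l + 1) + 1) ∈ O := by
    intro l
    induction l with
    | zero => simpa using g3
    | succ l ih =>
      by_cases hg : (P.g : ZMod P.p) ^ (2 * (l + 1) + 1) = P.g
      · have : (P.g : ZMod P.p) ^ (2 * (l + 1 + 1) + 1) = (P.g : ZMod P.p) ^ 3 := by
          rw [show 2 * (l + 1 + 1) + 1 = (2 * (l + 1) + 1) + 2 by ring, pow_add, hg]; ring
        rwa [this]
      · have h1 := g_odd_ne P (2 * (l + 1) + 1) (by omega)
        have := step _ ih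
        rw [rho_other P (gpow _) h1 hg] at this
        convert this using 1; ring
  by_cases hi : i = 0
  · rw [hi]; exact z
  · obtain ⟨k, hk⟩ := P.hg i hi
    have hk' : i = (P.g : ZMod P.p) ^ (k + 2 * (P.p - 1)) := by
      rw [pow_add, mul_comm 2, pow_mul, ZMod.pow_card_sub_one_eq_one (HB.g_ne P), one_pow, mul_one, hk]
    rw [hk']
    have := P.hp5
    rcases Nat.even_or_odd' k with ⟨l, rfl | rfl⟩
    · have := ev (l + (P.p - 1) - 1)
      rwa [show 2 * (l + (P.p - 1) - 1 + 1) = 2 * l + 2 * (P.p - 1) by omega] at this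
    · have := od (l + (P.p - 1) - 1)
      rwa [show 2 * (l + (P.p - 1) - 1 + 1) + 1 = 2 * l + 1 + 2 * (P.p - 1) by omega] at this

/-- Cyclic shift of `[lo, hi)`. -/
def cycN (lo hi n : ℕ) : ℕ := if lo ≤ n ∧ n + 1 < hi then n + 1 else if n + 1 = hi ∧ lo ≤ n then lo else n

theorem cycN_inj (lo hi : ℕ) : Function.Injective (cycN lo hi) := by
  intro m n h
  unfold cycN at h
  split_ifs at h <;> omega

theorem cycN_lt {lo hi q n : ℕ} (h : hi ≤ q) (hn : n < q) : cycN lo hi n < q := by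
  unfold cycN
  split_ifs <;> omega

/-- Cyclic shift of `[lo, hi)` on `ZMod p`. -/
noncomputable def cycP (lo hi : ℕ) (hhi : hi ≤ P.p) : Perm (ZMod P.p) :=
  Equiv.ofBijective (fun i => ((cycN lo hi i.val : ℕ) : ZMod P.p)) (Finite.injective_iff_bijective.1 (by
    intro i j h
    have := congrArg ZMod.val h
    simp only [ZMod.val_natCast_of_lt (cycN_lt hhi (ZMod.val_lt _))] at this
    exact ZMod.val_injective _ (cycN_inj lo hi this)))

theorem cycP_val {lo hi : ℕ} (hhi : hi ≤ P.p) (i : ZMod P.p) : (cycP P lo hi hhi i).val = cycN lo hi i.val := by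
  simp only [cycP, Equiv.ofBijective_apply]
  exact ZMod.val_natCast_of_lt (cycN_lt hhi (ZMod.val_lt _))

theorem cycP_cast {lo hi : ℕ} (hhi : hi ≤ P.p) {n : ℕ} (hn : n < P.p) :
    cycP P lo hi hhi (n : ZMod P.p) = (cycN lo hi n : ℕ) := by
  simp only [cycP, Equiv.ofBijective_apply, ZMod.val_natCast_of_lt hn]

theorem Par.sle (P : Par) : P.s ≤ P.p := by have := P.hs2; omega

/-- shift of `[0, s)` -/
noncomputable def cp : Perm (ZMod P.p) := cycP P 0 P.s P.sle
/-- shift of `[s, p-1)` -/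
noncomputable def dp : Perm (ZMod P.p) := cycP P P.s (P.p - 1) (Nat.sub_le _ _)

/-- The `p`-cycle for the third block. -/
noncomputable def rho3 : Perm (ZMod P.p) := cp P * Equiv.addRight 1

theorem rho3_cast {n : ℕ} (hn : n + 1 < P.p) : rho3 P n = (cycN 0 P.s (n + 1) : ℕ) := by
  have : rho3 P n = cp P ((n + 1 : ℕ) : ZMod P.p) := by simp [rho3]
  rw [this, cp, cycP_cast P _ hn]

theorem rho3_orbit (i : ZMod P.p) : ∃ k : ℕ, (rho3 P ^ k) 0 = i := by
  set O : Set (ZMod P.p) := {i | ∃ k : ℕ, (rho3 P ^ k) 0 = i} with hO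
  have step : ∀ j ∈ O, rho3 P j ∈ O := by
    rintro _ ⟨k, rfl⟩
    exact ⟨k + 1, by rw [pow_succ', Perm.mul_apply]⟩
  have z : (0 : ZMod P.p) ∈ O := ⟨0, rfl⟩
  have s1 := P.hs1
  have s2 := P.hs2
  have so := P.hsodd
  have ev : ∀ l : ℕ, 2 * l < P.s → ((2 * l : ℕ) : ZMod P.p) ∈ O := by
    intro l
    induction l with
    | zero => intro _; simpa using z
    | succ l ih =>
      intro hl
      have := step _ (ih (by omega))
      rw [rho3_cast P (by omega)] at this
      convert this using 2
      unfold cycN; split_ifs <;> omega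
  have hi : ∀ n : ℕ, P.s - 1 + n < P.p → ((P.s - 1 + n : ℕ) : ZMod P.p) ∈ O := by
    intro n
    induction n with
    | zero =>
      intro _
      have := ev ((P.s - 1) / 2) (by omega)
      convert this using 2; omega
    | succ n ih =>
      intro hn
      have := step _ (ih (by omega))
      rw [rho3_cast P (by omega)] at this
      convert this using 2
      unfold cycN; split_ifs <;> omega
  have od : ∀ l : ℕ, 2 * l + 1 < P.s → ((2 * l + 1 : ℕ) : ZMod P.p) ∈ O := by
    intro l
    induction l with
    | zero =>
      intro h1
      have := step _ (hi (P.p - P.s) (by omega))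
      have e : rho3 P ((P.s - 1 + (P.p - P.s) : ℕ) : ZMod P.p) = 1 := by
        have : rho3 P ((P.s - 1 + (P.p - P.s) : ℕ) : ZMod P.p) = cp P (((P.s - 1 + (P.p - P.s) : ℕ) : ZMod P.p) + 1) := by simp [rho3]
        rw [this]
        have e2 : (((P.s - 1 + (P.p - P.s) : ℕ) : ZMod P.p) + 1) = ((0 : ℕ) : ZMod P.p) := by
          rw [← Nat.cast_succ, show (P.s - 1 + (P.p - P.s)).succ = P.p by omega]; simp
        rw [e2, cp, cycP_cast P _ (by omega)]
        have : cycN 0 P.s 0 = 1 := by unfold cycN; split_ifs <;> omega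
        rw [this]; simp
      rw [e] at this
      simpa using this
    | succ l ih =>
      intro hl
      have := step _ (ih (by omega))
      rw [rho3_cast P (by omega)] at this
      convert this using 2
      unfold cycN; split_ifs <;> omega
  have hlt := ZMod.val_lt i
  have main : ((i.val : ℕ) : ZMod P.p) ∈ O := by
    by_cases h : i.val < P.s
    · rcases Nat.even_or_odd' i.val with ⟨l, hl | hl⟩
      · rw [hl]; exact ev l (by omega)
      · rw [hl]; exact od l (by omega)
    · have := hi (i.val - (P.s - 1)) (by omega)
      rwa [show P.s - 1 + (i.val - (P.s - 1)) = i.val by omega] at this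
  rwa [ZMod.natCast_zmod_val] at main

end perms

section words
variable {G : Type*} [Group G]

/-- Commutator word. -/
def cm (y z : G) : G := y * z * y⁻¹ * z⁻¹

theorem cm_eq_one {y z : G} : cm y z = 1 ↔ Commute y z := by
  rw [cm, mul_inv_eq_one, mul_inv_eq_iff_eq_mul]; rfl

/-- word for `X₀` -/
def w0 (T : HBT G) (x : G) : G := T.t * x * T.t⁻¹
/-- word for `X₁` -/
def w1 (T : HBT G) (x : G) : G := T.a * w0 T x * T.a⁻¹
/-- word for `X_g` -/
def wg (T : HBT G) (x : G) : G := T.u * w0 T x * T.u⁻¹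
/-- word for `X_s` -/
def ws (T : HBT G) (x : G) : G := T.r * w0 T x * T.r⁻¹
/-- word for `X_{s-1}` -/
def ws1 (T : HBT G) (x : G) : G := T.a⁻¹ * ws T x * T.a
/-- word for `X_{-1}` -/
def wm1 (T : HBT G) (x : G) : G := T.a⁻¹ * w0 T x * T.a
/-- word for `X_{-2}` -/
def wm2 (T : HBT G) (x : G) : G := T.a⁻¹ * wm1 T x * T.a

/-- block linking relators -/
def blockRel (T T' : HBT G) (x : G) : List G :=
  [T'.a⁻¹ * (T.b * cyc (w0 T x) (w1 T x) (wg T x)), (w0 T' x)⁻¹ * w0 T x]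

/-- splitting relators -/
def splitRel (T : HBT G) (x c d : G) : List G :=
  [cm c d, T.a⁻¹ * (c * d * cyc (ws1 T x) (wm2 T x) (wm1 T x)), cm d (w0 T x), cm c (ws T x),
   cm c (wm1 T x), cm d (wm1 T x), cm c x, cm d x]

/-- A block. -/
structure Blk (P : Par) (T T' : HBT G) (x : G) : Prop where
  H : HB P T x
  H' : HB P T' x
  a' : T'.a = T.b * cyc (w0 T x) (w1 T x) (wg T x)
  t' : w0 T' x = w0 T x

/-- A split. -/
structure Spl (T : HBT G) (x c d : G) : Prop where
  cd : Commute c d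
  a : T.a = c * d * cyc (ws1 T x) (wm2 T x) (wm1 T x)
  d0 : Commute d (w0 T x)
  cs : Commute c (ws T x)
  cm1 : Commute c (wm1 T x)
  dm1 : Commute d (wm1 T x)
  cx : Commute c x
  dx : Commute d x

theorem SemiconjBy.conj_eq' {g y z : G} (h : SemiconjBy g y z) : g * y * g⁻¹ = z := by
  rw [mul_inv_eq_iff_eq_mul]; exact h

theorem SemiconjBy.conj_eq'' {g y z : G} (h : SemiconjBy g z y) : g⁻¹ * y * g = z := by
  have := h.inv_symm_left.conj_eq'
  rwa [inv_inv] at this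

variable {P : Par} {T T' : HBT G} {x c d : G}

namespace HB

theorem w0_eq (H : HB P T x) : w0 T x = fam T x (some (0 : ZMod P.p)) := H.fam_zero.symm

theorem w1_eq (H : HB P T x) : w1 T x = fam T x (some (1 : ZMod P.p)) := by
  have := H.act_az 1 0
  simp only [zpow_one, Int.cast_one, zero_add] at this
  rw [w1, H.w0_eq]; exact this.conj_eq'

theorem wg_eq (H : HB P T x) : wg T x = fam T x (some (P.g : ZMod P.p)) := by
  have := H.act_az P.g 0
  simp only [zpow_natCast, Int.cast_natCast, zero_add, ← H.u] at this
  rw [wg, H.w0_eq]; exact this.conj_eq'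

theorem ws_eq (H : HB P T x) : ws T x = fam T x (some (P.s : ZMod P.p)) := by
  have := H.act_az P.s 0
  simp only [zpow_natCast, Int.cast_natCast, zero_add, ← H.r] at this
  rw [ws, H.w0_eq]; exact this.conj_eq'

theorem act_cast (H : HB P T x) (n : ℕ) : SemiconjBy T.a (fam T x (some (n : ZMod P.p))) (fam T x (some ((n + 1 : ℕ) : ZMod P.p))) := by
  have := H.act_a (some (n : ZMod P.p))
  simpa [fa] using this

theorem ws1_eq (H : HB P T x) : ws1 T x = fam T x (some ((P.s - 1 : ℕ) : ZMod P.p)) := by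
  have := H.act_cast (P.s - 1)
  rw [show P.s - 1 + 1 = P.s by have := P.hs1; omega] at this
  rw [ws1, H.ws_eq]; exact this.conj_eq''

theorem wm1_eq (H : HB P T x) : wm1 T x = fam T x (some ((P.p - 1 : ℕ) : ZMod P.p)) := by
  have := H.act_cast (P.p - 1)
  rw [show P.p - 1 + 1 = P.p by have := P.hp5; omega, ZMod.natCast_self] at this
  rw [wm1, H.w0_eq]; exact this.conj_eq''

theorem wm2_eq (H : HB P T x) : wm2 T x = fam T x (some ((P.p - 2 : ℕ) : ZMod P.p)) := by
  have := H.act_cast (P.p - 2)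
  rw [show P.p - 2 + 1 = P.p - 1 by have := P.hp5; omega] at this
  rw [wm2, H.wm1_eq]; exact this.conj_eq''

end HB

theorem natCast_inj {p m n : ℕ} (hm : m < p) (hn : n < p) : (m : ZMod p) = n ↔ m = n := by
  constructor
  · intro h
    have := congrArg ZMod.val h
    rwa [ZMod.val_natCast_of_lt hm, ZMod.val_natCast_of_lt hn] at this
  · rintro rfl; rfl

theorem Blk.act (B : Blk P T T' x) (i : ZMod P.p) :
    SemiconjBy T'.a (fam T x (some i)) (fam T x (some (rho P i))) := by
  have H := B.H
  rw [B.a', H.w0_eq, H.w1_eq, H.wg_eq]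
  have hc := H.car.cyc_conj (a := some 0) (b := some 1) (c := some (P.g : ZMod P.p)) (by simp)
    (by simpa using (g_ne_one P).symm) (by simpa using (HB.g_ne P).symm) (some i)
  have h1 : (swap (some 0) (some 1) * swap (some 1) (some (P.g : ZMod P.p)) : Perm (Option (ZMod P.p))) (some i)
      = some ((swap 0 1 * swap 1 (P.g : ZMod P.p) : Perm (ZMod P.p)) i) := by
    simp only [Perm.mul_apply, (Option.some_injective (ZMod P.p)).map_swap]
  rw [h1, mul_inv_eq_iff_eq_mul] at hc
  exact (H.act_b _).mul_left hc

theorem Blk.range_eq (B : Blk P T T' x) :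
    Set.range (fam (p := P.p) T' x) = Set.range (fam (p := P.p) T x) :=
  B.H.link B.H' B.t' (rho P) B.act (rho_orbit P)

theorem Blk.nrm (B : Blk P T T' x) : ∀ y ∈ T.gens ++ T'.gens, Nrm y (Set.range (fam (p := P.p) T x)) := by
  intro y hy
  rcases List.mem_append.1 hy with h | h
  · exact B.H.nrm y h
  · rw [← B.range_eq]; exact B.H'.nrm y h

theorem Blk.kill (B : Blk P T T' x) (hx : x = 1) : ∀ y ∈ T.gens ++ T'.gens, y = 1 := by
  have e : T'.a = T.b := by rw [B.a']; simp [w0, w1, wg, cyc, hx]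
  have h1 := B.H.kill (by rw [← e, B.H'.ap])
  have h2 := B.H'.kill_of_a (by rw [e]; exact h1 _ (by simp [HBT.gens]))
  intro y hy
  rcases List.mem_append.1 hy with h | h
  · exact h1 y h
  · exact h2 y h

namespace Spl

theorem cyc_act (H : HB P T x) {m : ℕ} (hm : m < P.p) :
    SemiconjBy (cyc (ws1 T x) (wm2 T x) (wm1 T x)) (fam T x (some (m : ZMod P.p)))
      (fam T x (some ((if m = P.s - 1 then P.p - 2 else if m = P.p - 2 then P.p - 1 else
        if m = P.p - 1 then P.s - 1 else m : ℕ) : ZMod P.p))) := by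
  have s1 := P.hs1
  have s2 := P.hs2
  rw [H.ws1_eq, H.wm2_eq, H.wm1_eq]
  have hc := H.car.cyc_conj (a := some ((P.s - 1 : ℕ) : ZMod P.p)) (b := some ((P.p - 2 : ℕ) : ZMod P.p)) (c := some ((P.p - 1 : ℕ) : ZMod P.p))
    (by rw [Ne, Option.some_inj, natCast_inj] <;> omega)
    (by rw [Ne, Option.some_inj, natCast_inj] <;> omega)
    (by rw [Ne, Option.some_inj, natCast_inj] <;> omega) (some (m : ZMod P.p))
  rw [mul_inv_eq_iff_eq_mul] at hc
  have e : (swap (some ((P.s - 1 : ℕ) : ZMod P.p)) (some ((P.p - 2 : ℕ) : ZMod P.p)) * swap (some ((P.p - 2 : ℕ) : ZMod P.p)) (some ((P.p - 1 : ℕ) : ZMod P.p)) : Perm (Option (ZMod P.p))) (some (m : ZMod P.p))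
      = some ((if m = P.s - 1 then P.p - 2 else if m = P.p - 2 then P.p - 1 else
        if m = P.p - 1 then P.s - 1 else m : ℕ) : ZMod P.p) := by
    have inj : ∀ m n : ℕ, m < P.p → n < P.p → m ≠ n → (some (m : ZMod P.p)) ≠ some (n : ZMod P.p) := by
      intro m n hm hn h; rwa [Ne, Option.some_inj, natCast_inj hm hn]
    rw [Perm.mul_apply]
    by_cases h1 : m = P.s - 1
    · rw [if_pos h1, h1, swap_apply_of_ne_of_ne (inj _ _ (by omega) (by omega) (by omega)) (inj _ _ (by omega) (by omega) (by omega)), swap_apply_left]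
    · rw [if_neg h1]
      by_cases h2 : m = P.p - 2
      · rw [if_pos h2, h2, swap_apply_left, swap_apply_of_ne_of_ne (inj _ _ (by omega) (by omega) (by omega)) (inj _ _ (by omega) (by omega) (by omega))]
      · rw [if_neg h2]
        by_cases h3 : m = P.p - 1
        · rw [if_pos h3, h3, swap_apply_right, swap_apply_right]
        · rw [if_neg h3, swap_apply_of_ne_of_ne (inj _ _ (by omega) (by omega) (by omega)) (inj _ _ (by omega) (by omega) (by omega)), swap_apply_of_ne_of_ne (inj _ _ (by omega) (by omega) (by omega)) (inj _ _ (by omega) (by omega) (by omega))]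
  rw [e] at hc
  exact hc

theorem step_c (S : Spl T x c d) (H : HB P T x) {m : ℕ} (hm : m < P.s)
    (hd : Commute d (fam T x (some (m : ZMod P.p)))) :
    SemiconjBy c (fam T x (some (m : ZMod P.p))) (fam T x (some ((cycN 0 P.s m : ℕ) : ZMod P.p))) := by
  have s1 := P.hs1
  have s2 := P.hs2
  have hc : c = T.a * (cyc (ws1 T x) (wm2 T x) (wm1 T x))⁻¹ * d⁻¹ := by rw [S.a]; group
  rw [hc]
  refine SemiconjBy.mul_left ?_ hd.inv_left
  by_cases h : m = P.s - 1
  · have h1 := (cyc_act H (m := P.p - 1) (by omega)).inv_symm_left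
    rw [if_neg (by omega), if_neg (by omega), if_pos rfl] at h1
    have h2 := H.act_cast (P.p - 1)
    rw [show P.p - 1 + 1 = P.p by have := P.hp5; omega, ZMod.natCast_self] at h2
    have : cycN 0 P.s m = 0 := by unfold cycN; split_ifs <;> omega
    rw [this, h, Nat.cast_zero]
    exact h2.mul_left h1
  · have h1 := (cyc_act H (m := m) (by omega)).inv_symm_left
    rw [if_neg (by omega), if_neg (by omega), if_neg (by omega)] at h1
    have : cycN 0 P.s m = m + 1 := by unfold cycN; split_ifs <;> omega
    rw [this]
    exact (H.act_cast m).mul_left h1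

theorem step_d (S : Spl T x c d) (H : HB P T x) {m : ℕ} (hm : P.s ≤ m) (hm' : m < P.p - 1)
    (hd : Commute c (fam T x (some (m : ZMod P.p)))) :
    SemiconjBy d (fam T x (some (m : ZMod P.p))) (fam T x (some ((cycN P.s (P.p - 1) m : ℕ) : ZMod P.p))) := by
  have s1 := P.hs1
  have s2 := P.hs2
  have hc : d = T.a * (cyc (ws1 T x) (wm2 T x) (wm1 T x))⁻¹ * c⁻¹ := by
    rw [S.a, S.cd.eq]; group
  rw [hc]
  refine SemiconjBy.mul_left ?_ hd.inv_left
  by_cases h : m = P.p - 2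
  · have h1 := (cyc_act H (m := P.s - 1) (by omega)).inv_symm_left
    rw [if_pos rfl] at h1
    have h2 := H.act_cast (P.s - 1)
    rw [show P.s - 1 + 1 = P.s by have := P.hs1; omega] at h2
    have : cycN P.s (P.p - 1) m = P.s := by unfold cycN; split_ifs <;> omega
    rw [this, h]
    exact h2.mul_left h1
  · have h1 := (cyc_act H (m := m) (by omega)).inv_symm_left
    rw [if_neg (by omega), if_neg (by omega), if_neg (by omega)] at h1
    have : cycN P.s (P.p - 1) m = m + 1 := by unfold cycN; split_ifs <;> omega
    rw [this]
    exact (H.act_cast m).mul_left h1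

theorem comm_of_conj {g h y z : G} (h1 : SemiconjBy g y z) (h2 : Commute h g) (h3 : Commute h y) : Commute h z := by
  rw [← h1.conj_eq']
  exact (h2.mul_right h3).mul_right h2.inv_right

theorem comm_d (S : Spl T x c d) (H : HB P T x) (m : ℕ) (hm : m < P.s) :
    Commute d (fam T x (some (m : ZMod P.p))) := by
  induction m with
  | zero => have := S.d0; rw [H.w0_eq] at this; simpa using this
  | succ m ih =>
    have h1 := S.step_c H (by omega) (ih (by omega))
    have : cycN 0 P.s m = m + 1 := by unfold cycN; split_ifs <;> omega
    rw [this] at h1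
    exact comm_of_conj h1 S.cd.symm (ih (by omega))

theorem comm_c' (S : Spl T x c d) (H : HB P T x) (m : ℕ) (hm : P.s + m < P.p - 1) :
    Commute c (fam T x (some ((P.s + m : ℕ) : ZMod P.p))) := by
  induction m with
  | zero => have := S.cs; rw [H.ws_eq] at this; simpa using this
  | succ m ih =>
    have h1 := S.step_d H (by omega) (by omega) (ih (by omega))
    have : cycN P.s (P.p - 1) (P.s + m) = P.s + (m + 1) := by unfold cycN; split_ifs <;> omega
    rw [this] at h1
    exact comm_of_conj h1 S.cd (ih (by omega))

theorem comm_c (S : Spl T x c d) (H : HB P T x) (m : ℕ) (hm : P.s ≤ m) (hm' : m < P.p) :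
    Commute c (fam T x (some (m : ZMod P.p))) := by
  by_cases h : m = P.p - 1
  · have := S.cm1; rw [H.wm1_eq] at this; rwa [h]
  · have := S.comm_c' H (m - P.s) (by omega)
    rwa [show P.s + (m - P.s) = m by omega] at this

theorem act_c (S : Spl T x c d) (H : HB P T x) (m : ℕ) (hm : m < P.p) :
    SemiconjBy c (fam T x (some (m : ZMod P.p))) (fam T x (some ((cycN 0 P.s m : ℕ) : ZMod P.p))) := by
  by_cases h : m < P.s
  · exact S.step_c H h (S.comm_d H m h)
  · have : cycN 0 P.s m = m := by unfold cycN; split_ifs <;> omega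
    rw [this]; exact S.comm_c H m (by omega) hm

theorem act_d (S : Spl T x c d) (H : HB P T x) (m : ℕ) (hm : m < P.p) :
    SemiconjBy d (fam T x (some (m : ZMod P.p))) (fam T x (some ((cycN P.s (P.p - 1) m : ℕ) : ZMod P.p))) := by
  have s2 := P.hs2
  by_cases h : m < P.s
  · have : cycN P.s (P.p - 1) m = m := by unfold cycN; split_ifs <;> omega
    rw [this]; exact S.comm_d H m h
  · by_cases h' : m = P.p - 1
    · have : cycN P.s (P.p - 1) m = m := by unfold cycN; split_ifs <;> omega
      have h2 := S.dm1
      rw [H.wm1_eq] at h2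
      rwa [this, h']
    · exact S.step_d H (by omega) (by omega) (S.comm_c H m (by omega) hm)

theorem Act_c (S : Spl T x c d) (H : HB P T x) : Act c (fam (p := P.p) T x) (Option.map (cp P)) := by
  rintro (_ | i)
  · exact S.cx
  · have := S.act_c H i.val (ZMod.val_lt i)
    rw [← cycP_cast P P.sle (ZMod.val_lt i), ZMod.natCast_zmod_val] at this
    exact this

theorem Act_d (S : Spl T x c d) (H : HB P T x) : Act d (fam (p := P.p) T x) (Option.map (dp P)) := by
  rintro (_ | i)
  · exact S.dx
  · have := S.act_d H i.val (ZMod.val_lt i)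
    rw [← cycP_cast P (Nat.sub_le _ _) (ZMod.val_lt i), ZMod.natCast_zmod_val] at this
    exact this

end Spl
end words

/-- All generators. -/
structure Gens (G : Type*) (k : ℕ) where
  (T1 T1' T3 T3' T2 T2' : HBT G)
  (c d1 d2 x : G)
  e : Fin k → G

namespace Gens
variable {G : Type*} {k : ℕ}

/-- generators attached to the first part -/
def A (D : Gens G k) : List G := D.T1.gens ++ D.T1'.gens ++ (D.T3.gens ++ D.T3'.gens) ++ [D.d1]
/-- generators attached to the second part -/
def B (D : Gens G k) : List G := D.T2.gens ++ D.T2'.gens ++ [D.d2]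

/-- image of the generators -/
def map {H : Type*} (f : G → H) (D : Gens G k) : Gens H k :=
  ⟨D.T1.map f, D.T1'.map f, D.T3.map f, D.T3'.map f, D.T2.map f, D.T2'.map f,
    f D.c, f D.d1, f D.d2, f D.x, fun i => f (D.e i)⟩

variable [Group G]

/-- cross relators -/
def crossRel (D : Gens G k) : List G :=
  (D.A.flatMap fun γ => [cm γ (ws D.T2 D.x), cm γ (wm1 D.T2 D.x), cm γ D.d2]) ++
  ((D.B.flatMap fun γ => [cm γ (ws D.T1 D.x), cm γ (wm1 D.T1 D.x), cm γ D.d1]) ++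
  [(ws D.T1 D.x * ws D.T2 D.x) ^ 2, (ws D.T1 D.x * wm1 D.T2 D.x) ^ 2,
   (wm1 D.T1 D.x * ws D.T2 D.x) ^ 2, (wm1 D.T1 D.x * wm1 D.T2 D.x) ^ 2])

/-- relators for the extra points -/
def extraRel (D : Gens G k) : List G :=
  (List.finRange k).flatMap fun i =>
    [D.e i ^ 3, (D.e i * D.x) ^ 2] ++
    (((List.finRange k).filter (· ≠ i)).map fun j => (D.e i * D.e j) ^ 2) ++
    ((D.A ++ D.B ++ [D.c]).map fun γ => cm γ (D.e i))

/-- linking relators -/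
def linkRel (D : Gens G k) : List G :=
  [D.T3.a⁻¹ * (D.c * D.T1.a), (w0 D.T3 D.x)⁻¹ * w0 D.T1 D.x, (w0 D.T2 D.x)⁻¹ * w0 D.T1 D.x]

/-- half-block relators not depending on `n` -/
def halvesRel (D : Gens G k) : List G :=
  halfFixed D.T1 D.x ++ (halfFixed D.T1' D.x ++ (halfFixed D.T3 D.x ++ (halfFixed D.T3' D.x ++
    (halfFixed D.T2 D.x ++ halfFixed D.T2' D.x))))

/-- all relators not depending on `n` -/
def fixedRel (D : Gens G k) : List G :=
  D.halvesRel ++ (blockRel D.T1 D.T1' D.x ++ (blockRel D.T3 D.T3' D.x ++ (blockRel D.T2 D.T2' D.x ++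
    (splitRel D.T1 D.x D.c D.d1 ++ (splitRel D.T2 D.x D.c D.d2 ++
      (D.linkRel ++ (D.crossRel ++ D.extraRel)))))))

/-- relators depending on `n` -/
def powRel (P : Par) (q : ℕ) (D : Gens G k) : List G :=
  halfPow P q D.T1 ++ (halfPow P q D.T1' ++ (halfPow P q D.T3 ++ (halfPow P q D.T3' ++
    (halfPow P q D.T2 ++ halfPow P q D.T2'))))

/-- The relations. -/
structure Rel (P : Par) (D : Gens G k) : Prop where
  B1 : Blk P D.T1 D.T1' D.x
  B3 : Blk P D.T3 D.T3' D.x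
  B2 : Blk P D.T2 D.T2' D.x
  S1 : Spl D.T1 D.x D.c D.d1
  S2 : Spl D.T2 D.x D.c D.d2
  a3 : D.T3.a = D.c * D.T1.a
  t3 : w0 D.T3 D.x = w0 D.T1 D.x
  t2 : w0 D.T2 D.x = w0 D.T1 D.x
  cA : ∀ γ ∈ D.A, Commute γ (ws D.T2 D.x) ∧ Commute γ (wm1 D.T2 D.x) ∧ Commute γ D.d2
  cB : ∀ γ ∈ D.B, Commute γ (ws D.T1 D.x) ∧ Commute γ (wm1 D.T1 D.x) ∧ Commute γ D.d1
  ss : (ws D.T1 D.x * ws D.T2 D.x) ^ 2 = 1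
  sm : (ws D.T1 D.x * wm1 D.T2 D.x) ^ 2 = 1
  ms : (wm1 D.T1 D.x * ws D.T2 D.x) ^ 2 = 1
  mm : (wm1 D.T1 D.x * wm1 D.T2 D.x) ^ 2 = 1
  e3 : ∀ i, D.e i ^ 3 = 1
  ex : ∀ i, (D.e i * D.x) ^ 2 = 1
  ee : ∀ i j, j ≠ i → (D.e i * D.e j) ^ 2 = 1
  cE : ∀ i, ∀ γ ∈ D.A ++ D.B ++ [D.c], Commute γ (D.e i)

theorem cross_iff (D : Gens G k) : (∀ y ∈ D.crossRel, y = 1) ↔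
    (∀ γ ∈ D.A, Commute γ (ws D.T2 D.x) ∧ Commute γ (wm1 D.T2 D.x) ∧ Commute γ D.d2) ∧
    (∀ γ ∈ D.B, Commute γ (ws D.T1 D.x) ∧ Commute γ (wm1 D.T1 D.x) ∧ Commute γ D.d1) ∧
    (ws D.T1 D.x * ws D.T2 D.x) ^ 2 = 1 ∧ (ws D.T1 D.x * wm1 D.T2 D.x) ^ 2 = 1 ∧
    (wm1 D.T1 D.x * ws D.T2 D.x) ^ 2 = 1 ∧ (wm1 D.T1 D.x * wm1 D.T2 D.x) ^ 2 = 1 := by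
  have hfl : ∀ (l : List G) (f : G → List G), (∀ y ∈ l.flatMap f, y = 1) ↔ ∀ γ ∈ l, ∀ y ∈ f γ, y = 1 := by
    intro l f
    simp only [List.mem_flatMap]
    exact ⟨fun h γ hγ y hy => h y ⟨γ, hγ, hy⟩, fun h y ⟨γ, hγ, hy⟩ => h γ hγ y hy⟩
  simp only [crossRel, List.forall_mem_append, hfl, List.forall_mem_cons, List.not_mem_nil,
    false_imp_iff, implies_true, and_true, cm_eq_one]

theorem extra_iff (D : Gens G k) : (∀ y ∈ D.extraRel, y = 1) ↔
    ∀ i, (D.e i ^ 3 = 1 ∧ (D.e i * D.x) ^ 2 = 1) ∧ (∀ j, j ≠ i → (D.e i * D.e j) ^ 2 = 1) ∧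
      ∀ γ ∈ D.A ++ D.B ++ [D.c], Commute γ (D.e i) := by
  have hfl : ∀ (l : List (Fin k)) (f : Fin k → List G), (∀ y ∈ l.flatMap f, y = 1) ↔ ∀ γ ∈ l, ∀ y ∈ f γ, y = 1 := by
    intro l f
    simp only [List.mem_flatMap]
    exact ⟨fun h γ hγ y hy => h y ⟨γ, hγ, hy⟩, fun h y ⟨γ, hγ, hy⟩ => h γ hγ y hy⟩
  have hm : ∀ {α : Type} (l : List α) (f : α → G), (∀ y ∈ l.map f, y = 1) ↔ ∀ γ ∈ l, f γ = 1 := by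
    intro α l f; exact List.forall_mem_map
  have hm' : ∀ (l : List G) (f : G → G), (∀ y ∈ l.map f, y = 1) ↔ ∀ γ ∈ l, f γ = 1 := by
    intro l f; exact List.forall_mem_map
  rw [extraRel, hfl]
  simp only [List.mem_finRange, true_imp_iff]
  refine forall_congr' fun i => ?_
  rw [List.forall_mem_append, List.forall_mem_append, hm, hm', and_assoc]
  simp only [List.forall_mem_cons, List.not_mem_nil, false_imp_iff, implies_true, and_true, cm_eq_one,
    List.mem_filter, List.mem_finRange, true_and, decide_eq_true_eq]

theorem rel_iff (P : Par) {q : ℕ} (hq : P.p < 4 ^ q) (D : Gens G k) :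
    D.Rel P ↔ (∀ y ∈ D.fixedRel, y = 1) ∧ ∀ y ∈ D.powRel P q, y = 1 := by
  have hb : ∀ T T' : HBT G, (∀ y ∈ blockRel T T' D.x, y = 1) ↔
      T'.a = T.b * cyc (w0 T D.x) (w1 T D.x) (wg T D.x) ∧ w0 T' D.x = w0 T D.x := by
    intro T T'
    simp only [blockRel, List.forall_mem_cons, List.not_mem_nil, false_imp_iff, implies_true, and_true,
      inv_mul_eq_one]
  have hs : ∀ (T : HBT G) (c d : G), (∀ y ∈ splitRel T D.x c d, y = 1) ↔ Spl T D.x c d := by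
    intro T c d
    simp only [splitRel, List.forall_mem_cons, List.not_mem_nil, false_imp_iff, implies_true, and_true,
      inv_mul_eq_one, cm_eq_one]
    exact ⟨fun ⟨h1, h2, h3, h4, h5, h6, h7, h8⟩ => ⟨h1, h2, h3, h4, h5, h6, h7, h8⟩,
      fun ⟨h1, h2, h3, h4, h5, h6, h7, h8⟩ => ⟨h1, h2, h3, h4, h5, h6, h7, h8⟩⟩
  have hl : (∀ y ∈ D.linkRel, y = 1) ↔ D.T3.a = D.c * D.T1.a ∧ w0 D.T3 D.x = w0 D.T1 D.x ∧ w0 D.T2 D.x = w0 D.T1 D.x := by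
    simp only [linkRel, List.forall_mem_cons, List.not_mem_nil, false_imp_iff, implies_true, and_true,
      inv_mul_eq_one]
  have hh := fun T => HB.iff P hq T D.x
  have hh1 := hh D.T1
  have hh1' := hh D.T1'
  have hh2 := hh D.T2
  have hh2' := hh D.T2'
  have hh3 := hh D.T3
  have hh3' := hh D.T3'
  simp only [fixedRel, halvesRel, powRel, List.forall_mem_append, hb, hs, hl, cross_iff]
  rw [extra_iff]
  constructor
  · intro R
    have p1 := hh1.1 R.B1.H
    have p1' := hh1'.1 R.B1.H'
    have p2 := hh2.1 R.B2.H
    have p2' := hh2'.1 R.B2.H'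
    have p3 := hh3.1 R.B3.H
    have p3' := hh3'.1 R.B3.H'
    refine ⟨⟨⟨p1.1, p1'.1, p3.1, p3'.1, p2.1, p2'.1⟩, ⟨R.B1.a', R.B1.t'⟩, ⟨R.B3.a', R.B3.t'⟩,
      ⟨R.B2.a', R.B2.t'⟩, R.S1, R.S2, ⟨R.a3, R.t3, R.t2⟩, ⟨R.cA, R.cB, R.ss, R.sm, R.ms, R.mm⟩,
      fun i => ⟨⟨R.e3 i, R.ex i⟩, R.ee i, R.cE i⟩⟩, p1.2, p1'.2, p3.2, p3'.2, p2.2, p2'.2⟩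
  · rintro ⟨⟨⟨p1, p1', p3, p3', p2, p2'⟩, b1, b3, b2, s1, s2, l, ⟨c1, c2, c3, c4, c5, c6⟩, e⟩, q1, q1', q3, q3', q2, q2'⟩
    exact ⟨⟨hh1.2 ⟨p1, q1⟩, hh1'.2 ⟨p1', q1'⟩, b1.1, b1.2⟩, ⟨hh3.2 ⟨p3, q3⟩, hh3'.2 ⟨p3', q3'⟩, b3.1, b3.2⟩,
      ⟨hh2.2 ⟨p2, q2⟩, hh2'.2 ⟨p2', q2'⟩, b2.1, b2.2⟩, s1, s2, l.1, l.2.1, l.2.2, c1, c2, c3, c4, c5, c6,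
      fun i => (e i).1.1, fun i => (e i).1.2, fun i => (e i).2.1, fun i => (e i).2.2⟩

section mapping
variable {H : Type*} [Group H] (f : G →* H)

theorem gens_map (T : HBT G) : (T.map f).gens = T.gens.map f := by
  simp [HBT.gens, HBT.map]

theorem A_map (D : Gens G k) : (D.map f).A = D.A.map f := by
  simp [A, map, gens_map]

theorem B_map (D : Gens G k) : (D.map f).B = D.B.map f := by
  simp [B, map, gens_map]

theorem cm_map (y z : G) : f (cm y z) = cm (f y) (f z) := by simp [cm]
theorem cyc_map (y z w : G) : f (cyc y z w) = cyc (f y) (f z) (f w) := by simp [cyc]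
theorem w0_map (T : HBT G) (x : G) : w0 (T.map f) (f x) = f (w0 T x) := by simp [w0, HBT.map]
theorem w1_map (T : HBT G) (x : G) : w1 (T.map f) (f x) = f (w1 T x) := by simp [w1, w0_map]; simp [HBT.map]
theorem wg_map (T : HBT G) (x : G) : wg (T.map f) (f x) = f (wg T x) := by simp [wg, w0_map]; simp [HBT.map]
theorem ws_map (T : HBT G) (x : G) : ws (T.map f) (f x) = f (ws T x) := by simp [ws, w0_map]; simp [HBT.map]
theorem ws1_map (T : HBT G) (x : G) : ws1 (T.map f) (f x) = f (ws1 T x) := by simp [ws1, ws_map]; simp [HBT.map]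
theorem wm1_map (T : HBT G) (x : G) : wm1 (T.map f) (f x) = f (wm1 T x) := by simp [wm1, w0_map]; simp [HBT.map]
theorem wm2_map (T : HBT G) (x : G) : wm2 (T.map f) (f x) = f (wm2 T x) := by simp [wm2, wm1_map]; simp [HBT.map]

theorem halfFixed_map (T : HBT G) (x : G) : halfFixed (T.map f) (f x) = (halfFixed T x).map f := by
  simp [halfFixed, HBT.map]
theorem halfPow_map (P : Par) (q : ℕ) (T : HBT G) : halfPow P q (T.map f) = (halfPow P q T).map f := by
  simp [halfPow, HBT.map, horner_map]
theorem blockRel_map (T T' : HBT G) (x : G) : blockRel (T.map f) (T'.map f) (f x) = (blockRel T T' x).map f := by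
  simp [blockRel, w0_map, w1_map, wg_map, cyc_map]; simp [HBT.map]
theorem splitRel_map (T : HBT G) (x c d : G) : splitRel (T.map f) (f x) (f c) (f d) = (splitRel T x c d).map f := by
  simp [splitRel, w0_map, ws_map, ws1_map, wm1_map, wm2_map, cyc_map, cm_map]; simp [HBT.map]

theorem fixedRel_map (D : Gens G k) : (D.map f).fixedRel = D.fixedRel.map f := by
  have h1 : (D.map f).halvesRel = D.halvesRel.map f := by
    simp only [halvesRel, map, halfFixed_map, List.map_append]
  have h2 : (D.map f).linkRel = D.linkRel.map f := by
    simp only [linkRel, map, w0_map]; simp [HBT.map]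
  have h3 : (D.map f).crossRel = D.crossRel.map f := by
    rw [crossRel, A_map, B_map]
    simp only [crossRel, map, ws_map, wm1_map, List.map_append, List.map_flatMap, List.flatMap_map, List.map_cons, cm_map, List.map_nil, map_pow, map_mul]
  have h4 : (D.map f).extraRel = D.extraRel.map f := by
    rw [extraRel, A_map, B_map]
    simp only [extraRel, map, List.map_append, List.map_flatMap, List.map_map, List.map_cons, cm_map, List.map_nil, map_pow, map_mul]
    simp [Function.comp_def, cm_map]
  rw [fixedRel, h1, h2, h3, h4]
  simp only [fixedRel, List.map_append, map, blockRel_map, splitRel_map]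

theorem powRel_map (P : Par) (q : ℕ) (D : Gens G k) : (D.map f).powRel P q = (D.powRel P q).map f := by
  simp only [powRel, map, halfPow_map, List.map_append]

theorem Rel.map {P : Par} {D : Gens G k} (R : D.Rel P) : (D.map f).Rel P := by
  have hq : P.p < 4 ^ P.p := Nat.lt_pow_self (by norm_num)
  rw [rel_iff P hq] at R ⊢
  rw [fixedRel_map, powRel_map]
  simp only [List.forall_mem_map]
  exact ⟨fun y hy => by rw [R.1 y hy, map_one], fun y hy => by rw [R.2 y hy, map_one]⟩

end mapping
end Gens

/-- The index set of points. -/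
abbrev Pts (P : Par) (k : ℕ) : Type := Option (ZMod P.p) ⊕ ({i : ZMod P.p // P.s ≤ i.val} ⊕ Fin k)

namespace Gens
variable {G : Type*} {k : ℕ} [Group G]

/-- The family of all points. -/
def Y (P : Par) (D : Gens G k) : Pts P k → G
  | .inl i => fam D.T1 D.x i
  | .inr (.inl i) => fam D.T2 D.x (some i.1)
  | .inr (.inr j) => D.e j

namespace Rel
variable {P : Par} {D : Gens G k}

theorem X_low (R : D.Rel P) (m : ℕ) (hm : m < P.s) :
    fam D.T2 D.x (some (m : ZMod P.p)) = fam D.T1 D.x (some (m : ZMod P.p)) := by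
  induction m with
  | zero =>
    simp only [Nat.cast_zero]
    rw [← R.B1.H.w0_eq, ← R.B2.H.w0_eq, R.t2]
  | succ m ih =>
    have s2 := P.hs2
    have h1 := R.S1.act_c R.B1.H m (by omega)
    have h2 := R.S2.act_c R.B2.H m (by omega)
    rw [ih (by omega)] at h2
    have : cycN 0 P.s m = m + 1 := by unfold cycN; split_ifs <;> omega
    rw [this] at h1 h2
    exact mul_right_cancel (h2.eq.symm.trans h1.eq)

theorem X_low' (R : D.Rel P) (i : ZMod P.p) (hi : i.val < P.s) :
    fam D.T2 D.x (some i) = fam D.T1 D.x (some i) := by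
  have := R.X_low i.val hi
  rwa [ZMod.natCast_zmod_val] at this

/-- anything commuting with `X_s`, `X_{-1}` and `d` commutes with all the upper points -/
theorem comm_high {T : HBT G} {x c d γ : G} (H : HB P T x) (S : Spl T x c d)
    (h : Commute γ (ws T x) ∧ Commute γ (wm1 T x) ∧ Commute γ d) (i : ZMod P.p) (hi : P.s ≤ i.val) :
    Commute γ (fam T x (some i)) := by
  have s2 := P.hs2
  obtain ⟨h1, h2, h3⟩ := h
  rw [H.ws_eq] at h1
  rw [H.wm1_eq] at h2
  have key : ∀ m : ℕ, P.s + m < P.p - 1 → Commute γ (fam T x (some ((P.s + m : ℕ) : ZMod P.p))) := by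
    intro m
    induction m with
    | zero => intro _; simpa using h1
    | succ m ih =>
      intro hm
      have e := S.act_d H (P.s + m) (by omega)
      have : cycN P.s (P.p - 1) (P.s + m) = P.s + (m + 1) := by unfold cycN; split_ifs <;> omega
      rw [this] at e
      exact Spl.comm_of_conj e h3 (ih (by omega))
  have hlt := ZMod.val_lt i
  have : Commute γ (fam T x (some (i.val : ZMod P.p))) := by
    by_cases h : i.val = P.p - 1
    · rw [h]; exact h2
    · have := key (i.val - P.s) (by omega)
      rwa [show P.s + (i.val - P.s) = i.val by omega] at this
  rwa [ZMod.natCast_zmod_val] at this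

/-- squares propagate over upper points -/
theorem sq_high {T : HBT G} {x c d y : G} (H : HB P T x) (S : Spl T x c d)
    (h1 : (y * ws T x) ^ 2 = 1) (h2 : (y * wm1 T x) ^ 2 = 1) (h3 : Commute d y)
    (i : ZMod P.p) (hi : P.s ≤ i.val) : (y * fam T x (some i)) ^ 2 = 1 := by
  have s2 := P.hs2
  rw [H.ws_eq] at h1
  rw [H.wm1_eq] at h2
  have key : ∀ m : ℕ, P.s + m < P.p - 1 → (y * fam T x (some ((P.s + m : ℕ) : ZMod P.p))) ^ 2 = 1 := by
    intro m
    induction m with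
    | zero => intro _; simpa using h1
    | succ m ih =>
      intro hm
      have e := S.act_d H (P.s + m) (by omega)
      have : cycN P.s (P.p - 1) (P.s + m) = P.s + (m + 1) := by unfold cycN; split_ifs <;> omega
      rw [this] at e
      exact SemiconjBy.sq_one h3 e (ih (by omega))
  have hlt := ZMod.val_lt i
  have : (y * fam T x (some (i.val : ZMod P.p))) ^ 2 = 1 := by
    by_cases h : i.val = P.p - 1
    · rw [h]; exact h2
    · have := key (i.val - P.s) (by omega)
      rwa [show P.s + (i.val - P.s) = i.val by omega] at this
  rwa [ZMod.natCast_zmod_val] at this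

theorem d1A (D : Gens G k) : D.d1 ∈ D.A := by simp [A]
theorem d2B (D : Gens G k) : D.d2 ∈ D.B := by simp [B]

theorem sq_fam {T : HBT G} {x y : G} (H : HB P T x) (ha : Commute T.a y) (ht : Commute T.t y)
    (h : (y * x) ^ 2 = 1) (i : Option (ZMod P.p)) : (y * fam T x i) ^ 2 = 1 := by
  rcases i with _ | i
  · exact h
  · have h0 : (y * fam T x (some (0 : ZMod P.p))) ^ 2 = 1 :=
      SemiconjBy.sq_one ht (H.act_t none) h
    have := H.act_az i.val 0
    simp only [Int.cast_natCast, ZMod.natCast_zmod_val, zero_add] at this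
    exact SemiconjBy.sq_one (ha.zpow_left _) this h0

theorem car (R : D.Rel P) : Car (D.Y P) := by
  have hc1 := R.B1.H.car
  have hc2 := R.B2.H.car
  -- upper with upper
  have hhh : ∀ i : ZMod P.p, P.s ≤ i.val → ∀ j : ZMod P.p, P.s ≤ j.val →
      (fam D.T1 D.x (some i) * fam D.T2 D.x (some j)) ^ 2 = 1 := by
    intro i hi j hj
    have c21 : ∀ i : ZMod P.p, P.s ≤ i.val → Commute D.d2 (fam D.T1 D.x (some i)) := fun i hi =>
      comm_high R.B1.H R.S1 (R.cB _ (d2B D)) i hi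
    have hA := R.cA _ (d1A D)
    refine sq_high R.B2.H R.S2 ?_ ?_ (c21 i hi) j hj
    · exact sq_one_swap (sq_high R.B1.H R.S1 (sq_one_swap R.ss) (sq_one_swap R.ms) hA.1 i hi)
    · exact sq_one_swap (sq_high R.B1.H R.S1 (sq_one_swap R.sm) (sq_one_swap R.mm) hA.2.1 i hi)
  have h12 : ∀ (i : Option (ZMod P.p)) (j : ZMod P.p), P.s ≤ j.val →
      (fam D.T1 D.x i * fam D.T2 D.x (some j)) ^ 2 = 1 := by
    rintro (_ | i) j hj
    · exact hc2.sq none (some j) (by simp)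
    · by_cases hi : i.val < P.s
      · rw [← R.X_low' i hi]
        exact hc2.sq _ _ (by rintro h; rw [Option.some_inj] at h; subst h; omega)
      · exact hhh i (by omega) j hj
  have h1e : ∀ (i : Option (ZMod P.p)) (j : Fin k), (D.e j * fam D.T1 D.x i) ^ 2 = 1 := fun i j =>
    sq_fam R.B1.H (R.cE j _ (by simp [A, HBT.gens])) (R.cE j _ (by simp [A, HBT.gens])) (R.ex j) i
  have h2e : ∀ (i : Option (ZMod P.p)) (j : Fin k), (D.e j * fam D.T2 D.x i) ^ 2 = 1 := fun i j =>
    sq_fam R.B2.H (R.cE j _ (by simp [B, HBT.gens])) (R.cE j _ (by simp [B, HBT.gens])) (R.ex j) i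
  constructor
  · rintro (i | i | i)
    · exact hc1.cube i
    · exact hc2.cube (some i.1)
    · exact R.e3 i
  · rintro (i | i | i) (j | j | j) hij
    · exact hc1.sq i j (fun h => hij (by rw [h]))
    · exact h12 i j.1 j.2
    · exact sq_one_swap (h1e i j)
    · exact sq_one_swap (h12 j i.1 i.2)
    · exact hc2.sq (some i.1) (some j.1) (fun h => hij (by rw [Subtype.ext (Option.some_inj.1 h)]))
    · exact sq_one_swap (h2e (some i.1) j)
    · exact h1e j i
    · exact h2e (some j.1) i
    · exact R.ee i j (fun h => hij (by rw [h]))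

theorem range3 (R : D.Rel P) : Set.range (fam (p := P.p) D.T3 D.x) = Set.range (fam (p := P.p) D.T1 D.x) := by
  refine R.B1.H.link R.B3.H R.t3 (rho3 P) ?_ (rho3_orbit P)
  intro i
  rw [R.a3]
  have h1 := R.B1.H.act_a (some i)
  exact (R.S1.Act_c R.B1.H _).mul_left h1

theorem range1_sub (D : Gens G k) : Set.range (fam (p := P.p) D.T1 D.x) ⊆ Set.range (D.Y P) := by
  rintro _ ⟨i, rfl⟩; exact ⟨.inl i, rfl⟩

theorem range2_sub (R : D.Rel P) : Set.range (fam (p := P.p) D.T2 D.x) ⊆ Set.range (D.Y P) := by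
  rintro _ ⟨_ | i, rfl⟩
  · exact ⟨.inl none, rfl⟩
  · by_cases hi : i.val < P.s
    · rw [R.X_low' i hi]; exact ⟨.inl (some i), rfl⟩
    · exact ⟨.inr (.inl ⟨i, by omega⟩), rfl⟩

theorem conj_of_comm {g y : G} (h : Commute g y) : g * y * g⁻¹ = y := by
  rw [h.eq, mul_inv_cancel_right]

theorem nrm1 (R : D.Rel P) {γ : G} (h1 : Nrm γ (Set.range (fam (p := P.p) D.T1 D.x)))
    (h2 : ∀ i : ZMod P.p, P.s ≤ i.val → Commute γ (fam D.T2 D.x (some i)))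
    (h3 : ∀ j, Commute γ (D.e j)) : Nrm γ (Set.range (D.Y P)) := by
  rintro _ ⟨i | i | i, rfl⟩
  · exact range1_sub D (h1 _ ⟨i, rfl⟩)
  · exact ⟨.inr (.inl i), (conj_of_comm (h2 i.1 i.2)).symm⟩
  · exact ⟨.inr (.inr i), (conj_of_comm (h3 i)).symm⟩

theorem nrm2 (R : D.Rel P) {γ : G} (h1 : Nrm γ (Set.range (fam (p := P.p) D.T2 D.x)))
    (h2 : ∀ i : ZMod P.p, P.s ≤ i.val → Commute γ (fam D.T1 D.x (some i)))
    (h3 : ∀ j, Commute γ (D.e j)) : Nrm γ (Set.range (D.Y P)) := by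
  rintro _ ⟨(_ | i) | i | i, rfl⟩
  · exact R.range2_sub (h1 _ ⟨none, rfl⟩)
  · by_cases hi : i.val < P.s
    · have := R.range2_sub (h1 _ ⟨some i, rfl⟩)
      rwa [R.X_low' i hi] at this
    · exact ⟨.inl (some i), (conj_of_comm (h2 i (by omega))).symm⟩
  · exact R.range2_sub (h1 _ ⟨some i.1, rfl⟩)
  · exact ⟨.inr (.inr i), (conj_of_comm (h3 i)).symm⟩

theorem nrmA (R : D.Rel P) : ∀ γ ∈ D.A, Nrm γ (Set.range (D.Y P)) := by
  intro γ hγ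
  refine R.nrm1 ?_ (comm_high R.B2.H R.S2 (R.cA γ hγ)) (fun j => R.cE j γ (by simp [hγ]))
  rw [A, List.mem_append, List.mem_append] at hγ
  rcases hγ with (h | h) | h
  · exact R.B1.nrm γ h
  · rw [← R.range3]; exact R.B3.nrm γ h
  · rw [List.mem_singleton.1 h]; exact (R.S1.Act_d R.B1.H).nrm

theorem nrmB (R : D.Rel P) : ∀ γ ∈ D.B, Nrm γ (Set.range (D.Y P)) := by
  intro γ hγ
  refine R.nrm2 ?_ (comm_high R.B1.H R.S1 (R.cB γ hγ)) (fun j => R.cE j γ (by simp [hγ]))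
  rw [B, List.mem_append] at hγ
  rcases hγ with h | h
  · exact R.B2.nrm γ h
  · rw [List.mem_singleton.1 h]; exact (R.S2.Act_d R.B2.H).nrm

theorem nrmc (R : D.Rel P) : Nrm D.c (Set.range (D.Y P)) := by
  refine R.nrm1 (R.S1.Act_c R.B1.H).nrm ?_ (fun j => R.cE j _ (by simp))
  intro i hi
  have := R.S2.comm_c R.B2.H i.val hi (ZMod.val_lt i)
  rwa [ZMod.natCast_zmod_val] at this

/-- If `x` dies then everything except the extra points dies. -/
theorem kill (R : D.Rel P) (hx : D.x = 1) : ∀ γ ∈ D.A ++ D.B ++ [D.c], γ = 1 := by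
  have k1 := R.B1.kill hx
  have k2 := R.B2.kill hx
  have k3 := R.B3.kill hx
  have a1 : D.T1.a = 1 := k1 _ (by simp [HBT.gens])
  have a2 : D.T2.a = 1 := k2 _ (by simp [HBT.gens])
  have a3 : D.T3.a = 1 := k3 _ (by simp [HBT.gens])
  have hc : D.c = 1 := by have := R.a3; simpa [a1, a3] using this.symm
  have hd1 : D.d1 = 1 := by
    have := R.S1.a; simpa [a1, hc, hx, cyc, ws1, wm1, wm2, ws, w0] using this.symm
  have hd2 : D.d2 = 1 := by
    have := R.S2.a; simpa [a2, hc, hx, cyc, ws1, wm1, wm2, ws, w0] using this.symm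
  intro γ hγ
  rw [List.mem_append, List.mem_append, A, B, List.mem_append, List.mem_append, List.mem_append (s := D.T2.gens ++ D.T2'.gens),
    List.mem_singleton, List.mem_singleton, List.mem_singleton] at hγ
  rcases hγ with (((h | h) | h) | (h | h)) | h
  · exact k1 γ h
  · exact k3 γ h
  · rw [h, hd1]
  · exact k2 γ h
  · rw [h, hd2]
  · rw [h, hc]

theorem closure_normal_of_nrm {S : Set G} (hS : S.Finite) {K : Set G} (hK : Subgroup.closure K = ⊤)
    (h : ∀ γ ∈ K, γ ∈ Subgroup.closure S ∨ Nrm γ S) :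
    (Subgroup.closure S).Normal := by
  have hle : ∀ γ ∈ K, ∀ y ∈ Subgroup.closure S, γ * y * γ⁻¹ ∈ Subgroup.closure S ∧
      γ⁻¹ * y * γ ∈ Subgroup.closure S := by
    intro γ hγ
    rcases h γ hγ with h | h
    · intro y hy
      exact ⟨mul_mem (mul_mem h hy) (inv_mem h), mul_mem (mul_mem (inv_mem h) hy) h⟩
    · have hmt : Set.MapsTo (fun y => γ * y * γ⁻¹) S S := h
      have hsurj : Set.SurjOn (fun y => γ * y * γ⁻¹) S S :=
        ((Set.Finite.injOn_iff_bijOn_of_mapsTo hS hmt).1 (fun a _ b _ hab => by simpa using hab)).surjOn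
      have h1 : Subgroup.closure S ≤ (Subgroup.closure S).comap (MulAut.conj γ).toMonoidHom := by
        rw [Subgroup.closure_le]
        intro z hz
        exact Subgroup.subset_closure (h z hz)
      have h2 : Subgroup.closure S ≤ (Subgroup.closure S).comap (MulAut.conj γ⁻¹).toMonoidHom := by
        rw [Subgroup.closure_le]
        intro z hz
        obtain ⟨y, hy, rfl⟩ := hsurj hz
        apply Subgroup.subset_closure
        simpa [mul_assoc] using hy
      intro y hy
      refine ⟨h1 hy, ?_⟩
      have := h2 hy
      simpa using this
  rw [← Subgroup.normalizer_eq_top_iff, eq_top_iff, ← hK, Subgroup.closure_le]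
  intro γ hγ
  rw [SetLike.mem_coe, Subgroup.mem_normalizer_iff]
  intro y
  refine ⟨fun hy => (hle γ hγ y hy).1, fun hy => ?_⟩
  have := (hle γ hγ _ hy).2
  simpa [mul_assoc] using this

/-- the list of all generators -/
def all (D : Gens G k) : Set G := {y | y ∈ D.A ++ D.B ++ [D.c] ∨ y = D.x ∨ ∃ j, D.e j = y}

theorem closure_Y (R : D.Rel P) (hK : Subgroup.closure (all D) = ⊤) :
    Subgroup.closure (Set.range (D.Y P)) = ⊤ := by
  haveI : NeZero P.p := ⟨P.hp.ne_zero⟩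
  have hN : (Subgroup.closure (Set.range (D.Y P))).Normal := by
    refine closure_normal_of_nrm (Set.finite_range _) hK ?_
    rintro γ (h | rfl | ⟨j, rfl⟩)
    · right
      rw [List.mem_append, List.mem_append] at h
      rcases h with (h | h) | h
      · exact R.nrmA γ h
      · exact R.nrmB γ h
      · rw [List.mem_singleton.1 h]; exact R.nrmc
    · left; exact Subgroup.subset_closure ⟨.inl none, rfl⟩
    · left; exact Subgroup.subset_closure ⟨.inr (.inr j), rfl⟩
  set N := Subgroup.closure (Set.range (D.Y P)) with hNd
  have hx : D.x ∈ N := Subgroup.subset_closure ⟨.inl none, rfl⟩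
  have R' := Rel.map (QuotientGroup.mk' N) R
  have hk := R'.kill (by exact (QuotientGroup.eq_one_iff _).2 hx)
  rw [eq_top_iff, ← hK, Subgroup.closure_le]
  rintro γ (h | rfl | ⟨j, rfl⟩)
  · have := hk (QuotientGroup.mk' N γ) (by
      rw [A_map, B_map]
      have : (QuotientGroup.mk' N) γ ∈ (D.A ++ D.B ++ [D.c]).map (QuotientGroup.mk' N) := List.mem_map_of_mem h
      simpa [Gens.map] using this)
    exact (QuotientGroup.eq_one_iff _).1 this
  · exact hx
  · exact Subgroup.subset_closure ⟨.inr (.inr j), rfl⟩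

end Rel
end Gens

/-- Extending permutations by one fixed point. -/
def oc {Z : Type*} : Perm Z →* Perm (Option Z) where
  toFun σ := optionCongr σ
  map_one' := by ext x; rcases x with _ | x <;> simp
  map_mul' σ τ := by ext x; rcases x with _ | x <;> simp

@[simp] theorem oc_some {Z : Type*} (σ : Perm Z) (i : Z) : oc σ (some i) = some (σ i) := rfl
@[simp] theorem oc_none {Z : Type*} (σ : Perm Z) : oc σ none = none := rfl

theorem oc_swap {Z : Type*} [DecidableEq Z] (i j : Z) : oc (swap i j) = swap (some i) (some j) := by
  ext1 q
  rcases q with _ | q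
  · rw [oc_none, swap_apply_of_ne_of_ne (by simp) (by simp)]
  · rw [oc_some, swap_apply_def, swap_apply_def]
    simp only [Option.some_inj]
    split_ifs <;> rfl

section base
variable (P : Par)

theorem four_ne : (4 : ZMod P.p) ≠ 0 := by
  have h : ((4 : ℕ) : ZMod P.p) ≠ 0 := by
    rw [Ne, ZMod.natCast_eq_zero_iff]
    intro h
    have := Nat.le_of_dvd (by norm_num) h
    have := P.hp5
    omega
  simpa using h

/-- scaling -/
def scal (c : ZMod P.p) (hc : c ≠ 0) : Perm (ZMod P.p) := Units.mulLeft (Units.mk0 c hc)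

@[simp] theorem scal_apply (c : ZMod P.p) (hc : c ≠ 0) (i : ZMod P.p) : scal P c hc i = c * i := rfl

theorem ft_ft (q : Option (ZMod P.p)) : ft (ft q) = q := by
  rcases q with _ | i
  · simp [ft]
  · by_cases h : i = 0
    · simp [ft, h]
    · simp [ft, h]

/-- translation -/
def pa : Perm (Option (ZMod P.p)) := oc (Equiv.addRight 1)
/-- inversion -/
def pt : Perm (Option (ZMod P.p)) := ⟨ft, ft, ft_ft P, ft_ft P⟩
/-- multiplication by 4 -/
def ph : Perm (Option (ZMod P.p)) := oc (scal P 4 (four_ne P))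
/-- multiplication by `g²` -/
def pb : Perm (Option (ZMod P.p)) := oc (scal P ((P.g : ZMod P.p) ^ 2) (pow_ne_zero _ (HB.g_ne P)))

theorem pa_pow_some (n : ℕ) (i : ZMod P.p) : (pa P ^ n) (some i) = some (i + n) := by
  induction n with
  | zero => simp
  | succ n ih => rw [pow_succ', Perm.mul_apply, ih]; simp [pa, add_assoc]

theorem pa_pow_none (n : ℕ) : (pa P ^ n) none = none := by
  induction n with
  | zero => simp
  | succ n ih => rw [pow_succ', Perm.mul_apply, ih]; simp [pa]

theorem pa_some (i : ZMod P.p) : pa P (some i) = some (i + 1) := rfl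
theorem pa_none : pa P none = none := rfl
theorem ph_some (i : ZMod P.p) : ph P (some i) = some (4 * i) := rfl
theorem ph_none : ph P none = none := rfl
theorem pb_some (i : ZMod P.p) : pb P (some i) = some ((P.g : ZMod P.p) ^ 2 * i) := rfl
theorem pb_none : pb P none = none := rfl
theorem pt_none : pt P none = some 0 := rfl
theorem pt_zero : pt P (some 0) = none := by simp [pt, ft]
theorem pt_some {i : ZMod P.p} (h : i ≠ 0) : pt P (some i) = some (-i⁻¹) := by simp [pt, ft, h]

/-- the base half-block -/
def T0 : HBT (Perm (Option (ZMod P.p))) :=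
  ⟨pa P, pt P, ph P, pb P, pa P ^ P.g, pa P ^ P.gi, pa P ^ P.g2, pa P ^ P.s⟩

theorem b_tt : pt P * pt P = 1 := by
  ext1 q; exact ft_ft P q

theorem b_ta : (pt P * pa P) ^ 3 = 1 := by
  ext1 q
  simp only [pow_succ, pow_zero, one_mul, Perm.mul_apply, Perm.one_apply]
  rcases q with _ | i
  · simp [pa_none, pt_none, pa_some, pt_some, pt_zero]
  · by_cases h1 : i + 1 = 0
    · have : i = -1 := by linear_combination h1
      subst this
      simp [pa_none, pt_none, pa_some, pt_some, pt_zero]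
    · by_cases h2 : i = 0
      · subst h2; simp [pa_none, pt_none, pa_some, pt_some, pt_zero]
      · have e : -(i + 1)⁻¹ + 1 = i * (i + 1)⁻¹ := by field_simp; ring
        have e2 : i * (i + 1)⁻¹ ≠ 0 := mul_ne_zero h2 (inv_ne_zero h1)
        rw [pa_some, pt_some P h1, pa_some, e, pt_some P e2, pa_some]
        have e3 : -(i * (i + 1)⁻¹)⁻¹ + 1 = - i⁻¹ := by field_simp; ring
        rw [e3, pt_some P (by simpa using h2)]
        simp

theorem b_scal (c : ZMod P.p) (hc : c ≠ 0) (n : ℕ) (hn : (n : ZMod P.p) = c) :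
    oc (scal P c hc) * pa P * (oc (scal P c hc))⁻¹ = pa P ^ n := by
  rw [mul_inv_eq_iff_eq_mul]
  ext1 q
  rcases q with _ | i
  · simp [pa_none, pa_pow_none]
  · simp [pa_some, pa_pow_some, hn]; ring

theorem b_tscal (c : ZMod P.p) (hc : c ≠ 0) :
    pt P * oc (scal P c hc) * pt P * oc (scal P c hc) = 1 := by
  ext1 q
  simp only [Perm.mul_apply, Perm.one_apply]
  rcases q with _ | i
  · simp [pt_none, pt_zero]
  · by_cases h : i = 0
    · subst h; simp [pt_none, pt_zero]
    · have h1 : c * i ≠ 0 := mul_ne_zero hc h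
      rw [oc_some, scal_apply, pt_some P h1, oc_some, scal_apply, pt_some P (by simp [hc, h])]
      congr 1; field_simp

/-- the key Möbius identity -/
theorem b_mob (c d e : ZMod P.p) (hc : c ≠ 0) (hcd : c * d = 1) (he : e = c ^ 2) (he0 : e ≠ 0) :
    oc (scal P e he0) = oc (Equiv.addRight c) * pt P * oc (Equiv.addRight d) * pt P * oc (Equiv.addRight c) * pt P := by
  subst he
  have hd : d = c⁻¹ := by field_simp; linear_combination hcd
  subst hd
  ext1 q
  simp only [Perm.mul_apply]
  rcases q with _ | i
  · simp [pt_none, pt_zero, pt_some P hc]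
  · by_cases h : i = 0
    · subst h
      simp [pt_none, pt_zero, pt_some P (inv_ne_zero hc)]
    · rw [pt_some P h, oc_some, oc_some, scal_apply]
      simp only [coe_addRight]
      by_cases h2 : c * i - 1 = 0
      · have e : -i⁻¹ + c = 0 := by field_simp; linear_combination h2
        rw [e, pt_zero, oc_none, pt_none, oc_some]
        simp only [coe_addRight]
        congr 1; linear_combination c * h2
      · have e : -i⁻¹ + c = (c * i - 1) * i⁻¹ := by field_simp; ring
        have e0 : (c * i - 1) * i⁻¹ ≠ 0 := mul_ne_zero h2 (inv_ne_zero h)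
        have e1 : -((c * i - 1) * i⁻¹)⁻¹ + c⁻¹ = - (c * (c * i - 1))⁻¹ := by
          field_simp; ring
        rw [e, pt_some P e0, oc_some, coe_addRight]
        simp only [e1]
        rw [pt_some P (by simp [hc, h2]), oc_some, coe_addRight]
        congr 1
        simp only [inv_neg, neg_neg, inv_inv]; ring

theorem pa_pow_eq (n : ℕ) : pa P ^ n = oc (Equiv.addRight (n : ZMod P.p)) := by
  ext1 q
  rcases q with _ | i
  · rw [pa_pow_none]; rfl
  · rw [pa_pow_some]; rfl

theorem b_heq : ph P = pa P ^ 2 * pt P * ((ph P)⁻¹ * pa P ^ 2 * ph P) * pt P * pa P ^ 2 * pt P := by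
  have h4 := four_ne P
  have h2 : (2 : ZMod P.p) ≠ 0 := by
    intro h; apply h4; linear_combination 2 * h
  have e : (ph P)⁻¹ * pa P ^ 2 * ph P = oc (Equiv.addRight (2⁻¹ : ZMod P.p)) := by
    rw [mul_assoc, inv_mul_eq_iff_eq_mul]
    ext1 q
    rcases q with _ | i
    · simp [ph_none, pa_pow_none]
    · simp only [Perm.mul_apply, ph_some, pa_pow_some, oc_some, coe_addRight]
      congr 1
      field_simp
      push_cast
      ring
  rw [e, pa_pow_eq]
  exact b_mob P _ _ _ (by simpa using h2) (by push_cast; exact mul_inv_cancel₀ h2) (by push_cast; norm_num) _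

theorem b_beq : pb P = pa P ^ P.g * pt P * pa P ^ P.gi * pt P * pa P ^ P.g * pt P := by
  simp only [pa_pow_eq]
  exact b_mob P _ _ _ (HB.g_ne P) P.hgi rfl _

theorem b_ap : pa P ^ P.p = 1 := by
  rw [pa_pow_eq, CharP.cast_eq_zero]
  ext1 q; rcases q with _ | i <;> simp

end base

section emb
variable {Q Ω : Type*} [DecidableEq Ω] [DecidableEq Q]

/-- Extend by an embedding. -/
noncomputable def VV (L : Q ↪ Ω) : Perm Q →* Perm (Option (Option Ω)) := io.comp (Perm.viaEmbeddingHom L)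

theorem VV_def (L : Q ↪ Ω) (σ : Perm Q) : VV L σ = io (σ.viaEmbedding L) := rfl

theorem VV_sc (L : Q ↪ Ω) (σ : Perm Q) (q : Q) : VV L σ * xh (L q) * (VV L σ)⁻¹ = xh (L (σ q)) := by
  rw [VV_def, io_conj, Perm.viaEmbedding_apply]

theorem VV_comm (L : Q ↪ Ω) (σ : Perm Q) {q : Q} (h : σ q = q) : Commute (VV L σ) (xh (L q)) := by
  have := VV_sc L σ q
  rw [h, mul_inv_eq_iff_eq_mul] at this
  exact this

theorem VV_comm' (L : Q ↪ Ω) (σ : Perm Q) {ω : Ω} (h : ω ∉ Set.range L) : Commute (VV L σ) (xh ω) := by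
  have := io_conj (σ.viaEmbedding L) ω
  rw [Perm.viaEmbedding_apply_of_notMem _ _ _ h, mul_inv_eq_iff_eq_mul] at this
  exact this

theorem VV_disj (L M : Q ↪ Ω) (σ τ : Perm Q) (h : ∀ q, τ q = q ∨ M q ∉ Set.range L) :
    Commute (VV L σ) (VV M τ) := by
  have : Commute (σ.viaEmbedding L) (τ.viaEmbedding M) := by
    apply Perm.Disjoint.commute
    intro ω
    by_cases hM : ω ∈ Set.range M
    · obtain ⟨q, rfl⟩ := hM
      rcases h q with h | h
      · right; rw [Perm.viaEmbedding_apply, h]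
      · left; rw [Perm.viaEmbedding_apply_of_notMem _ _ _ h]
    · right; rw [Perm.viaEmbedding_apply_of_notMem _ _ _ hM]
  exact this.map io

theorem VV_congr (L M : Q ↪ Ω) (σ : Perm Q) (hl : ∀ q, σ q ≠ q → L q = M q) :
    VV L σ = VV M σ := by
  have key2 : ∀ (L M : Q ↪ Ω), (∀ q, σ q ≠ q → L q = M q) → ∀ q, σ.viaEmbedding L (L q) = σ.viaEmbedding M (L q) := by
    intro L M hl q
    rw [Perm.viaEmbedding_apply]
    by_cases hq : σ q = q
    · rw [hq]
      by_cases hm : L q ∈ Set.range M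
      · obtain ⟨r, hr⟩ := hm
        rw [← hr, Perm.viaEmbedding_apply]
        by_cases hr' : σ r = r
        · rw [hr']
        · have := hl r hr'
          rw [hr] at this
          have := L.injective this
          rw [this] at hr'
          exact absurd hq hr'
      · rw [Perm.viaEmbedding_apply_of_notMem _ _ _ hm]
    · rw [hl q hq, Perm.viaEmbedding_apply]
      exact hl _ (fun e => hq (σ.injective e))
  rw [VV_def, VV_def]
  congr 1
  ext1 ω
  by_cases hL : ω ∈ Set.range L
  · obtain ⟨q, rfl⟩ := hL
    exact key2 L M hl q
  · by_cases hM : ω ∈ Set.range M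
    · obtain ⟨q, rfl⟩ := hM
      exact (key2 M L (fun q hq => (hl q hq).symm) q).symm
    · rw [Perm.viaEmbedding_apply_of_notMem _ _ _ hL, Perm.viaEmbedding_apply_of_notMem _ _ _ hM]

theorem VV_trans (L : Q ↪ Ω) (μ : Perm Q) (σ : Perm Q) :
    VV (μ.toEmbedding.trans L) σ = VV L (μ * σ * μ⁻¹) := by
  rw [VV_def, VV_def]
  congr 1
  ext1 ω
  by_cases hL : ω ∈ Set.range L
  · obtain ⟨q, rfl⟩ := hL
    rw [Perm.viaEmbedding_apply]
    have : L q = (μ.toEmbedding.trans L) (μ⁻¹ q) := by simp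
    rw [this, Perm.viaEmbedding_apply]
    simp
  · rw [Perm.viaEmbedding_apply_of_notMem _ _ _ hL, Perm.viaEmbedding_apply_of_notMem]
    rintro ⟨q, rfl⟩
    exact hL ⟨μ q, rfl⟩

theorem VV_swap (L : Q ↪ Ω) (i j : Q) : io (swap (L i) (L j)) = VV L (swap i j) := by
  rw [VV_def]
  congr 1
  ext1 ω
  by_cases hL : ω ∈ Set.range L
  · obtain ⟨q, rfl⟩ := hL
    rw [Perm.viaEmbedding_apply, swap_apply_def, swap_apply_def]
    simp only [L.injective.eq_iff]
    split_ifs <;> rfl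
  · rw [Perm.viaEmbedding_apply_of_notMem _ _ _ hL, swap_apply_of_ne_of_ne]
    · rintro rfl; exact hL ⟨i, rfl⟩
    · rintro rfl; exact hL ⟨j, rfl⟩

theorem VV_cyc (L : Q ↪ Ω) {i j l : Q} (hab : i ≠ j) (hbc : j ≠ l) (hac : i ≠ l) :
    cyc (xh (L i)) (xh (L j)) (xh (L l)) = VV L (swap i j * swap j l) := by
  rw [cyc_xh (L.injective.ne hab) (L.injective.ne hbc) (L.injective.ne hac), map_mul, VV_swap, VV_swap, map_mul]

end emb

section half
variable (P : Par) {Ω : Type*} [DecidableEq Ω] (L : Option (ZMod P.p) ↪ Ω)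

/-- The half-block of an embedding. -/
noncomputable def TL : HBT (Perm (Option (Option Ω))) := (T0 P).map (VV L)

theorem TL_HB : HB P (TL P L) (xh (L none)) := by
  have ht : VV L (pt P) * xh (L none) * (VV L (pt P))⁻¹ = xh (L (some 0)) := by
    rw [VV_sc, pt_none]
  have comm : ∀ σ : Perm (Option (ZMod P.p)), σ none = none → xh (L none) * VV L σ = VV L σ * xh (L none) := by
    intro σ h
    exact (VV_comm L σ h).eq.symm
  have hba : pb P * pa P * (pb P)⁻¹ = pa P ^ P.g2 := b_scal P _ _ _ P.hg2
  have hha : ph P * pa P * (ph P)⁻¹ = pa P ^ 4 := b_scal P _ _ _ (by norm_num)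
  constructor <;> try dsimp only [TL, T0, HBT.map]
  · rw [← map_mul, b_tt, map_one]
  · rw [← map_mul, ← map_pow, b_ta, map_one]
  · rw [← map_inv, ← map_mul, ← map_mul, hha, map_pow]
  · rw [← map_inv, ← map_mul, ← map_mul, hba]
  · simp only [← map_mul]; rw [show pt P * ph P * pt P * ph P = 1 from b_tscal P _ _, map_one]
  · simp only [← map_mul]; rw [show pt P * pb P * pt P * pb P = 1 from b_tscal P _ _, map_one]
  · simp only [← map_mul, ← map_pow, ← map_inv]; rw [← b_heq]
  · simp only [← map_mul, ← map_pow, ← map_inv]; rw [← b_beq]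
  · exact xh_car.cube _
  · rw [ht]; exact xh_car.sq _ _ (L.injective.ne (by simp))
  · exact comm _ rfl
  · exact comm _ rfl
  · exact comm _ rfl
  · rw [← map_pow, b_ap, map_one]
  · rw [map_pow]
  · rw [map_pow]
  · rw [map_pow]
  · rw [map_pow]

theorem TL_fam (q : Option (ZMod P.p)) : fam (TL P L) (xh (L none)) q = xh (L q) := by
  rcases q with _ | i
  · rfl
  · dsimp only [fam, TL, T0, HBT.map]
    rw [VV_sc, pt_none, ← map_pow, VV_sc, pa_pow_some]
    simp

theorem TL_gens : ∀ γ ∈ (TL P L).gens, ∃ σ, γ = VV L σ := by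
  simp only [HBT.gens, TL, HBT.map, List.forall_mem_cons, List.not_mem_nil, false_imp_iff, implies_true, and_true]
  exact ⟨⟨_, rfl⟩, ⟨_, rfl⟩, ⟨_, rfl⟩, ⟨_, rfl⟩, ⟨_, rfl⟩, ⟨_, rfl⟩, ⟨_, rfl⟩, ⟨_, rfl⟩⟩

/-- linearization of a `p`-cycle -/
theorem exists_lin (ρ : Perm (ZMod P.p)) (ho : ∀ i, ∃ k : ℕ, (ρ ^ k) 0 = i) :
    ∃ μ : Perm (ZMod P.p), μ 0 = 0 ∧ μ * Equiv.addRight 1 * μ⁻¹ = ρ := by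
  have hc : ρ.IsCycleOn (Finset.univ : Finset (ZMod P.p)) := by
    refine ⟨by simp [Set.bijOn_univ, ρ.bijective], ?_⟩
    intro i _ j _
    obtain ⟨k, rfl⟩ := ho i
    obtain ⟨l, rfl⟩ := ho j
    exact ⟨(l : ℤ) - k, by rw [zpow_sub]; simp⟩
  have hp : ∀ i : ZMod P.p, (ρ ^ P.p) i = i := by
    intro i
    have := hc.pow_card_apply (Finset.mem_univ i)
    simpa using this
  have hmod : ∀ n : ℕ, (ρ ^ n) 0 = (ρ ^ (n % P.p)) 0 := by
    intro n
    have h1 : ρ ^ P.p = 1 := Equiv.ext hp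
    conv_lhs => rw [← Nat.div_add_mod n P.p, pow_add, pow_mul, h1]
    simp
  have hinj : Function.Injective (fun i : ZMod P.p => (ρ ^ i.val) 0) := by
    rw [Finite.injective_iff_surjective]
    intro i
    obtain ⟨k, rfl⟩ := ho i
    refine ⟨(k : ZMod P.p), ?_⟩
    simp only [ZMod.val_natCast]
    exact (hmod k).symm
  refine ⟨Equiv.ofBijective _ (Finite.injective_iff_bijective.1 hinj), by simp, ?_⟩
  rw [mul_inv_eq_iff_eq_mul]
  ext1 i
  simp only [Perm.mul_apply, ofBijective_apply, coe_addRight]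
  rw [← Perm.mul_apply, ← pow_succ', hmod (i.val + 1)]
  congr 2
  rw [ZMod.val_add, ZMod.val_one]

/-- chosen linearization of `rho` -/
theorem exists_blk (L : Option (ZMod P.p) ↪ Ω) : ∃ T' : HBT (Perm (Option (Option Ω))),
    Blk P (TL P L) T' (xh (L none)) ∧ ∀ γ ∈ T'.gens, ∃ σ, γ = VV L σ := by
  obtain ⟨μ, h0, hμ⟩ := exists_lin P (rho P) (rho_orbit P)
  set L' := (oc μ).toEmbedding.trans L with hL'
  have hn : L' none = L none := rfl
  have hz : L' (some 0) = L (some 0) := by simp [hL', h0]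
  have H := TL_HB P L
  have H' := TL_HB P L'
  rw [hn] at H'
  refine ⟨TL P L', ⟨H, H', ?_, ?_⟩, ?_⟩
  · rw [H.w0_eq, H.w1_eq, H.wg_eq, TL_fam, TL_fam, TL_fam,
      VV_cyc L (by simp) (by simpa using (g_ne_one P).symm) (by simpa using (HB.g_ne P).symm)]
    dsimp only [TL, T0, HBT.map]
    rw [← map_mul, hL', VV_trans, ← map_inv, pa, ← map_mul, ← map_mul, hμ, ← oc_swap, ← oc_swap, pb, ← map_mul, ← map_mul]
    rfl
  · have e := H'.w0_eq
    rw [e, H.w0_eq, TL_fam]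
    have := TL_fam P L' (some 0)
    rw [hn] at this
    rw [this, hz]
  · intro γ hγ
    obtain ⟨σ, rfl⟩ := TL_gens P L' γ hγ
    exact ⟨_, VV_trans _ _ _⟩

theorem add_split : (Equiv.addRight 1 : Perm (ZMod P.p)) = cp P * dp P *
    (swap ((P.s - 1 : ℕ) : ZMod P.p) ((P.p - 2 : ℕ) : ZMod P.p) * swap ((P.p - 2 : ℕ) : ZMod P.p) ((P.p - 1 : ℕ) : ZMod P.p)) := by
  have h1 := P.hs1
  have h2 := P.hs2
  have hv : ∀ n : ℕ, n < P.p → (Equiv.addRight 1 : Perm (ZMod P.p)) (n : ZMod P.p) = (cp P * dp P *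
    (swap ((P.s - 1 : ℕ) : ZMod P.p) ((P.p - 2 : ℕ) : ZMod P.p) * swap ((P.p - 2 : ℕ) : ZMod P.p) ((P.p - 1 : ℕ) : ZMod P.p))) (n : ZMod P.p) := by
    intro n hn
    have e0 : (Equiv.addRight 1 : Perm (ZMod P.p)) (n : ZMod P.p) = ((n + 1 : ℕ) : ZMod P.p) := by simp
    rw [e0]
    simp only [Perm.mul_apply]
    have key : ∃ m : ℕ, m < P.p ∧ (swap ((P.s - 1 : ℕ) : ZMod P.p) ((P.p - 2 : ℕ) : ZMod P.p))
        ((swap ((P.p - 2 : ℕ) : ZMod P.p) ((P.p - 1 : ℕ) : ZMod P.p)) (n : ZMod P.p)) = (m : ℕ) ∧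
        cycN 0 P.s (cycN P.s (P.p - 1) m) = if n + 1 = P.p then 0 else n + 1 := by
      by_cases a1 : n = P.p - 1
      · subst a1
        refine ⟨P.s - 1, by omega, by rw [swap_apply_right, swap_apply_right], ?_⟩
        unfold cycN; split_ifs <;> omega
      by_cases a2 : n = P.p - 2
      · subst a2
        refine ⟨P.p - 1, by omega, ?_, ?_⟩
        · rw [swap_apply_left, swap_apply_of_ne_of_ne] <;>
          · rw [Ne, natCast_inj (by omega) (by omega)]; omega
        · unfold cycN; split_ifs <;> omega
      by_cases a3 : n = P.s - 1
      · subst a3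
        refine ⟨P.p - 2, by omega, ?_, ?_⟩
        · rw [swap_apply_of_ne_of_ne (x := ((P.s - 1 : ℕ) : ZMod P.p)), swap_apply_left] <;>
          · rw [Ne, natCast_inj (by omega) (by omega)]; omega
        · unfold cycN; split_ifs <;> omega
      · refine ⟨n, hn, ?_, ?_⟩
        · rw [swap_apply_of_ne_of_ne (x := (n : ZMod P.p)), swap_apply_of_ne_of_ne] <;>
          · rw [Ne, natCast_inj (by omega) (by omega)]; omega
        · unfold cycN; split_ifs <;> omega
    obtain ⟨m, hm, he, hc⟩ := key
    rw [he, dp, cycP_cast P _ hm, cp, cycP_cast P _ (cycN_lt (by omega) hm), hc]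
    split_ifs with h
    · rw [h]; simp
    · rfl
  ext1 i
  have := hv i.val (ZMod.val_lt i)
  rwa [ZMod.natCast_zmod_val] at this

theorem cp_fix {n : ℕ} (hn : n < P.p) (h : P.s ≤ n) : cp P (n : ZMod P.p) = n := by
  rw [cp, cycP_cast P _ hn]; unfold cycN; split_ifs <;> first | rfl | omega

theorem dp_fix {n : ℕ} (hn : n < P.p) (h : n < P.s ∨ n = P.p - 1) : dp P (n : ZMod P.p) = n := by
  rw [dp, cycP_cast P _ hn]; unfold cycN; split_ifs <;> first | rfl | omega

theorem TL_Spl : Spl (TL P L) (xh (L none)) (VV L (oc (cp P))) (VV L (oc (dp P))) := by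
  have H := TL_HB P L
  have h1 := P.hs1
  have h2 := P.hs2
  constructor
  · refine Commute.map (Commute.map ?_ oc) (VV L)
    apply Perm.Disjoint.commute
    intro i
    have hi := ZMod.val_lt i
    rcases lt_or_ge i.val P.s with h | h
    · right; have := dp_fix P hi (Or.inl h); rwa [ZMod.natCast_zmod_val] at this
    · left; have := cp_fix P hi h; rwa [ZMod.natCast_zmod_val] at this
  · rw [H.ws1_eq, H.wm2_eq, H.wm1_eq, TL_fam, TL_fam, TL_fam]
    rw [VV_cyc L, ← oc_swap, ← oc_swap, ← map_mul, ← map_mul, ← map_mul, ← map_mul, ← map_mul, ← add_split]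
    · rfl
    all_goals
      rw [Ne, Option.some_inj, natCast_inj (by omega) (by omega)]; omega
  · rw [H.w0_eq, TL_fam]
    apply VV_comm
    have := dp_fix P (n := 0) (by omega) (Or.inl (by omega))
    rw [oc_some]; simpa using this
  · rw [H.ws_eq, TL_fam]
    apply VV_comm
    rw [oc_some, cp_fix P (by omega) le_rfl]
  · rw [H.wm1_eq, TL_fam]
    apply VV_comm
    rw [oc_some, cp_fix P (by omega) (by omega)]
  · rw [H.wm1_eq, TL_fam]
    apply VV_comm
    rw [oc_some, dp_fix P (by omega) (by omega)]
  · exact VV_comm _ _ rfl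
  · exact VV_comm _ _ rfl

end half

section model
variable (P : Par) (k : ℕ)

/-- first block -/
def L1 : Option (ZMod P.p) ↪ Pts P k := ⟨Sum.inl, Sum.inl_injective⟩

/-- second block, function -/
def L2f : Option (ZMod P.p) → Pts P k
  | none => .inl none
  | some i => if h : P.s ≤ i.val then .inr (.inl ⟨i, h⟩) else .inl (some i)

theorem L2f_high {i : ZMod P.p} (h : P.s ≤ i.val) : L2f P k (some i) = .inr (.inl ⟨i, h⟩) := by simp [L2f, h]
theorem L2f_low {i : ZMod P.p} (h : i.val < P.s) : L2f P k (some i) = .inl (some i) := by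
  simp [L2f, not_le.2 h]

/-- second block -/
def L2 : Option (ZMod P.p) ↪ Pts P k := ⟨L2f P k, by
  rintro (_ | i) (_ | j) h
  · rfl
  · rcases lt_or_ge j.val P.s with hj | hj
    · rw [L2f_low P k hj] at h; simp [L2f] at h
    · rw [L2f_high P k hj] at h; simp [L2f] at h
  · rcases lt_or_ge i.val P.s with hj | hj
    · rw [L2f_low P k hj] at h; simp [L2f] at h
    · rw [L2f_high P k hj] at h; simp [L2f] at h
  · rcases lt_or_ge i.val P.s with hi | hi <;> rcases lt_or_ge j.val P.s with hj | hj
    · rw [L2f_low P k hi, L2f_low P k hj] at h; simpa using h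
    · rw [L2f_low P k hi, L2f_high P k hj] at h; simp at h
    · rw [L2f_high P k hi, L2f_low P k hj] at h; simp at h
    · rw [L2f_high P k hi, L2f_high P k hj] at h; simpa using h⟩

theorem L2_high {i : ZMod P.p} (h : P.s ≤ i.val) : L2 P k (some i) = .inr (.inl ⟨i, h⟩) := L2f_high P k h
theorem L2_low {i : ZMod P.p} (h : i.val < P.s) : L2 P k (some i) = .inl (some i) := L2f_low P k h

theorem L2_high_nm {i : ZMod P.p} (h : P.s ≤ i.val) : L2 P k (some i) ∉ Set.range (L1 P k) := by
  rw [L2_high P k h]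
  rintro ⟨q, hq⟩
  simp [L1] at hq

theorem L1_high_nm {i : ZMod P.p} (h : P.s ≤ i.val) : L1 P k (some i) ∉ Set.range (L2 P k) := by
  rintro ⟨_ | j, hq⟩
  · have : (Sum.inl none : Pts P k) = Sum.inl (some i) := hq
    simp at this
  · rcases lt_or_ge j.val P.s with hj | hj
    · rw [L2_low P k hj] at hq
      simp only [L1, Function.Embedding.coeFn_mk, Sum.inl.injEq, Option.some_inj] at hq
      subst hq; omega
    · rw [L2_high P k hj] at hq
      simp [L1] at hq

theorem e_nm1 (j : Fin k) : (Sum.inr (Sum.inr j) : Pts P k) ∉ Set.range (L1 P k) := by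
  rintro ⟨q, hq⟩; simp [L1] at hq

theorem e_nm2 (j : Fin k) : (Sum.inr (Sum.inr j) : Pts P k) ∉ Set.range (L2 P k) := by
  rintro ⟨_ | i, hq⟩
  · have : (Sum.inl none : Pts P k) = Sum.inr (Sum.inr j) := hq
    simp at this
  · rcases lt_or_ge i.val P.s with hj | hj
    · rw [L2_low P k hj] at hq; simp at hq
    · rw [L2_high P k hj] at hq; simp at hq

theorem dp_cases (q : Option (ZMod P.p)) : oc (dp P) q = q ∨ ∃ i : ZMod P.p, q = some i ∧ P.s ≤ i.val := by
  rcases q with _ | i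
  · left; rfl
  · have hi := ZMod.val_lt i
    rcases lt_or_ge i.val P.s with h | h
    · left; have := dp_fix P hi (Or.inl h); rw [ZMod.natCast_zmod_val] at this; rw [oc_some, this]
    · right; exact ⟨i, rfl, h⟩

theorem s_val : ((P.s : ℕ) : ZMod P.p).val = P.s := ZMod.val_natCast_of_lt (by have := P.hs2; omega)
theorem m1_val : ((P.p - 1 : ℕ) : ZMod P.p).val = P.p - 1 := ZMod.val_natCast_of_lt (by have := P.hs2; omega)

/-- The relations hold in the symmetric group. -/
theorem exists_model : ∃ D : Gens (Perm (Option (Option (Pts P k)))) k, D.Rel P ∧ ∀ ω, D.Y P ω = xh ω := by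
  have hs2 := P.hs2
  have hs1 := P.hs1
  obtain ⟨T1', B1, g1⟩ := exists_blk P (L1 P k)
  obtain ⟨T2', B2, g2⟩ := exists_blk P (L2 P k)
  obtain ⟨μ, h0, hμ⟩ := exists_lin P (rho3 P) (rho3_orbit P)
  set L3 := (oc μ).toEmbedding.trans (L1 P k) with hL3
  obtain ⟨T3', B3, g3⟩ := exists_blk P L3
  have H1 := B1.H
  have H2 := B2.H
  have H3 := B3.H
  have f1 := TL_fam P (L1 P k)
  have f2 := TL_fam P (L2 P k)
  have f3 := TL_fam P L3
  have g13 : ∀ γ, (∃ σ, γ = VV L3 σ) → ∃ σ, γ = VV (L1 P k) σ := by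
    rintro γ ⟨σ, rfl⟩; exact ⟨_, VV_trans _ _ _⟩
  have hc : VV (L1 P k) (oc (cp P)) = VV (L2 P k) (oc (cp P)) := by
    apply VV_congr
    rintro (_ | i) hi
    · rfl
    · rcases lt_or_ge i.val P.s with h | h
      · rw [L2_low P k h]; rfl
      · have := cp_fix P (ZMod.val_lt i) h
        rw [ZMod.natCast_zmod_val] at this
        exact absurd (by rw [oc_some, this]) hi
  have n3 : L3 none = L1 P k none := rfl
  have n2 : L2 P k none = L1 P k none := rfl
  have z3 : L3 (some 0) = L1 P k (some 0) := by simp [hL3, h0]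
  have z2 : L2 P k (some 0) = L1 P k (some 0) := L2_low P k (by rw [ZMod.val_zero]; omega)
  rw [n3] at B3 H3 f3
  rw [n2] at B2 H2 f2
  have S1 := TL_Spl P (L1 P k)
  have S2 := TL_Spl P (L2 P k)
  rw [n2, ← hc] at S2
  let D : Gens (Perm (Option (Option (Pts P k)))) k :=
    ⟨TL P (L1 P k), T1', TL P L3, T3', TL P (L2 P k), T2', VV (L1 P k) (oc (cp P)), VV (L1 P k) (oc (dp P)),
      VV (L2 P k) (oc (dp P)), xh (L1 P k none), fun j => xh (.inr (.inr j))⟩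
  have hA : ∀ γ ∈ D.A, ∃ σ, γ = VV (L1 P k) σ := by
    intro γ hγ
    rw [Gens.A, List.mem_append, List.mem_append, List.mem_append, List.mem_append, List.mem_singleton] at hγ
    rcases hγ with ((h | h) | (h | h)) | h
    · exact TL_gens P _ γ h
    · exact g1 γ h
    · exact g13 γ (TL_gens P _ γ h)
    · exact g13 γ (g3 γ h)
    · exact ⟨_, h⟩
  have hB : ∀ γ ∈ D.B, ∃ σ, γ = VV (L2 P k) σ := by
    intro γ hγ
    rw [Gens.B, List.mem_append, List.mem_append, List.mem_singleton] at hγ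
    rcases hγ with (h | h) | h
    · exact TL_gens P _ γ h
    · exact g2 γ h
    · exact ⟨_, h⟩
  have s1e : ws D.T1 D.x = xh (L1 P k (some P.s)) := by rw [← f1]; exact H1.ws_eq
  have s2e : ws D.T2 D.x = xh (L2 P k (some P.s)) := by rw [← f2]; exact H2.ws_eq
  have m1e : wm1 D.T1 D.x = xh (L1 P k (some ((P.p - 1 : ℕ) : ZMod P.p))) := by rw [← f1]; exact H1.wm1_eq
  have m2e : wm1 D.T2 D.x = xh (L2 P k (some ((P.p - 1 : ℕ) : ZMod P.p))) := by rw [← f2]; exact H2.wm1_eq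
  have hne : ∀ q : Option (ZMod P.p), ∀ i : ZMod P.p, P.s ≤ i.val → L1 P k q ≠ L2 P k (some i) := by
    intro q i hi h
    exact L2_high_nm P k hi ⟨q, h⟩
  have sv := s_val P
  have mv := m1_val P
  have mle : P.s ≤ ((P.p - 1 : ℕ) : ZMod P.p).val := by omega
  refine ⟨D, ⟨B1, B3, B2, S1, S2, ?_, ?_, ?_, ?_, ?_, ?_, ?_, ?_, ?_, ?_, ?_, ?_, ?_⟩, ?_⟩
  · change VV L3 (pa P) = VV (L1 P k) (oc (cp P)) * VV (L1 P k) (pa P)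
    rw [hL3, VV_trans, ← map_mul, pa, ← map_inv, ← map_mul, ← map_mul, hμ, ← map_mul]
    rfl
  · have e3 : w0 D.T3 D.x = _ := H3.w0_eq
    have e1 : w0 D.T1 D.x = _ := H1.w0_eq
    rw [e3, e1, f3, f1, z3]
  · have e3 : w0 D.T2 D.x = _ := H2.w0_eq
    have e1 : w0 D.T1 D.x = _ := H1.w0_eq
    rw [e3, e1, f2, f1, z2]
  · intro γ hγ
    obtain ⟨σ, rfl⟩ := hA γ hγ
    rw [s2e, m2e]
    refine ⟨VV_comm' _ _ (L2_high_nm P k sv.ge), VV_comm' _ _ (L2_high_nm P k mle), VV_disj _ _ _ _ fun q => ?_⟩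
    rcases dp_cases P q with h | ⟨i, rfl, h⟩
    · exact Or.inl h
    · exact Or.inr (L2_high_nm P k h)
  · intro γ hγ
    obtain ⟨σ, rfl⟩ := hB γ hγ
    rw [s1e, m1e]
    refine ⟨VV_comm' _ _ (L1_high_nm P k sv.ge), VV_comm' _ _ (L1_high_nm P k mle), VV_disj _ _ _ _ fun q => ?_⟩
    rcases dp_cases P q with h | ⟨i, rfl, h⟩
    · exact Or.inl h
    · exact Or.inr (L1_high_nm P k h)
  · rw [s1e, s2e]; exact xh_car.sq _ _ (hne _ _ sv.ge)
  · rw [s1e, m2e]; exact xh_car.sq _ _ (hne _ _ mle)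
  · rw [m1e, s2e]; exact xh_car.sq _ _ (hne _ _ sv.ge)
  · rw [m1e, m2e]; exact xh_car.sq _ _ (hne _ _ mle)
  · intro i; exact xh_car.cube _
  · intro i; exact xh_car.sq _ _ (by simp [L1])
  · intro i j h; exact xh_car.sq _ _ (by simpa using h.symm)
  · intro i γ hγ
    rw [List.mem_append, List.mem_append, List.mem_singleton] at hγ
    rcases hγ with (h | h) | h
    · obtain ⟨σ, rfl⟩ := hA γ h
      exact VV_comm' _ _ (e_nm1 P k i)
    · obtain ⟨σ, rfl⟩ := hB γ h
      exact VV_comm' _ _ (e_nm2 P k i)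
    · rw [h]; exact VV_comm' _ _ (e_nm1 P k i)
  · rintro (q | i | j)
    · exact f1 q
    · have := f2 (some i.1)
      rw [L2_high P k i.2] at this
      exact this
    · rfl

end model

theorem norm_map_le {α β : Type*} [DecidableEq α] [DecidableEq β] (f : α → β) (w : FreeGroup α) :
    (FreeGroup.map f w).norm ≤ w.norm := by
  conv_lhs => rw [← FreeGroup.mk_toWord (x := w), FreeGroup.map.mk]
  refine FreeGroup.norm_mk_le.trans ?_
  simp [FreeGroup.norm]

theorem sum_toFinset_le {α : Type*} [DecidableEq α] (f : α → ℕ) (l : List α) :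
    ∑ w ∈ l.toFinset, f w ≤ (l.map f).sum := by
  induction l with
  | nil => simp
  | cons a l ih =>
    rw [List.toFinset_cons, List.map_cons, List.sum_cons]
    by_cases h : a ∈ l.toFinset
    · rw [Finset.insert_eq_of_mem h]; omega
    · rw [Finset.sum_insert h]; omega

/-- A presentation with arbitrary finite generating type and list of relators. -/
theorem HasBoundedPresentation.of_list {G : Type} [Group G] {ι : Type*} [Fintype ι] [DecidableEq ι]
    (π : FreeGroup ι →* G) (R : List (FreeGroup ι)) (hs : Function.Surjective π)
    (hk : π.ker = Subgroup.normalClosure {w | w ∈ R}) {g r : ℕ} {L : ℝ} (hg : Fintype.card ι ≤ g)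
    (hr : R.length ≤ r) (hL : ((Fintype.card ι + (R.map FreeGroup.norm).sum : ℕ) : ℝ) ≤ L) :
    HasBoundedPresentation G g r L := by
  classical
  let e := Fintype.equivFin ι
  let E := FreeGroup.freeGroupCongr e
  refine ⟨Fintype.card ι, π.comp E.symm.toMonoidHom, (R.map E).toFinset, hg, ?_, ?_, ?_, ?_⟩
  · exact hs.comp E.symm.surjective
  · exact (List.toFinset_card_le _).trans (by simpa using hr)
  · have h1 : (π.comp E.symm.toMonoidHom).ker = π.ker.map E.toMonoidHom := by
      rw [← MonoidHom.comap_ker]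
      exact (Subgroup.map_equiv_eq_comap_symm' E π.ker).symm
    have h2 := Subgroup.map_normalClosure {w | w ∈ R} E.toMonoidHom E.surjective
    rw [h1, hk, h2]
    congr 1
    ext w
    simp
  · refine le_trans ?_ hL
    have h1 := sum_toFinset_le FreeGroup.norm (R.map E)
    have h2 : ((R.map E).map FreeGroup.norm).sum ≤ (R.map FreeGroup.norm).sum := by
      rw [List.map_map]
      apply List.sum_le_sum
      intro w _
      exact norm_map_le e w
    exact_mod_cast Nat.add_le_add_left (h1.trans h2) _

theorem HasBoundedPresentation.mono {G : Type} [Group G] {g r g' r' : ℕ} {L L' : ℝ}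
    (h : HasBoundedPresentation G g r L) (hg : g ≤ g') (hr : r ≤ r') (hL : L ≤ L') :
    HasBoundedPresentation G g' r' L' := by
  obtain ⟨m, π, R, h1, h2, h3, h4, h5⟩ := h
  exact ⟨m, π, R, h1.trans hg, h2, h3.trans hr, h4, h5.trans hL⟩

theorem HasBoundedPresentation.congr {G H : Type} [Group G] [Group H] (e : G ≃* H) {g r : ℕ} {L : ℝ}
    (h : HasBoundedPresentation G g r L) : HasBoundedPresentation H g r L := by
  obtain ⟨m, π, R, h1, h2, h3, h4, h5⟩ := h
  refine ⟨m, e.toMonoidHom.comp π, R, h1, e.surjective.comp h2, h3, ?_, h5⟩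
  rw [← h4]
  ext w
  simp [MonoidHom.mem_ker]

/-- generator type -/
abbrev GI (k : ℕ) : Type := (Fin 6 × Fin 8) ⊕ (Fin 4 ⊕ Fin k)

/-- half-block from a function -/
def hbt {G : Type*} (f : Fin 8 → G) : HBT G := ⟨f 0, f 1, f 2, f 3, f 4, f 5, f 6, f 7⟩

/-- function from a half-block -/
def HBT.fn {G : Type*} (T : HBT G) : Fin 8 → G := ![T.a, T.t, T.h, T.b, T.u, T.v, T.w, T.r]

/-- generators from a function -/
def gmk {G : Type*} {k : ℕ} (f : GI k → G) : Gens G k :=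
  ⟨hbt fun j => f (.inl (0, j)), hbt fun j => f (.inl (1, j)), hbt fun j => f (.inl (2, j)),
   hbt fun j => f (.inl (3, j)), hbt fun j => f (.inl (4, j)), hbt fun j => f (.inl (5, j)),
   f (.inr (.inl 0)), f (.inr (.inl 1)), f (.inr (.inl 2)), f (.inr (.inl 3)), fun j => f (.inr (.inr j))⟩

/-- function from generators -/
def Gens.fn {G : Type*} {k : ℕ} (D : Gens G k) : GI k → G
  | .inl (i, j) => ((![D.T1, D.T1', D.T3, D.T3', D.T2, D.T2'] : Fin 6 → HBT G) i).fn j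
  | .inr (.inl i) => (![D.c, D.d1, D.d2, D.x] : Fin 4 → G) i
  | .inr (.inr j) => D.e j

theorem gmk_fn {G : Type*} {k : ℕ} (D : Gens G k) : gmk D.fn = D := rfl

theorem gmk_map {G H : Type*} {k : ℕ} (f : GI k → G) (φ : G → H) : (gmk f).map φ = gmk (φ ∘ f) := rfl

theorem gmk_all {G : Type*} [Group G] {k : ℕ} (f : GI k → G) : Set.range f ⊆ Gens.Rel.all (gmk f) := by
  rintro _ ⟨⟨i, j⟩ | i | j, rfl⟩
  · left
    fin_cases i <;> fin_cases j <;> simp [Gens.A, Gens.B, gmk, hbt, HBT.gens]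
  · fin_cases i
    · left; simp [gmk]
    · left; simp [Gens.A, gmk]
    · left; simp [Gens.B, gmk]
    · right; left; simp [gmk]
  · right; right; exact ⟨j, rfl⟩

theorem fam_map {G H : Type*} [Group G] [Group H] (f : G →* H) {p : ℕ} (T : HBT G) (x : G) (i : Option (ZMod p)) :
    fam (T.map f) (f x) i = f (fam T x i) := by
  rcases i with _ | i
  · rfl
  · simp [fam, HBT.map]

theorem Y_map {G H : Type*} [Group G] [Group H] (f : G →* H) {k : ℕ} (P : Par) (D : Gens G k) (ω : Pts P k) :
    (D.map f).Y P ω = f (D.Y P ω) := by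
  rcases ω with i | i | i
  · exact fam_map f D.T1 D.x i
  · exact fam_map f D.T2 D.x (some i.1)
  · rfl

/-- free generators -/
def gF (k : ℕ) : Gens (FreeGroup (GI k)) k := gmk FreeGroup.of

/-- The relators. -/
def relL (P : Par) (k q : ℕ) : List (FreeGroup (GI k)) := (gF k).fixedRel ++ (gF k).powRel P q

theorem pres_alt (P : Par) (k : ℕ) {q : ℕ} (hq : P.p < 4 ^ q) :
    ∃ π : FreeGroup (GI k) →* alternatingGroup (Option (Option (Pts P k))), Function.Surjective π ∧
      π.ker = Subgroup.normalClosure {w | w ∈ relL P k q} := by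
  set N := Subgroup.normalClosure {w | w ∈ relL P k q} with hN
  let mk := QuotientGroup.mk' N
  have R : ((gF k).map mk).Rel P := by
    rw [Gens.rel_iff P hq, Gens.fixedRel_map, Gens.powRel_map]
    simp only [List.forall_mem_map]
    constructor <;> intro y hy <;> refine (QuotientGroup.eq_one_iff y).2 (Subgroup.subset_normalClosure ?_)
    · exact List.mem_append_left _ hy
    · exact List.mem_append_right _ hy
  have hall : Subgroup.closure (Gens.Rel.all ((gF k).map mk)) = ⊤ := by
    rw [eq_top_iff]
    have h1 : Subgroup.closure (Set.range (mk ∘ FreeGroup.of)) = ⊤ := by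
      rw [Set.range_comp, ← MonoidHom.map_closure, FreeGroup.closure_range_of]
      rw [← MonoidHom.range_eq_map]
      exact MonoidHom.range_eq_top.2 (QuotientGroup.mk'_surjective N)
    rw [← h1]
    apply Subgroup.closure_mono
    exact gmk_all _
  have hY := R.closure_Y hall
  obtain ⟨Φ, hΦ⟩ := R.car.exists_hom
  have hsurj : Function.Surjective Φ := by
    rw [← MonoidHom.range_eq_top, eq_top_iff, ← hY, Subgroup.closure_le]
    rintro _ ⟨ω, rfl⟩
    exact ⟨xa ω, hΦ ω⟩
  obtain ⟨D, hD, hDY⟩ := exists_model P k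
  have hDm : (gF k).map (FreeGroup.lift D.fn) = D := by
    rw [gF, gmk_map]
    have : (FreeGroup.lift D.fn : FreeGroup (GI k) → _) ∘ FreeGroup.of = D.fn := by
      ext1 i; simp
    rw [this, gmk_fn]
  have hker : N ≤ (FreeGroup.lift D.fn).ker := by
    rw [hN]
    apply Subgroup.normalClosure_le_normal
    have hr := (Gens.rel_iff P hq D).1 hD
    rw [← hDm, Gens.fixedRel_map, Gens.powRel_map] at hr
    simp only [List.forall_mem_map] at hr
    intro w hw
    rcases List.mem_append.1 hw with h | h
    · exact hr.1 w h
    · exact hr.2 w h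
  let θ := QuotientGroup.lift N (FreeGroup.lift D.fn) hker
  have hθ : θ.comp Φ = (alternatingGroup (Option (Option (Pts P k)))).subtype := by
    apply MonoidHom.eq_of_eqOn_dense closure_xa
    rintro _ ⟨ω, rfl⟩
    change θ (Φ (xa ω)) = xh ω
    rw [hΦ, ← Y_map, ← hDY]
    congr 1
  have hinj : Function.Injective Φ := by
    intro a b h
    have h2 : (θ.comp Φ) a = (θ.comp Φ) b := congrArg θ h
    rw [hθ] at h2
    exact Subtype.ext h2
  let e := MulEquiv.ofBijective Φ ⟨hinj, hsurj⟩
  refine ⟨e.symm.toMonoidHom.comp mk, e.symm.surjective.comp (QuotientGroup.mk'_surjective N), ?_⟩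
  ext w
  rw [MonoidHom.mem_ker]
  change e.symm (mk w) = 1 ↔ w ∈ N
  rw [e.symm.map_eq_one_iff]
  exact QuotientGroup.eq_one_iff w

theorem fnorm_pow_le {α : Type*} [DecidableEq α] (a : FreeGroup α) (ha : a.norm ≤ 1) (n : ℕ) : (a ^ n).norm ≤ n := by
  induction n with
  | zero => simp
  | succ n ih => rw [pow_succ]; exact (FreeGroup.norm_mul_le _ _).trans (by omega)

theorem norm_horner {α : Type*} [DecidableEq α] (a h : FreeGroup α) (ha : a.norm ≤ 1) (hh : h.norm ≤ 1) :
    ∀ q e : ℕ, (horner a h q e).norm ≤ 5 * q := by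
  intro q
  induction q with
  | zero => intro e; simp [horner]
  | succ q ih =>
    intro e
    rw [horner]
    have h1 := fnorm_pow_le a ha (e % 4)
    have h2 := ih (e / 4)
    have h3 := FreeGroup.norm_mul_le (a ^ (e % 4)) (h * horner a h q (e / 4) * h⁻¹)
    have h4 := FreeGroup.norm_mul_le (h * horner a h q (e / 4)) h⁻¹
    have h5 := FreeGroup.norm_mul_le h (horner a h q (e / 4))
    rw [FreeGroup.norm_inv_eq] at h4
    have h6 : e % 4 < 4 := Nat.mod_lt _ (by norm_num)
    omega

theorem norm_powRel (P : Par) (k q : ℕ) :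
    (((gF k).powRel P q).map FreeGroup.norm).sum ≤ 30 * (5 * q + 1) := by
  have h1 : ∀ T : HBT (FreeGroup (GI k)), (∀ y ∈ T.gens, y.norm ≤ 1) →
      ((halfPow P q T).map FreeGroup.norm).sum ≤ 5 * (5 * q + 1) := by
    intro T hT
    simp only [HBT.gens, List.forall_mem_cons, List.not_mem_nil, false_imp_iff, implies_true, and_true] at hT
    obtain ⟨ha, ht, hh, hb, hu, hv, hw, hr⟩ := hT
    have key := norm_horner _ _ ha hh q
    have key2 : ∀ (y : FreeGroup (GI k)) (e : ℕ), y.norm ≤ 1 → (y⁻¹ * horner T.a T.h q e).norm ≤ 5 * q + 1 := by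
      intro y e hy
      have := FreeGroup.norm_mul_le y⁻¹ (horner T.a T.h q e)
      rw [FreeGroup.norm_inv_eq] at this
      have := key e
      omega
    simp only [halfPow, List.map_cons, List.map_nil, List.sum_cons, List.sum_nil]
    have := key P.p
    have := key2 _ P.g hu
    have := key2 _ P.gi hv
    have := key2 _ P.g2 hw
    have := key2 _ P.s hr
    omega
  have h2 : ∀ f : Fin 8 → GI k, ∀ y ∈ (hbt fun j => FreeGroup.of (f j)).gens, FreeGroup.norm y ≤ 1 := by
    intro f
    simp [hbt, HBT.gens]
  simp only [Gens.powRel, List.map_append, List.sum_append]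
  have := h1 _ (h2 fun j => (.inl (0, j)))
  have := h1 _ (h2 fun j => (.inl (1, j)))
  have := h1 _ (h2 fun j => (.inl (2, j)))
  have := h1 _ (h2 fun j => (.inl (3, j)))
  have := h1 _ (h2 fun j => (.inl (4, j)))
  have := h1 _ (h2 fun j => (.inl (5, j)))
  simp only [gF, gmk]
  omega

theorem length_powRel (P : Par) (k q : ℕ) : ((gF k).powRel P q).length = 30 := rfl

theorem exists_par (m : ℕ) (hm : 4 ≤ m) : ∃ P : Par, P.p ≤ 2 * m ∧ P.s + 1 + 2 * m = 2 * P.p := by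
  obtain ⟨p, hp, h1, h2⟩ := Nat.exists_prime_lt_and_le_two_mul m (by omega)
  haveI : Fact p.Prime := ⟨hp⟩
  haveI : NeZero p := ⟨hp.ne_zero⟩
  obtain ⟨u, hu⟩ := IsCyclic.exists_generator (α := (ZMod p)ˣ)
  have hodd := hp.eq_two_or_odd
  refine ⟨⟨p, (u : ZMod p).val, ((u⁻¹ : (ZMod p)ˣ) : ZMod p).val, ((u : ZMod p) ^ 2).val,
    2 * p - 1 - 2 * m, hp, by omega, ?_, ?_, ?_, by omega, by omega, by omega, (ZMod.val_lt _).le,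
    (ZMod.val_lt _).le, (ZMod.val_lt _).le⟩, ?_, ?_⟩
  · rw [ZMod.natCast_zmod_val, ZMod.natCast_zmod_val, Units.mul_inv]
  · rw [ZMod.natCast_zmod_val, ZMod.natCast_zmod_val]
  · intro i hi
    have := hu (Units.mk0 i hi)
    rw [← mem_powers_iff_mem_zpowers] at this
    obtain ⟨k, hk⟩ := this
    refine ⟨k, ?_⟩
    rw [ZMod.natCast_zmod_val]
    have := congrArg (Units.val) hk
    simpa using this.symm
  · exact h2
  · simp only; omega

theorem card_high (P : Par) : Fintype.card {i : ZMod P.p // P.s ≤ i.val} = P.p - P.s := by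
  rw [Fintype.card_subtype, ← Finset.card_image_of_injective _ (ZMod.val_injective P.p)]
  rw [← Nat.card_Ico]
  congr 1
  ext n
  simp only [Finset.mem_image, Finset.mem_filter, Finset.mem_univ, true_and, Finset.mem_Ico]
  constructor
  · rintro ⟨i, h, rfl⟩
    exact ⟨h, ZMod.val_lt i⟩
  · rintro ⟨h1, h2⟩
    exact ⟨n, by rwa [ZMod.val_natCast_of_lt h2], ZMod.val_natCast_of_lt h2⟩

theorem card_pts (P : Par) (k : ℕ) : Fintype.card (Pts P k) = P.p + 1 + (P.p - P.s + k) := by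
  rw [Fintype.card_sum, Fintype.card_sum, card_high, Fintype.card_option, ZMod.card, Fintype.card_fin]

/-- constant -/
def KK (k : ℕ) : ℕ := Fintype.card (GI k) + (gF k).fixedRel.length + ((gF k).fixedRel.map FreeGroup.norm).sum + 30

theorem alt_pres : ∃ C : ℕ, ∀ n : ℕ, 14 ≤ n →
    HasBoundedPresentation (alternatingGroup (Fin n)) C C (C * (1 + Real.logb 2 n)) := by
  refine ⟨KK 2 + KK 3 + 180, fun n hn => ?_⟩
  obtain ⟨P, hp1, hp2⟩ := exists_par ((n - 6) / 2) (by omega)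
  have hs := P.hs2
  set k := 2 + n % 2 with hk
  have hkk : KK k ≤ KK 2 + KK 3 := by
    generalize KK = f
    rcases Nat.mod_two_eq_zero_or_one n with h | h
    · rw [hk, h]; exact Nat.le_add_right _ _
    · rw [hk, h]; exact Nat.le_add_left _ _
  set q := Nat.log 4 P.p + 1 with hq
  obtain ⟨π, h1, h2⟩ := pres_alt P k (q := q) (Nat.lt_pow_succ_log_self (by norm_num) _)
  have hcard : Fintype.card (Option (Option (Pts P k))) = Fintype.card (Fin n) := by
    rw [Fintype.card_option, Fintype.card_option, card_pts, Fintype.card_fin]; omega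
  let e := Equiv.altCongrHom (Fintype.equivOfCardEq hcard)
  refine HasBoundedPresentation.congr e (HasBoundedPresentation.of_list π (relL P k q) h1 h2 ?_ ?_ ?_)
  · unfold KK at *; omega
  · rw [relL, List.length_append, length_powRel]; unfold KK at *; omega
  · rw [relL, List.map_append, List.sum_append]
    have h3 := norm_powRel P k q
    have h4 : Nat.log 4 P.p ≤ Nat.log 2 n :=
      (Nat.log_anti_left (by norm_num) (by norm_num)).trans (Nat.log_mono_right (by omega))
    have h5 : (Nat.log 2 n : ℝ) ≤ Real.logb 2 n := by
      have := Real.natLog_le_logb n 2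
      simpa using this
    have h6 : Fintype.card (GI k) + (((gF k).fixedRel.map FreeGroup.norm).sum + (((gF k).powRel P q).map FreeGroup.norm).sum)
        ≤ (KK 2 + KK 3 + 180) * (1 + Nat.log 2 n) := by
      have h7 : Fintype.card (GI k) + ((gF k).fixedRel.map FreeGroup.norm).sum ≤ KK k := by unfold KK; omega
      generalize Fintype.card (GI k) = x1 at *
      generalize ((gF k).fixedRel.map FreeGroup.norm).sum = x2 at *
      generalize (((gF k).powRel P q).map FreeGroup.norm).sum = x3 at *
      generalize KK k = x4 at *
      generalize KK 2 + KK 3 = x5 at *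
      nlinarith
    generalize KK 2 + KK 3 = x5 at *
    calc _ ≤ (((x5 + 180) * (1 + Nat.log 2 n) : ℕ) : ℝ) := by exact_mod_cast h6
      _ ≤ _ := by
        push_cast
        gcongr

/-- A subgroup of a perfect central extension that surjects is everything. -/
theorem perfect_top {E A : Type*} [Group E] [Group A] (hE : commutator E = ⊤) (φ : E →* A)
    (hc : φ.ker ≤ Subgroup.center E) (H : Subgroup E) (hH : ∀ e, ∃ h ∈ H, φ h = φ e) : H = ⊤ := by
  rw [eq_top_iff, ← hE, commutator_def, Subgroup.commutator_le]
  intro a _ b _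
  obtain ⟨h, hh, ha⟩ := hH a
  obtain ⟨k, hk, hb⟩ := hH b
  have h1 : h⁻¹ * a ∈ Subgroup.center E := hc (by rw [MonoidHom.mem_ker, map_mul, map_inv, ha, inv_mul_cancel])
  have h2 : k⁻¹ * b ∈ Subgroup.center E := hc (by rw [MonoidHom.mem_ker, map_mul, map_inv, hb, inv_mul_cancel])
  rw [Subgroup.mem_center_iff] at h1 h2
  obtain ⟨z, rfl⟩ : ∃ z, a = h * z := ⟨h⁻¹ * a, by group⟩
  obtain ⟨w, rfl⟩ : ∃ w, b = k * w := ⟨k⁻¹ * b, by group⟩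
  rw [inv_mul_cancel_left] at h1 h2
  rw [commutatorElement_def]
  have : h * z * (k * w) * (h * z)⁻¹ * (k * w)⁻¹ = h * k * h⁻¹ * k⁻¹ := by
    have e1 : h * z * (k * w) * (h * z)⁻¹ * (k * w)⁻¹ = h * (z * (k * w)) * z⁻¹ * h⁻¹ * w⁻¹ * k⁻¹ := by group
    rw [e1, ← h1 (k * w)]
    have e2 : h * (k * w * z) * z⁻¹ * h⁻¹ * w⁻¹ * k⁻¹ = h * k * (w * h⁻¹) * w⁻¹ * k⁻¹ := by group
    rw [e2, ← h2 h⁻¹]; group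
  rw [this]
  exact H.mul_mem (H.mul_mem (H.mul_mem hh hk) (H.inv_mem hh)) (H.inv_mem hk)

section expo
variable {Ω : Type*} [DecidableEq Ω] [Fintype Ω]

theorem exists_inverter (hΩ : 4 ≤ Fintype.card Ω) (i j : Ω) : ∃ g : alternatingGroup (Option (Option Ω)),
    g * xa i * g⁻¹ = (xa i)⁻¹ ∧ g * xa j * g⁻¹ = (xa j)⁻¹ := by
  have h1 : 1 < (({i, j} : Finset Ω)ᶜ).card := by
    rw [Finset.card_compl]
    have := Finset.card_le_two (a := i) (b := j)
    omega
  obtain ⟨a, ha, b, hb, hab⟩ := Finset.one_lt_card.1 h1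
  simp only [Finset.mem_compl, Finset.mem_insert, Finset.mem_singleton, not_or] at ha hb
  have hab' : (some (some a) : Option (Option Ω)) ≠ some (some b) := by simpa using hab
  let g : Perm (Option (Option Ω)) := swap none (some none) * swap (some (some a)) (some (some b))
  have hg : g ∈ alternatingGroup (Option (Option Ω)) := by
    rw [Equiv.Perm.mem_alternatingGroup]
    simp [g, Equiv.Perm.sign_swap hab']
  have key : ∀ k : Ω, k ≠ a → k ≠ b → g * xh k * g⁻¹ = (xh k)⁻¹ := by
    intro k hka hkb
    rw [mul_inv_eq_iff_eq_mul, eq_inv_mul_iff_mul_eq]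
    have g1 : g none = some none := by simp [g, swap_apply_def]
    have g2 : g (some none) = none := by simp [g, swap_apply_def]
    have g3 : g (some (some k)) = some (some k) := by simp [g, swap_apply_def, hka, hkb]
    have g4 : ∀ z, z ≠ k → ∃ w, w ≠ k ∧ g (some (some z)) = some (some w) := by
      intro z hz
      by_cases hza : z = a
      · exact ⟨b, hkb.symm, by simp [g, swap_apply_def, hza]⟩
      · by_cases hzb : z = b
        · exact ⟨a, hka.symm, by simp [g, swap_apply_def, hzb, hab]⟩
        · exact ⟨z, hz, by simp [g, swap_apply_def, hza, hzb]⟩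
    ext1 x
    rcases x with _ | _ | x
    · simp [xh_none, xh_none', xh_self, g1, g2, g3]
    · simp [xh_none, xh_none', xh_self, g1, g2, g3]
    · by_cases h : x = k
      · subst h; simp [xh_none, xh_none', xh_self, g1, g2, g3]
      · obtain ⟨w, hw, hz⟩ := g4 x h
        simp [xh_ne _ h, hz, xh_ne _ hw]
  refine ⟨⟨g, hg⟩, Subtype.ext (key i (Ne.symm ha.1) (Ne.symm hb.1)), Subtype.ext (key j (Ne.symm ha.2) (Ne.symm hb.2))⟩

/-- central elements of exponent six -/
def cen6 (E : Type*) [Group E] : Subgroup E where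
  carrier := {z | z ∈ Subgroup.center E ∧ z ^ 6 = 1}
  one_mem' := ⟨Subgroup.one_mem _, one_pow _⟩
  mul_mem' := by
    rintro a b ⟨h1, h2⟩ ⟨h3, h4⟩
    refine ⟨Subgroup.mul_mem _ h1 h3, ?_⟩
    have : Commute a b := (Subgroup.mem_center_iff.1 h3 a)
    rw [this.mul_pow, h2, h4, one_mul]
  inv_mem' := by
    rintro a ⟨h1, h2⟩
    exact ⟨Subgroup.inv_mem _ h1, by rw [inv_pow, h2, inv_one]⟩

instance (E : Type*) [Group E] : (cen6 E).Normal := ⟨by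
  rintro n ⟨h1, h2⟩ g
  have : g * n * g⁻¹ = n := by rw [Subgroup.mem_center_iff.1 h1 g]; group
  rw [this]; exact ⟨h1, h2⟩⟩

theorem ker_exp (hΩ : 4 ≤ Fintype.card Ω) {E : Type*} [Group E] (hE : commutator E = ⊤)
    (φ : E →* alternatingGroup (Option (Option Ω))) (hs : Function.Surjective φ)
    (hc : φ.ker ≤ Subgroup.center E) : ∀ z ∈ φ.ker, z ^ 6 = 1 := by
  have hcom : ∀ z, φ z = 1 → ∀ g, g * z = z * g := fun z hz => Subgroup.mem_center_iff.1 (hc hz)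
  have hconj : ∀ z, φ z = 1 → ∀ g, g * z * g⁻¹ = z := fun z hz g => by rw [hcom z hz]; group
  have hYex : ∀ i : Ω, ∃ y : E, φ y = xa i ∧ (y ^ 3) ^ 2 = 1 := by
    intro i
    obtain ⟨g, hg, -⟩ := exists_inverter hΩ i i
    obtain ⟨g, rfl⟩ := hs g
    obtain ⟨x, hx⟩ := hs (xa i)
    have hx3 : xa i * xa i = (xa i)⁻¹ := xa_car.mul_self i
    set z := g * x * g⁻¹ * x with hz
    have hz1 : φ z = 1 := by
      rw [hz, map_mul, map_mul, map_mul, map_inv, hx, hg, inv_mul_cancel]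
    have hgx : g * x * g⁻¹ = z * x⁻¹ := by rw [hz]; group
    set y := z * x⁻¹ * x⁻¹ with hy
    have hyi : g * y * g⁻¹ = y⁻¹ := by
      have e1 : g * y * g⁻¹ = (g * z * g⁻¹) * (g * x * g⁻¹)⁻¹ * (g * x * g⁻¹)⁻¹ := by rw [hy]; group
      rw [e1, hgx, hconj z hz1, hy]
      have e2 : z * (z * x⁻¹)⁻¹ * (z * x⁻¹)⁻¹ = z * (x * z⁻¹) * x * z⁻¹ := by group
      have hzi : φ z⁻¹ = 1 := by rw [map_inv, hz1, inv_one]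
      rw [e2, hcom _ hzi x]; simp [mul_assoc]
    have hφy : φ y = xa i := by
      rw [hy, map_mul, map_mul, map_inv, hz1, hx, one_mul]; exact xa_car.inv_inv i
    refine ⟨y, hφy, ?_⟩
    have h3 : φ (y ^ 3) = 1 := by rw [map_pow, hφy]; exact xa_car.cube i
    have h4 := hconj _ h3 g
    rw [← conj_pow, hyi, inv_pow] at h4
    rw [pow_two]
    nth_rw 1 [← h4]
    rw [inv_mul_cancel]
  choose Y hY hY3 using hYex
  have hinv : ∀ i, ∀ g, φ g * xa i * (φ g)⁻¹ = (xa i)⁻¹ → ∃ z, φ z = 1 ∧ z ^ 3 = 1 ∧ g * Y i * g⁻¹ = z * (Y i)⁻¹ := by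
    intro i g hg
    have hz1 : φ (g * Y i * g⁻¹ * Y i) = 1 := by
      rw [map_mul, map_mul, map_mul, map_inv, hY, hg, inv_mul_cancel]
    have hgx : g * Y i * g⁻¹ = (g * Y i * g⁻¹ * Y i) * (Y i)⁻¹ := by group
    refine ⟨_, hz1, ?_, hgx⟩
    generalize g * Y i * g⁻¹ * Y i = z at *
    have h3 : φ (Y i ^ 3) = 1 := by rw [map_pow, hY]; exact xa_car.cube i
    have h4 := hconj _ h3 g
    rw [← conj_pow, hgx, Commute.mul_pow (hcom z hz1 _).symm, inv_pow, mul_inv_eq_iff_eq_mul, ← pow_two] at h4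
    rw [h4, hY3]
  have hC : Car (fun i => (QuotientGroup.mk' (cen6 E)) (Y i)) := by
    constructor
    · intro i
      rw [← map_pow]
      refine (QuotientGroup.eq_one_iff _).2 ⟨hc ?_, ?_⟩
      · rw [MonoidHom.mem_ker, map_pow, hY]; exact xa_car.cube i
      · rw [show 6 = 2 * 3 from rfl, pow_mul, hY3, one_pow]
    · intro i j hij
      rw [← map_mul, ← map_pow]
      have hd1 : φ ((Y i * Y j) ^ 2) = 1 := by rw [map_pow, map_mul, hY, hY]; exact xa_car.sq i j hij
      refine (QuotientGroup.eq_one_iff _).2 ⟨hc hd1, ?_⟩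
      obtain ⟨g, h1, h2⟩ := exists_inverter hΩ i j
      obtain ⟨g, rfl⟩ := hs g
      obtain ⟨z, z1, z3, hz⟩ := hinv i g h1
      obtain ⟨w, w1, w3, hw⟩ := hinv j g h2
      have h4 := hconj _ hd1 g
      have hcw : ∀ a, w * a = a * w := fun a => (hcom w w1 a).symm
      have e1 : g * (Y i * Y j) * g⁻¹ = (z * w) * (Y j * Y i)⁻¹ := by
        have : g * (Y i * Y j) * g⁻¹ = (g * Y i * g⁻¹) * (g * Y j * g⁻¹) := by group
        rw [this, hz, hw, mul_inv_rev, mul_assoc z, ← mul_assoc _ w, ← hcw]; group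
      have zw1 : φ (z * w) = 1 := by rw [map_mul, z1, w1, one_mul]
      have e2 : (Y j * Y i) ^ 2 = (Y i * Y j) ^ 2 := by
        have := hconj _ hd1 (Y j)
        rw [← this, ← conj_pow]; congr 1; group
      have zw3 : (z * w) ^ 3 = 1 := by
        rw [Commute.mul_pow (hcom w w1 z), z3, w3, one_mul]
      rw [← conj_pow, e1, Commute.mul_pow (hcom _ zw1 _).symm, inv_pow, e2, mul_inv_eq_iff_eq_mul, ← pow_two] at h4
      rw [show 6 = 2 * 3 from rfl, pow_mul, ← h4, ← pow_mul, mul_comm, pow_mul, zw3, one_pow]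
  obtain ⟨Φ, hΦ⟩ := hC.exists_hom
  have htop : Subgroup.closure (Set.range Y) = ⊤ := by
    refine perfect_top hE φ hc _ fun e => ?_
    have : Subgroup.map φ (Subgroup.closure (Set.range Y)) = ⊤ := by
      rw [MonoidHom.map_closure, ← closure_xa, ← Set.range_comp]
      congr 2; ext1 i; exact hY i
    have h := Subgroup.mem_top (φ e)
    rw [← this] at h
    exact h
  have heq : QuotientGroup.mk' (cen6 E) = Φ.comp φ := by
    refine MonoidHom.eq_of_eqOn_dense htop ?_
    rintro _ ⟨i, rfl⟩
    rw [MonoidHom.comp_apply, hY, hΦ]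
  intro z hz
  have : QuotientGroup.mk' (cen6 E) z = 1 := by rw [heq, MonoidHom.comp_apply, MonoidHom.mem_ker.1 hz, map_one]
  exact ((QuotientGroup.eq_one_iff _).1 this).2

end expo

theorem sum_map_le_card {α : Type*} [Fintype α] (f : α → ℕ) (B : ℕ) (hf : ∀ a, f a ≤ B) :
    ((Finset.univ : Finset α).toList.map f).sum ≤ Fintype.card α * B := by
  have := List.sum_le_card_nsmul ((Finset.univ : Finset α).toList.map f) B (by
    intro x hx
    obtain ⟨a, -, rfl⟩ := List.mem_map.1 hx
    exact hf a)
  simpa using this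

theorem norm_triple {α : Type*} [DecidableEq α] (a b c : α) :
    (FreeGroup.of a * FreeGroup.of b * (FreeGroup.of c)⁻¹).norm ≤ 3 := by
  have h1 := FreeGroup.norm_mul_le (FreeGroup.of a * FreeGroup.of b) (FreeGroup.of c)⁻¹
  have h2 := FreeGroup.norm_mul_le (FreeGroup.of a) (FreeGroup.of b)
  simp only [FreeGroup.norm_inv_eq, FreeGroup.norm_of] at h1 h2
  omega

theorem norm_comm {α : Type*} [DecidableEq α] (a b : α) :
    (FreeGroup.of a * FreeGroup.of b * (FreeGroup.of a)⁻¹ * (FreeGroup.of b)⁻¹).norm ≤ 4 := by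
  have h1 := FreeGroup.norm_mul_le (FreeGroup.of a * FreeGroup.of b * (FreeGroup.of a)⁻¹) (FreeGroup.of b)⁻¹
  have h2 := norm_triple a b a
  simp only [FreeGroup.norm_inv_eq, FreeGroup.norm_of] at h1 h2
  omega

/-- Multiplication table presentation. -/
theorem table_pres (E : Type) [Group E] [Finite E] (K : ℕ) (hK : Nat.card E ≤ K) :
    HasBoundedPresentation E K (K * K) ((K + K * K * 3 : ℕ) : ℝ) := by
  classical
  haveI := Fintype.ofFinite E
  rw [Nat.card_eq_fintype_card] at hK
  let rel : E × E → FreeGroup E := fun q => FreeGroup.of q.1 * FreeGroup.of q.2 * (FreeGroup.of (q.1 * q.2))⁻¹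
  have hKK : Fintype.card (E × E) ≤ K * K := by
    rw [Fintype.card_prod]; exact Nat.mul_le_mul hK hK
  refine HasBoundedPresentation.of_list (FreeGroup.lift (fun e : E => e)) ((Finset.univ : Finset (E × E)).toList.map rel)
    ?_ ?_ hK ?_ ?_
  · intro e; exact ⟨FreeGroup.of e, by simp⟩
  · set N := Subgroup.normalClosure {w | w ∈ (Finset.univ : Finset (E × E)).toList.map rel} with hN
    have hmem : ∀ a b : E, QuotientGroup.mk' N (FreeGroup.of (a * b)) =
        QuotientGroup.mk' N (FreeGroup.of a) * QuotientGroup.mk' N (FreeGroup.of b) := by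
      intro a b
      have : rel (a, b) ∈ N := Subgroup.subset_normalClosure (by simp)
      have h1 : QuotientGroup.mk' N (rel (a, b)) = 1 := (QuotientGroup.eq_one_iff _).2 this
      simp only [rel, map_mul, map_inv] at h1
      exact (mul_inv_eq_one.1 h1).symm
    apply le_antisymm
    · let c : E →* (FreeGroup E ⧸ N) := MonoidHom.mk' (fun e => QuotientGroup.mk' N (FreeGroup.of e)) hmem
      have hc : c.comp (FreeGroup.lift (fun e : E => e)) = QuotientGroup.mk' N := by
        ext e; simp [c]
      intro w hw
      rw [← QuotientGroup.eq_one_iff]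
      change QuotientGroup.mk' N w = 1
      rw [← hc, MonoidHom.comp_apply, MonoidHom.mem_ker.1 hw, map_one]
    · apply Subgroup.normalClosure_le_normal
      rintro w hw
      obtain ⟨q, -, rfl⟩ := List.mem_map.1 hw
      simp [rel, MonoidHom.mem_ker]
  · simpa using hKK
  · rw [List.map_map]
    have h1 := sum_map_le_card (FreeGroup.norm ∘ rel) 3 (fun q => norm_triple _ _ _)
    have h2 := Nat.mul_le_mul_right 3 hKK
    exact_mod_cast (by omega)

theorem ext_pres {A E : Type} [Group A] [Group E] (φ : E →* A) (hs : Function.Surjective φ)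
    (hc : φ.ker ≤ Subgroup.center E) [Finite φ.ker] (N : ℕ) (hN : Nat.card φ.ker ≤ N) {g r : ℕ} {L : ℝ}
    (h : HasBoundedPresentation A g r L) :
    HasBoundedPresentation E (g + N) (r + g * N + N * N) (L + (N + r + g * N * 4 + N * N * 3 : ℕ)) := by
  classical
  haveI := Fintype.ofFinite φ.ker
  rw [Nat.card_eq_fintype_card] at hN
  obtain ⟨m, π, R, h1, h2, h3, h4, h5⟩ := h
  have hcom : ∀ z : φ.ker, ∀ e : E, e * z = z * e := fun z e => Subgroup.mem_center_iff.1 (hc z.2) e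
  choose s hsec using fun j : Fin m => hs (π (FreeGroup.of j))
  let f : FreeGroup (Fin m) →* E := FreeGroup.lift s
  have hf : φ.comp f = π := by ext j; simp [f, hsec]
  have hf' : ∀ w, φ (f w) = π w := fun w => by rw [← hf]; rfl
  let Z := φ.ker
  let inl : FreeGroup (Fin m) →* FreeGroup (Fin m ⊕ Z) := FreeGroup.map Sum.inl
  let iz : Z → FreeGroup (Fin m ⊕ Z) := fun z => FreeGroup.of (Sum.inr z)
  let ζ : E → Z := fun e => if h : e ∈ φ.ker then ⟨e, h⟩ else 1
  let Ψ : FreeGroup (Fin m ⊕ Z) →* E := FreeGroup.lift (Sum.elim s (fun z => (z : E)))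
  have hΨl : ∀ w, Ψ (inl w) = f w := by
    intro w
    have : Ψ.comp inl = f := by ext j; simp [Ψ, inl, f]
    rw [← this]; rfl
  have hΨz : ∀ z, Ψ (iz z) = z := by intro z; simp [Ψ, iz]
  let r1 : FreeGroup (Fin m) → FreeGroup (Fin m ⊕ Z) := fun w => inl w * (iz (ζ (f w)))⁻¹
  let r2 : Fin m × Z → FreeGroup (Fin m ⊕ Z) := fun q =>
    FreeGroup.of (Sum.inl q.1) * iz q.2 * (FreeGroup.of (Sum.inl q.1))⁻¹ * (iz q.2)⁻¹
  let r3 : Z × Z → FreeGroup (Fin m ⊕ Z) := fun q => iz q.1 * iz q.2 * (iz (q.1 * q.2))⁻¹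
  let l1 := R.toList.map r1
  let l2 := (Finset.univ : Finset (Fin m × Z)).toList.map r2
  let l3 := (Finset.univ : Finset (Z × Z)).toList.map r3
  have hRker : ∀ w ∈ R, f w ∈ φ.ker := by
    intro w hw
    rw [MonoidHom.mem_ker, hf', ← MonoidHom.mem_ker, h4]
    exact Subgroup.subset_normalClosure hw
  have hζ : ∀ e, ∀ h : e ∈ φ.ker, ζ e = ⟨e, h⟩ := fun e h => by simp only [ζ]; rw [dif_pos h]
  have hc2 : Fintype.card (Fin m × Z) ≤ g * N := by
    rw [Fintype.card_prod, Fintype.card_fin]; exact Nat.mul_le_mul h1 hN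
  have hc3 : Fintype.card (Z × Z) ≤ N * N := by
    rw [Fintype.card_prod]; exact Nat.mul_le_mul hN hN
  have hcg : Fintype.card (Fin m ⊕ Z) ≤ m + N := by
    rw [Fintype.card_sum, Fintype.card_fin]; exact Nat.add_le_add_left hN _
  refine HasBoundedPresentation.of_list Ψ (l1 ++ l2 ++ l3) ?_ ?_ (hcg.trans (by omega)) ?_ ?_
  · intro e
    obtain ⟨w, hw⟩ := h2 (φ e)
    have hz : (f w)⁻¹ * e ∈ φ.ker := by
      rw [MonoidHom.mem_ker, map_mul, map_inv, hf', hw, inv_mul_cancel]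
    exact ⟨inl w * iz ⟨_, hz⟩, by rw [map_mul, hΨl, hΨz]; simp⟩
  · set M := Subgroup.normalClosure {w | w ∈ l1 ++ l2 ++ l3} with hM
    have hMker : M ≤ Ψ.ker := by
      apply Subgroup.normalClosure_le_normal
      intro w hw
      rw [Set.mem_setOf_eq, List.mem_append, List.mem_append] at hw
      rw [SetLike.mem_coe, MonoidHom.mem_ker]
      rcases hw with (hw | hw) | hw
      · obtain ⟨v, hv, rfl⟩ := List.mem_map.1 hw
        rw [Finset.mem_toList] at hv
        simp only [r1, map_mul, map_inv, hΨl, hΨz]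
        rw [hζ _ (hRker v hv), mul_inv_cancel]
      · obtain ⟨q, -, rfl⟩ := List.mem_map.1 hw
        simp only [r2, map_mul, map_inv, hΨz]
        rw [hcom]; group
      · obtain ⟨q, -, rfl⟩ := List.mem_map.1 hw
        simp only [r3, map_mul, map_inv, hΨz]
        rw [Subgroup.coe_mul, mul_inv_cancel]
    let Q := QuotientGroup.mk' M
    have hQ : ∀ w, Q w = 1 ↔ w ∈ M := fun w => QuotientGroup.eq_one_iff w
    have hQ1 : ∀ v ∈ R, Q (inl v) = Q (iz (ζ (f v))) := by
      intro v hv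
      have : r1 v ∈ M := Subgroup.subset_normalClosure
        (List.mem_append_left _ (List.mem_append_left _ (List.mem_map_of_mem (Finset.mem_toList.2 hv))))
      rw [← hQ] at this
      simp only [r1, map_mul, map_inv] at this
      exact mul_inv_eq_one.1 this
    have hQ2 : ∀ j z, Q (FreeGroup.of (Sum.inl j)) * Q (iz z) = Q (iz z) * Q (FreeGroup.of (Sum.inl j)) := by
      intro j z
      have : r2 (j, z) ∈ M := Subgroup.subset_normalClosure
        (List.mem_append_left _ (List.mem_append_right _ (List.mem_map_of_mem (by simp))))
      rw [← hQ] at this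
      simp only [r2, map_mul, map_inv] at this
      rw [mul_inv_eq_one, mul_inv_eq_iff_eq_mul] at this
      exact this
    have hQ3 : ∀ y z, Q (iz (y * z)) = Q (iz y) * Q (iz z) := by
      intro j z
      have : r3 (j, z) ∈ M := Subgroup.subset_normalClosure
        (List.mem_append_right _ (List.mem_map_of_mem (by simp)))
      rw [← hQ] at this
      simp only [r3, map_mul, map_inv] at this
      exact (mul_inv_eq_one.1 this).symm
    let c : Z →* (FreeGroup (Fin m ⊕ Z) ⧸ M) := MonoidHom.mk' (fun z => Q (iz z)) hQ3
    have hcv : ∀ z, Q (iz z) = c z := fun z => rfl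
    have hZc : ∀ y z : Z, y * z = z * y := fun y z => Subtype.ext (hcom z y)
    have hcent : ∀ (z : Z) (w : FreeGroup (Fin m ⊕ Z)), Commute (c z) (Q w) := by
      intro z w
      induction w using FreeGroup.induction_on with
      | C1 => rw [map_one]; exact Commute.one_right _
      | of x =>
        rcases x with j | y
        · exact (hQ2 j z).symm
        · have : Q (FreeGroup.of (Sum.inr y)) = c y := rfl
          rw [this, Commute, SemiconjBy, ← map_mul, ← map_mul, hZc]
      | inv_of x hx => rw [map_inv]; exact hx.inv_right
      | mul x y hx hy => rw [map_mul]; exact hx.mul_right hy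
    have hdec : ∀ v, ∃ w z, Q v = Q (inl w) * c z := by
      intro v
      induction v using FreeGroup.induction_on with
      | C1 => exact ⟨1, 1, by simp⟩
      | of x =>
        rcases x with j | y
        · exact ⟨FreeGroup.of j, 1, by simp [inl]⟩
        · exact ⟨1, y, by rw [map_one, map_one, one_mul]; rfl⟩
      | inv_of x hx =>
        obtain ⟨w, z, hw⟩ := hx
        refine ⟨w⁻¹, z⁻¹, ?_⟩
        rw [map_inv, hw, map_inv, map_inv, map_inv, mul_inv_rev]
        exact ((hcent z _).inv_inv).eq
      | mul x y hx hy =>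
        obtain ⟨w, z, hw⟩ := hx
        obtain ⟨w', z', hw'⟩ := hy
        refine ⟨w * w', z * z', ?_⟩
        rw [map_mul, hw, hw', map_mul, map_mul, map_mul, mul_assoc, ← mul_assoc (c z), (hcent z _).eq]
        simp only [mul_assoc]
    have hK : ∀ w, π w = 1 → ∃ z : Z, f w = z ∧ Q (inl w) = c z := by
      let K : Subgroup (FreeGroup (Fin m)) :=
        { carrier := {w | ∃ z : Z, f w = z ∧ Q (inl w) = c z}
          one_mem' := ⟨1, by simp, by simp⟩
          mul_mem' := by
            rintro a b ⟨z, h1, h2⟩ ⟨y, h3, h4⟩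
            exact ⟨z * y, by rw [map_mul, h1, h3]; rfl, by rw [map_mul, map_mul, h2, h4, map_mul]⟩
          inv_mem' := by
            rintro a ⟨z, h1, h2⟩
            exact ⟨z⁻¹, by rw [map_inv, h1]; rfl, by rw [map_inv, map_inv, h2, map_inv]⟩ }
      have hKn : K.Normal := ⟨by
        rintro a ⟨z, h1, h2⟩ b
        refine ⟨z, ?_, ?_⟩
        · rw [map_mul, map_mul, map_inv, h1, hcom]; group
        · rw [map_mul, map_mul, map_mul, map_mul, h2, map_inv, map_inv, ← (hcent z _).eq]; group⟩
      have hle : Subgroup.normalClosure (R : Set (FreeGroup (Fin m))) ≤ K := by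
        apply Subgroup.normalClosure_le_normal
        intro w hw
        refine ⟨ζ (f w), ?_, hQ1 w hw⟩
        rw [hζ _ (hRker w hw)]
      intro w hw
      exact hle (h4 ▸ (MonoidHom.mem_ker.2 hw))
    refine le_antisymm ?_ hMker
    intro v hv
    obtain ⟨w, z, hw⟩ := hdec v
    have e1 : v⁻¹ * (inl w * iz z) ∈ M := by
      rw [← hQ, map_mul, map_inv, hw, map_mul, hcv, inv_mul_cancel]
    have e2 := MonoidHom.mem_ker.1 (hMker e1)
    rw [map_mul, map_inv, MonoidHom.mem_ker.1 hv, map_mul, hΨl, hΨz, inv_one, one_mul] at e2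
    have e3 : π w = 1 := by
      have := congrArg φ e2
      rw [map_mul, map_one, hf', MonoidHom.mem_ker.1 z.2, mul_one] at this
      exact this
    obtain ⟨y, hy1, hy2⟩ := hK w e3
    rw [← hQ, hw, hy2, ← map_mul]
    have : y * z = 1 := Subtype.ext (by rw [Subgroup.coe_mul, ← hy1, e2]; rfl)
    rw [this, map_one]
  · simp only [l1, l2, l3, List.length_append, List.length_map, Finset.length_toList, Finset.card_univ]
    omega
  · have n1 : (l1.map FreeGroup.norm).sum ≤ ∑ w ∈ R, FreeGroup.norm w + r := by
      have : ∀ w, FreeGroup.norm (r1 w) ≤ FreeGroup.norm w + 1 := by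
        intro w
        have a1 := FreeGroup.norm_mul_le (inl w) (iz (ζ (f w)))⁻¹
        have a2 := norm_map_le (Sum.inl : Fin m → Fin m ⊕ Z) w
        simp only [iz, FreeGroup.norm_inv_eq, FreeGroup.norm_of] at a1
        exact a1.trans (Nat.add_le_add_right a2 1)
      simp only [l1]
      rw [List.map_map]
      calc _ = ∑ w ∈ R, FreeGroup.norm (r1 w) := by rw [← Finset.sum_map_toList]; rfl
        _ ≤ ∑ w ∈ R, (FreeGroup.norm w + 1) := Finset.sum_le_sum fun w _ => this w
        _ = ∑ w ∈ R, FreeGroup.norm w + R.card := by rw [Finset.sum_add_distrib]; simp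
        _ ≤ _ := by omega
    have n2 : (l2.map FreeGroup.norm).sum ≤ g * N * 4 := by
      simp only [l2]
      rw [List.map_map]
      exact (sum_map_le_card _ 4 (fun q => norm_comm _ _)).trans (Nat.mul_le_mul_right _ hc2)
    have n3 : (l3.map FreeGroup.norm).sum ≤ N * N * 3 := by
      simp only [l3]
      rw [List.map_map]
      exact (sum_map_le_card _ 3 (fun q => norm_triple _ _ _)).trans (Nat.mul_le_mul_right _ hc3)
    have n4 : Fintype.card (Fin m ⊕ Z) + ((l1 ++ l2 ++ l3).map FreeGroup.norm).sum ≤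
        (m + ∑ w ∈ R, FreeGroup.norm w) + (N + r + g * N * 4 + N * N * 3) := by
      rw [List.map_append, List.map_append, List.sum_append, List.sum_append]
      omega
    have n5 : ((Fintype.card (Fin m ⊕ Z) + ((l1 ++ l2 ++ l3).map FreeGroup.norm).sum : ℕ) : ℝ) ≤
      ((m + ∑ w ∈ R, FreeGroup.norm w : ℕ) : ℝ) + (N + r + g * N * 4 + N * N * 3 : ℕ) := by exact_mod_cast n4
    linarith

theorem card_ker_le {A E : Type} [Group A] [Group E] (hE : commutator E = ⊤) (φ : E →* A)
    (hs : Function.Surjective φ) (hc : φ.ker ≤ Subgroup.center E) {b : ℕ} (hb : 0 < b)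
    (hexp : ∀ z ∈ φ.ker, z ^ b = 1) {g r : ℕ} {L : ℝ}
    (h : HasBoundedPresentation A g r L) : Finite φ.ker ∧ Nat.card φ.ker ≤ b ^ r := by
  classical
  obtain ⟨m, π, R, h1, h2, h3, h4, h5⟩ := h
  have hcom : ∀ z ∈ φ.ker, ∀ e : E, e * z = z * e := fun z hz e => Subgroup.mem_center_iff.1 (hc hz) e
  choose s hsec using fun j : Fin m => hs (π (FreeGroup.of j))
  let f : FreeGroup (Fin m) →* E := FreeGroup.lift s
  have hf : φ.comp f = π := by ext j; simp [f, hsec]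
  have hf' : ∀ w, φ (f w) = π w := fun w => by rw [← hf]; rfl
  have hfs : f.range = ⊤ := by
    refine perfect_top hE φ hc _ fun e => ?_
    obtain ⟨w, hw⟩ := h2 (φ e)
    exact ⟨f w, ⟨w, rfl⟩, by rw [hf', hw]⟩
  have hRker : ∀ w ∈ R, f w ∈ φ.ker := by
    intro w hw
    rw [MonoidHom.mem_ker, hf', ← MonoidHom.mem_ker, h4]
    exact Subgroup.subset_normalClosure hw
  have hcl : φ.ker = Subgroup.closure ((R.image f : Finset E) : Set E) := by
    have hle : Subgroup.closure ((R.image f : Finset E) : Set E) ≤ φ.ker := by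
      rw [Subgroup.closure_le]
      intro x hx
      obtain ⟨w, hw, rfl⟩ := Finset.mem_image.1 (Finset.mem_coe.1 hx)
      exact hRker w hw
    refine le_antisymm ?_ hle
    intro z hz
    obtain ⟨w, rfl⟩ : z ∈ f.range := hfs ▸ Subgroup.mem_top z
    have hw : w ∈ Subgroup.normalClosure (R : Set (FreeGroup (Fin m))) := by
      rw [← h4, MonoidHom.mem_ker, ← hf']; exact hz
    have hn : (Subgroup.closure ((R.image f : Finset E) : Set E)).Normal := ⟨by
      intro x hx y
      rw [hcom x (hle hx)]; simpa using hx⟩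
    have : Subgroup.normalClosure (R : Set (FreeGroup (Fin m))) ≤
        (Subgroup.closure ((R.image f : Finset E) : Set E)).comap f := by
      apply Subgroup.normalClosure_le_normal
      intro v hv
      exact Subgroup.subset_closure (Finset.mem_coe.2 (Finset.mem_image_of_mem f hv))
    exact this hw
  set S := R.image f with hS
  have hSc : S.card ≤ r := Finset.card_image_le.trans h3
  rw [hcl] at hexp hcom ⊢
  letI : CommGroup (Subgroup.closure (S : Set E)) :=
    { (inferInstance : Group (Subgroup.closure (S : Set E))) with
      mul_comm := fun x y => Subtype.ext (hcom y y.2 x) }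
  have hd := card_dvd_exponent_pow_rank' (Subgroup.closure (S : Set E)) (n := b)
    (fun x => Subtype.ext (by simpa using hexp x x.2))
  have hr : Group.rank (Subgroup.closure (S : Set E)) ≤ r :=
    (Subgroup.rank_closure_finset_le_card S).trans hSc
  have hpos : 0 < b ^ Group.rank (Subgroup.closure (S : Set E)) := Nat.pow_pos hb
  refine ⟨?_, (Nat.le_of_dvd hpos hd).trans (Nat.pow_le_pow_right hb hr)⟩
  refine Nat.finite_of_card_ne_zero fun h0 => ?_
  rw [h0, zero_dvd_iff] at hd
  omega

theorem schur_bound {A E : Type} [Group A] [Group E] [Finite A] (hE : commutator E = ⊤) (φ : E →* A)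
    (hs : Function.Surjective φ) (hc : φ.ker ≤ Subgroup.center E) :
    Finite E ∧ Nat.card E ≤ Nat.card A ^ (Nat.card A * (Nat.card A * Nat.card A) + 1) := by
  choose s hs' using hs
  have hsub : commutatorSet E ⊆ Set.range (fun q : A × A => s q.1 * s q.2 * (s q.1)⁻¹ * (s q.2)⁻¹) := by
    rintro _ ⟨a, b, rfl⟩
    refine ⟨(φ a, φ b), ?_⟩
    have h1 : (s (φ a))⁻¹ * a ∈ Subgroup.center E := hc (by rw [MonoidHom.mem_ker, map_mul, map_inv, hs', inv_mul_cancel])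
    have h2 : (s (φ b))⁻¹ * b ∈ Subgroup.center E := hc (by rw [MonoidHom.mem_ker, map_mul, map_inv, hs', inv_mul_cancel])
    rw [Subgroup.mem_center_iff] at h1 h2
    dsimp only
    generalize s (φ a) = h at *
    generalize s (φ b) = k at *
    obtain ⟨z, rfl⟩ : ∃ z, a = h * z := ⟨h⁻¹ * a, by group⟩
    obtain ⟨w, rfl⟩ : ∃ w, b = k * w := ⟨k⁻¹ * b, by group⟩
    rw [inv_mul_cancel_left] at h1 h2
    rw [commutatorElement_def]
    have e1 : h * z * (k * w) * (h * z)⁻¹ * (k * w)⁻¹ = h * (z * (k * w)) * z⁻¹ * h⁻¹ * w⁻¹ * k⁻¹ := by group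
    rw [e1, ← h1 (k * w)]
    have e2 : h * (k * w * z) * z⁻¹ * h⁻¹ * w⁻¹ * k⁻¹ = h * k * (w * h⁻¹) * w⁻¹ * k⁻¹ := by group
    rw [e2, ← h2 h⁻¹]; group
  have hfin : (commutatorSet E).Finite := (Set.finite_range _).subset hsub
  haveI : Finite (commutatorSet E) := hfin
  have hcard : Nat.card (commutatorSet E) ≤ Nat.card A * Nat.card A := by
    rw [← Nat.card_prod]
    refine (Nat.card_mono (Set.finite_range _) hsub).trans ?_
    exact Finite.card_range_le _
  have hidx : (Subgroup.center E).index ∣ Nat.card A := by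
    have h1 := Subgroup.index_dvd_of_le hc
    rw [Subgroup.index_ker, MonoidHom.range_eq_top.2 (fun a => ⟨s a, hs' a⟩), Subgroup.card_top] at h1
    exact h1
  have hApos : 0 < Nat.card A := Nat.card_pos
  have hile := Nat.le_of_dvd hApos hidx
  have hipos : 0 < (Subgroup.center E).index := Nat.pos_of_dvd_of_pos hidx hApos
  have hfE : Finite (commutator E) := inferInstance
  have hd := Subgroup.card_commutator_dvd_index_center_pow E
  rw [hE] at hfE hd
  rw [Subgroup.card_top] at hd
  refine ⟨Finite.of_equiv _ (Subgroup.topEquiv (G := E)).toEquiv, ?_⟩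
  refine (Nat.le_of_dvd (Nat.pow_pos hipos) hd).trans ?_
  refine (Nat.pow_le_pow_left hile _).trans (Nat.pow_le_pow_right hApos ?_)
  exact Nat.add_le_add_right (Nat.mul_le_mul hile hcard) 1

theorem exists_bound (f : ℕ → ℕ) (N : ℕ) : ∃ K, ∀ n < N, f n ≤ K :=
  ⟨∑ n ∈ Finset.range N, f n, fun n hn => Finset.single_le_sum (f := f) (fun _ _ => Nat.zero_le _) (Finset.mem_range.2 hn)⟩

theorem main_thm :
    ∃ C : ℕ, ∀ (n : ℕ) (E : Type) [Group E], commutator E = ⊤ →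
      ∀ φ : E →* alternatingGroup (Fin n), Function.Surjective φ →
        φ.ker ≤ Subgroup.center E →
        HasBoundedPresentation E C C (C * (1 + Real.logb 2 n)) := by
  obtain ⟨C₀, hC₀⟩ := alt_pres
  obtain ⟨K, hK⟩ := exists_bound (fun n => Nat.card (alternatingGroup (Fin n)) ^
    (Nat.card (alternatingGroup (Fin n)) * (Nat.card (alternatingGroup (Fin n)) * Nat.card (alternatingGroup (Fin n))) + 1)) 14
  obtain ⟨N, hN⟩ : ∃ N, N = 6 ^ C₀ := ⟨_, rfl⟩
  obtain ⟨D, hD⟩ : ∃ D, D = N + C₀ + C₀ * N * 4 + N * N * 3 := ⟨_, rfl⟩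
  refine ⟨C₀ + D + (K + K * K * 3), fun n E _ hE φ hs hc => ?_⟩
  have hlog : 0 ≤ Real.logb 2 n := by
    rcases Nat.eq_zero_or_pos n with h | h
    · simp [h]
    · exact Real.logb_nonneg (by norm_num) (by exact_mod_cast h)
  rcases lt_or_ge n 14 with hn | hn
  · obtain ⟨hf, hb⟩ := schur_bound hE φ hs hc
    refine (table_pres E K (hb.trans (hK n hn))).mono (by omega) (by omega) ?_
    generalize K + K * K * 3 = x
    push_cast
    have h1 : (0 : ℝ) ≤ C₀ := Nat.cast_nonneg _
    have h2 : (0 : ℝ) ≤ D := Nat.cast_nonneg _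
    have h3 : (0 : ℝ) ≤ x := Nat.cast_nonneg _
    nlinarith [mul_nonneg h1 hlog, mul_nonneg h2 hlog, mul_nonneg h3 hlog]
  · have hcard : Fintype.card (Fin n) = Fintype.card (Option (Option (Fin (n - 2)))) := by
      simp only [Fintype.card_option, Fintype.card_fin]; omega
    let e := Equiv.altCongrHom (Fintype.equivOfCardEq hcard)
    have hker : (e.toMonoidHom.comp φ).ker = φ.ker := by
      ext x; simp [MonoidHom.mem_ker]
    have hexp := ker_exp (Ω := Fin (n - 2)) (by rw [Fintype.card_fin]; omega) hE (e.toMonoidHom.comp φ)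
      (e.surjective.comp hs) (by rw [hker]; exact hc)
    rw [hker] at hexp
    obtain ⟨hf, hb⟩ := card_ker_le hE φ hs hc (by norm_num) hexp (hC₀ n hn)
    rw [← hN] at hb
    refine (ext_pres φ hs hc N hb (hC₀ n hn)).mono (by omega) (by omega) ?_
    rw [← hD]
    generalize K + K * K * 3 = x
    push_cast
    have h1 : (0 : ℝ) ≤ C₀ := Nat.cast_nonneg _
    have h2 : (0 : ℝ) ≤ D := Nat.cast_nonneg _
    have h3 : (0 : ℝ) ≤ x := Nat.cast_nonneg _
    nlinarith [mul_nonneg h1 hlog, mul_nonneg h2 hlog, mul_nonneg h3 hlog]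

end Development

/-- There is a constant `C` such that every perfect central extension `E` of an
alternating group `A_n` has a presentation with at most `C` generators and at most `C`
relators, of length at most `C·(1 + log₂ n)`. -/
theorem perfect_central_extension_of_alternating_short_bounded_presentation :
    ∃ C : ℕ, ∀ (n : ℕ) (E : Type) [Group E], commutator E = ⊤ →
      ∀ φ : E →* alternatingGroup (Fin n), Function.Surjective φ →
        φ.ker ≤ Subgroup.center E →
        HasBoundedPresentation E C C (C * (1 + Real.logb 2 n)) := by
  exact main_thm
end

section
/- Let G be a group and let u, a, b ∈ G satisfy: (1) ab = ba; (2) u commutes with u^a and u commutes with u^b; (3) u lies in the subgroup generated by {u^a, u^b}, u^a lies in the subgroup generated by {u, u^b}, and u^b lies in the subgroup generated by {u, u^a}. Then the subgroup of G generated by the set {u^g : g ∈ ⟨a, b⟩} of all conjugates of u by elements of the subgroup generated by a and b is commutative. -/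
theorem bcrw_aux_closure {G : Type} [Group G] (v g x y z : G)
    (hx : x ∈ Subgroup.closure ({y, z} : Set G))
    (hy : Commute v (g⁻¹ * y * g)) (hz : Commute v (g⁻¹ * z * g)) :
    Commute v (g⁻¹ * x * g) := by
  induction hx using Subgroup.closure_induction with
  | mem t ht =>
    rcases ht with rfl | ht
    · exact hy
    · rw [Set.mem_singleton_iff] at ht
      rw [ht]; exact hz
  | one => simp
  | mul p q _ _ hp hq =>
    have : g⁻¹ * (p * q) * g = (g⁻¹ * p * g) * (g⁻¹ * q * g) := by group
    rw [this]; exact hp.mul_right hq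
  | inv p _ hp =>
    have : g⁻¹ * p⁻¹ * g = (g⁻¹ * p * g)⁻¹ := by group
    rw [this]; exact hp.inv_right

/-- The combinatorial core: a symmetric subset of the triangular lattice containing the unit
hexagon and closed under completing triangles is everything. -/
theorem bcrw_aux_lattice (C : ℤ → ℤ → Prop)
    (hneg : ∀ i j, C i j → C (-i) (-j))
    (h00 : C 0 0) (h10 : C 1 0) (h01 : C 0 1) (h11 : C (-1) 1)
    (r1 : ∀ i j, C (i + 1) j → C i (j + 1) → C i j)
    (r2 : ∀ i j, C (i - 1) j → C (i - 1) (j + 1) → C i j)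
    (r3 : ∀ i j, C i (j - 1) → C (i + 1) (j - 1) → C i j) :
    ∀ i j, C i j := by
  have s1 : ∀ i j, C (i - 1) j → C i (j - 1) → C i j := by
    intro i j h h'
    have := hneg _ _ (r1 (-i) (-j) (by convert hneg _ _ h using 1; ring)
      (by convert hneg _ _ h' using 1; ring))
    simpa using this
  have s2 : ∀ i j, C (i + 1) j → C (i + 1) (j - 1) → C i j := by
    intro i j h h'
    have := hneg _ _ (r2 (-i) (-j) (by convert hneg _ _ h using 1; ring)
      (by convert hneg _ _ h' using 1 <;> ring))
    simpa using this
  have s3 : ∀ i j, C i (j + 1) → C (i - 1) (j + 1) → C i j := by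
    intro i j h h'
    have := hneg _ _ (r3 (-i) (-j) (by convert hneg _ _ h using 1; ring)
      (by convert hneg _ _ h' using 1 <;> ring))
    simpa using this
  have key : ∀ n : ℕ, ∀ i j : ℤ, |i| ≤ n + 1 → |j| ≤ n + 1 → |i + j| ≤ n + 1 → C i j := by
    intro n
    induction n with
    | zero =>
      intro i j hi hj hij
      rw [abs_le] at hi hj hij
      have h10' := hneg _ _ h10
      have h01' := hneg _ _ h01
      have h11' := hneg _ _ h11
      norm_num at h10' h01' h11'
      obtain ⟨hi1, hi2⟩ := hi
      obtain ⟨hj1, hj2⟩ := hj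
      norm_num at hi1 hi2 hj1 hj2 hij
      interval_cases i <;> interval_cases j <;> first | assumption | (exfalso; omega)
    | succ n ih =>
      simp only [abs_le] at ih ⊢
      push_cast
      have nc : ∀ i j : ℤ, i ≠ 0 → j ≠ 0 → i + j ≠ 0 → -((n : ℤ) + 1 + 1) ≤ i ∧ i ≤ n + 1 + 1 →
          -((n : ℤ) + 1 + 1) ≤ j ∧ j ≤ n + 1 + 1 →
          -((n : ℤ) + 1 + 1) ≤ i + j ∧ i + j ≤ n + 1 + 1 → C i j := by
        intro i j hi0 hj0 hij0 hi hj hij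
        rcases lt_or_gt_of_ne hi0 with h | h <;> rcases lt_or_gt_of_ne hj0 with h' | h' <;>
          rcases lt_or_gt_of_ne hij0 with h'' | h''
        · apply r1 <;> apply ih <;> omega
        · omega
        · apply s2 <;> apply ih <;> omega
        · apply r3 <;> apply ih <;> omega
        · apply s3 <;> apply ih <;> omega
        · apply r2 <;> apply ih <;> omega
        · omega
        · apply s1 <;> apply ih <;> omega
      intro i j hi hj hij
      by_cases hs : (-((n : ℤ) + 1) ≤ i ∧ i ≤ n + 1) ∧ (-((n : ℤ) + 1) ≤ j ∧ j ≤ n + 1) ∧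
          (-((n : ℤ) + 1) ≤ i + j ∧ i + j ≤ n + 1)
      · exact ih i j hs.1 hs.2.1 hs.2.2
      by_cases hi0 : i = 0
      · rcases lt_or_ge 0 j with h | h
        · apply r3
          · apply ih <;> omega
          · apply nc <;> omega
        · apply s3
          · apply ih <;> omega
          · apply nc <;> omega
      by_cases hj0 : j = 0
      · rcases lt_or_ge 0 i with h | h
        · apply r2
          · apply ih <;> omega
          · apply nc <;> omega
        · apply s2
          · apply ih <;> omega
          · apply nc <;> omega
      by_cases hij0 : i + j = 0
      · rcases lt_or_ge 0 i with h | h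
        · apply r2
          · apply nc <;> omega
          · apply ih <;> omega
        · apply s2
          · apply nc <;> omega
          · apply ih <;> omega
      exact nc i j hi0 hj0 hij0 hi hj hij
  intro i j
  apply key (i.natAbs + j.natAbs) <;> rw [abs_le] <;> omega


/-- **The BCRW trick.** If `a` and `b` commute, `u` commutes with `u^a` and with `u^b`,
and each of `u, u^a, u^b` lies in the subgroup generated by the other two, then the
subgroup generated by all conjugates of `u` by elements of `⟨a, b⟩` is abelian. -/
theorem bcrw_trick {G : Type} [Group G] (u a b : G)
    (hab : a * b = b * a)
    (hua : Commute u (a⁻¹ * u * a))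
    (hub : Commute u (b⁻¹ * u * b))
    (h1 : u ∈ Subgroup.closure ({a⁻¹ * u * a, b⁻¹ * u * b} : Set G))
    (h2 : a⁻¹ * u * a ∈ Subgroup.closure ({u, b⁻¹ * u * b} : Set G))
    (h3 : b⁻¹ * u * b ∈ Subgroup.closure ({u, a⁻¹ * u * a} : Set G)) :
    ∀ x ∈ Subgroup.closure
        {z : G | ∃ g ∈ Subgroup.closure ({a, b} : Set G), z = g⁻¹ * u * g},
      ∀ y ∈ Subgroup.closure
        {z : G | ∃ g ∈ Subgroup.closure ({a, b} : Set G), z = g⁻¹ * u * g},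
        Commute x y := by


  have hc : Commute a b := hab
  -- `g i j = a^i b^j` and its multiplication rule
  obtain ⟨g, hg⟩ : ∃ g : ℤ → ℤ → G, ∀ i j, g i j = a ^ i * b ^ j := ⟨_, fun _ _ => rfl⟩
  have gmul : ∀ i j k l, g i j * g k l = g (i + k) (j + l) := by
    intro i j k l
    simp only [hg, zpow_add]
    have : b ^ j * a ^ k = a ^ k * b ^ j := ((hc.zpow_zpow k j).eq).symm
    calc a ^ i * b ^ j * (a ^ k * b ^ l) = a ^ i * (b ^ j * a ^ k) * b ^ l := by group
      _ = _ := by rw [this]; group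
  have g00 : g 0 0 = 1 := by simp [hg]
  have ginv : ∀ i j, (g i j)⁻¹ = g (-i) (-j) := by
    intro i j
    rw [inv_eq_iff_mul_eq_one, gmul]; simp [g00]
  have ga : g 1 0 = a := by simp [hg]
  have gb : g 0 1 = b := by simp [hg]
  obtain ⟨w, hw⟩ : ∃ w : ℤ → ℤ → G, ∀ i j, w i j = (g i j)⁻¹ * u * g i j :=
    ⟨_, fun _ _ => rfl⟩
  have w00 : w 0 0 = u := by simp [hw, g00]
  have wa : w 1 0 = a⁻¹ * u * a := by rw [hw, ga]
  have wb : w 0 1 = b⁻¹ * u * b := by rw [hw, gb]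
  have wsh : ∀ i j k l, (g k l)⁻¹ * w i j * g k l = w (i + k) (j + l) := by
    intro i j k l
    rw [hw, hw, ← gmul]; group
  have csh : ∀ i j i' j' k l, Commute (w i j) (w i' j') →
      Commute (w (i + k) (j + l)) (w (i' + k) (j' + l)) := by
    intro i j i' j' k l h
    rw [← wsh, ← wsh]
    have := h.map (MulAut.conj (g k l)⁻¹)
    simpa [MulAut.conj_apply] using this
  rw [← wa, ← wb, ← w00] at h1
  rw [← wa, ← wb, ← w00] at h2
  rw [← wa, ← wb, ← w00] at h3
  rw [← wa, ← w00] at hua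
  rw [← wb, ← w00] at hub
  have huab : Commute (w 1 0) (w 0 1) := by
    have := bcrw_aux_closure (w 0 1) 1 (w 1 0) (w 0 0) (w 0 1) h2
      (by simpa using hub.symm) (by simp)
    simpa using this.symm
  have all : ∀ i j, Commute (w 0 0) (w i j) := by
    apply bcrw_aux_lattice
    · intro i j h
      have := csh _ _ _ _ (-i) (-j) h
      simpa using this.symm
    · exact Commute.refl _
    · exact hua
    · exact hub
    · simpa using csh _ _ _ _ (-1) 0 huab
    · intro i j h h'
      have := bcrw_aux_closure (w 0 0) (g i j) _ _ _ h1
        (by rw [wsh]; convert h using 2 <;> ring) (by rw [wsh]; convert h' using 2 <;> ring)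
      rw [wsh] at this
      simpa using this
    · intro i j h h'
      have := bcrw_aux_closure (w 0 0) (g (i - 1) j) _ _ _ h2
        (by rw [wsh]; convert h using 2 <;> ring) (by rw [wsh]; convert h' using 2 <;> ring)
      rw [wsh] at this
      simpa using this
    · intro i j h h'
      have := bcrw_aux_closure (w 0 0) (g i (j - 1)) _ _ _ h3
        (by rw [wsh]; convert h using 2 <;> ring) (by rw [wsh]; convert h' using 2 <;> ring)
      rw [wsh] at this
      simpa using this
  have all2 : ∀ i j k l, Commute (w i j) (w k l) := by
    intro i j k l
    have := csh _ _ _ _ i j (all (k - i) (l - j))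
    simpa using this
  have hgen : ∀ z ∈ {z : G | ∃ g ∈ Subgroup.closure ({a, b} : Set G), z = g⁻¹ * u * g},
      ∃ i j, z = w i j := by
    rintro z ⟨h, hh, rfl⟩
    have : ∃ i j, h = g i j := by
      clear * - hh gmul ginv g00 ga gb
      induction hh using Subgroup.closure_induction with
      | mem t ht =>
        rcases ht with rfl | ht
        · exact ⟨1, 0, ga.symm⟩
        · exact ⟨0, 1, by rw [gb]; exact ht⟩
      | one => exact ⟨0, 0, g00.symm⟩
      | mul p q _ _ hp hq =>
        obtain ⟨i, j, rfl⟩ := hp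
        obtain ⟨k, l, rfl⟩ := hq
        exact ⟨_, _, gmul _ _ _ _⟩
      | inv p _ hp =>
        obtain ⟨i, j, rfl⟩ := hp
        exact ⟨_, _, ginv _ _⟩
    obtain ⟨i, j, rfl⟩ := this
    exact ⟨i, j, (hw i j).symm⟩
  intro x hx y hy
  induction hx, hy using Subgroup.closure_induction₂ with
  | mem p q hp hq =>
    obtain ⟨i, j, rfl⟩ := hgen _ hp
    obtain ⟨k, l, rfl⟩ := hgen _ hq
    exact all2 _ _ _ _
  | one_left => exact Commute.one_left _
  | one_right => exact Commute.one_right _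
  | mul_left _ _ _ _ _ _ h h' => exact h.mul_left h'
  | mul_right _ _ _ _ _ _ h h' => exact h.mul_right h'
  | inv_left _ _ _ _ h => exact h.inv_left
  | inv_right _ _ _ _ h => exact h.inv_right
end
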